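/- For any closed interval [u, v] ⊂ (b_γ, ∞), the convergences (1/n)·E_{n,12}·(Λ_n − z·I_{p−k})^{-1}·E_{n,12}ᵀ → γ^{-1}·m(z)·I_k, (1/n)·E_{n,21}ᵀ·(Λ_n − z·I_{p−k})^{-1}·E_{n,21} → γ^{-1}·m(z)·I_k, and (1/n)·E_{n,12}·(Λ_n − z·I_{p−k})^{-1}·Λ_n^{1/2}·E_{n,21} → 0 hold almost surely uniformly in z ∈ [u, v], and the same is true for the z-derivatives of these matrix-valued functions (which converge uniformly to the derivatives of their respective limits). -/

import Mathlib

/-!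
Each entry of the three matrices is an empirical transform `(1/n) ∑ w_α / (λ_α - z)` whose weights
`w_α` are products of two entries of the noise blocks (times `√λ_α` for the third matrix). The
noise entries form one standard Gaussian vector independent of `W`, hence of the `λ_α`.

*Confinement of the spectrum.* Almost surely all `λ_α` are eventually below any fixed level
`u₀ > b_γ` (`ae_opnorm_le`). This comes from Slepian's inequality (`slepian_prob`), proved by
Gaussian interpolation and integration by parts for the functional `exp (-w ∑ exp (β y_t))`. It
compares the bilinear form `aᵀ W b`, on finite sets of pairs of unit vectors, with a sum of two independent
Gaussian linear forms, whose size is governed by chi-square concentration.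

*Trace of the resolvent.* With `R = (z - WᵀW/n)⁻¹`, removing one row of `W` (Sherman–Morrison) and
concentration of Gaussian quadratic forms show that `s = (1/n) tr R` almost surely asymptotically
solves `z s² - (z + c - 1) s + c = 0`, where `c = γ⁻¹` (`ae_mp_equation`). Monotonicity in `z`
excludes the larger root, because that root increases with `z` (`root_pick`, `ae_trace_tendsto`).
The smaller root equals `-γ⁻¹ m(z)`, by explicit integration of the Marchenko–Pastur density
(`mpStieltjes_eq`).

*Weighted sums.* Given the `λ_α`, the sums `(1/n) ∑ g(λ_α) (x_α² - 1)` concentrate at zero with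
exponential rate, and products `x_α y_α` of disjoint blocks reduce to squares through
`x y = ((x + y)/√2)² - (x² + y²)/2` (`ae_weighted_block`, `ae_weighted_pair`). Here the sorted
eigenvalues have to be measurable functions of `W`, see `measurable_ithEig`. This gives almost sure
convergence simultaneously at all rational `z > u₀`.

*Uniformity.* To the right of `u₀` the transforms and their derivatives are equi-Lipschitz, because
the total weight is bounded; convergence on a dense set therefore is uniform on compact intervals,
and so is the convergence of the derivatives (`empTransform_uniform`).
-/

open MeasureTheory ProbabilityTheory Filter Matrix Topology

noncomputable section

instance matrixMeasurableSpace {m n : Type*} : MeasurableSpace (Matrix m n ℝ) :=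
  MeasurableSpace.pi

/-- Convergence in distribution (weak convergence of laws) of a sequence of random elements. -/
def TendstoInDist {Ω E : Type*} [MeasurableSpace Ω] [MeasurableSpace E] [TopologicalSpace E]
    (P : Measure Ω) (X : ℕ → Ω → E) (ν : Measure E) : Prop :=
  ∀ f : BoundedContinuousFunction E ℝ,
    Tendsto (fun n => ∫ ω, f (X n ω) ∂P) atTop (𝓝 (∫ x, f x ∂ν))

/-- Convergence to zero in probability. -/
def TendstoInProbZero {Ω : Type*} [MeasurableSpace Ω] (P : Measure Ω) (X : ℕ → Ω → ℝ) : Prop :=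
  ∀ ε : ℝ, 0 < ε → Tendsto (fun n => P {ω | ε ≤ |X n ω|}) atTop (𝓝 0)

/-- `ν` is a centered multivariate Gaussian measure with covariance function `C`
(characterized through one-dimensional projections). -/
def IsCenteredGaussianCov {ι : Type*} [Fintype ι] (ν : Measure (ι → ℝ)) (C : ι → ι → ℝ) : Prop :=
  ∀ a : ι → ℝ,
    Measure.map (fun x => ∑ i, a i * x i) ν
      = gaussianReal 0 (Real.toNNReal (∑ i, ∑ j, a i * C i j * a j))

/-- The coordinates of `X` are iid `N(0, v)` random variables. -/
def IIDGaussian {Ω ι : Type*} [MeasurableSpace Ω] [Fintype ι] (P : Measure Ω)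
    (X : Ω → ι → ℝ) (v : NNReal) : Prop :=
  Measure.map X P = Measure.pi fun _ : ι => gaussianReal 0 v

/-- Entries of a matrix, as a function on pairs of indices. -/
def matEntries {m n : Type*} (A : Matrix m n ℝ) : m × n → ℝ := fun q => A q.1 q.2

/-- The eigenvalues of a (Hermitian) real matrix, sorted in decreasing order. -/
def eigsDesc {p : ℕ} (A : Matrix (Fin p) (Fin p) ℝ) : List ℝ :=
  if h : A.IsHermitian then (List.ofFn h.eigenvalues).insertionSort (· ≥ ·) else []

/-- The `i`-th largest eigenvalue of a (Hermitian) real matrix (`i` is 0-based). -/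
def ithEigDesc {p : ℕ} (A : Matrix (Fin p) (Fin p) ℝ) (i : ℕ) : ℝ :=
  (eigsDesc A).getD i 0

/-- Lower edge `a_γ = (1 - γ^{-1/2})²` of the Marchenko–Pastur law. -/
def aGamma (γ : ℝ) : ℝ := (1 - 1 / Real.sqrt γ) ^ 2

/-- Upper edge `b_γ = (1 + γ^{-1/2})²` of the Marchenko–Pastur law. -/
def bGamma (γ : ℝ) : ℝ := (1 + 1 / Real.sqrt γ) ^ 2

/-- Density of the Marchenko–Pastur law with aspect ratio `γ`. -/
def mpDensity (γ t : ℝ) : ℝ :=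
  if t ∈ Set.Icc (aGamma γ) (bGamma γ) then
    γ * Real.sqrt ((bGamma γ - t) * (t - aGamma γ)) / (2 * Real.pi * t)
  else 0

/-- The Marchenko–Pastur law with aspect ratio `γ`. -/
def mpMeasure (γ : ℝ) : Measure ℝ :=
  volume.withDensity fun t => ENNReal.ofReal (mpDensity γ t)

/-- Stieltjes transform `m(z) = ∫ (t - z)⁻¹ dFMP_γ(t)` of the Marchenko–Pastur law. -/
def mpStieltjes (γ z : ℝ) : ℝ := ∫ t, (t - z)⁻¹ ∂(mpMeasure γ)

/-- The spiked low-rank-plus-noise model `X_n = √n U_n D_n V_nᵀ + E_n`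
(Assumptions A1–A3, with `s = σ²` the noise variance and without the CLT
assumption on the factor strengths, which is stated separately when needed). -/
structure SpikedModel (k : ℕ) (γ s : ℝ) (p : ℕ → ℕ) (Ω : Type*) [MeasurableSpace Ω]
    (P : Measure Ω) (μ : Fin k → ℝ) where
  U : ∀ n : ℕ, Ω → Matrix (Fin n) (Fin k) ℝ
  V : ∀ n : ℕ, Ω → Matrix (Fin (p n)) (Fin k) ℝ
  d : ∀ n : ℕ, Ω → Fin k → ℝ
  E : ∀ n : ℕ, Ω → Matrix (Fin n) (Fin (p n)) ℝ
  /- A1 -/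
  orthU : ∀ n ω, (U n ω)ᵀ * U n ω = 1
  orthV : ∀ n ω, (V n ω)ᵀ * V n ω = 1
  aspect : Tendsto (fun n : ℕ => Real.sqrt n * ((n : ℝ) / (p n) - γ)) atTop (𝓝 0)
  /- A2 (except for the CLT on the factor strengths) -/
  dpos : ∀ n ω i, 0 < d n ω i
  dstrictanti : ∀ n ω, StrictAnti (d n ω)
  dconv : ∀ᵐ ω ∂P, ∀ i, Tendsto (fun n => d n ω i) atTop (𝓝 (Real.sqrt (μ i)))
  /- A3 -/
  Egauss : ∀ n, IIDGaussian P (fun ω => matEntries (E n ω)) (Real.toNNReal s)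
  Eindep : ∀ n, IndepFun (E n) (fun ω => (U n ω, d n ω, V n ω)) P

/-- The observed data matrix `X_n = √n U_n D_n V_nᵀ + E_n`. -/
def SpikedModel.X {k : ℕ} {γ s : ℝ} {p : ℕ → ℕ} {Ω : Type*} [MeasurableSpace Ω]
    {P : Measure Ω} {μ : Fin k → ℝ} (M : SpikedModel k γ s p Ω P μ) (n : ℕ) (ω : Ω) :
    Matrix (Fin n) (Fin (p n)) ℝ :=
  Real.sqrt n • (M.U n ω * Matrix.diagonal (M.d n ω) * (M.V n ω)ᵀ) + M.E n ω

/-- `√n Uh (diagonal √μh) Vhᵀ` is the SVD of `X` truncated to the `k` largest terms: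
the `μh i` are the `k` largest eigenvalues of `(1/n) Xᵀ X` in decreasing order, the columns
of `Vh` are corresponding orthonormal eigenvectors (right singular vectors), and the columns
of `Uh` are corresponding orthonormal left singular vectors. -/
def IsTruncatedSVD {n q k : ℕ} (X : Matrix (Fin n) (Fin q) ℝ)
    (Uh : Matrix (Fin n) (Fin k) ℝ) (μh : Fin k → ℝ) (Vh : Matrix (Fin q) (Fin k) ℝ) : Prop :=
  Uhᵀ * Uh = 1 ∧ Vhᵀ * Vh = 1 ∧ Antitone μh ∧ (∀ i, 0 ≤ μh i) ∧
  (∀ i : Fin k, μh i = ithEigDesc ((1 / (n : ℝ)) • (Xᵀ * X)) i) ∧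
  (∀ i : Fin k, (Xᵀ * X) *ᵥ (fun j => Vh j i) = ((n : ℝ) * μh i) • fun j => Vh j i) ∧
  (∀ i : Fin k, X *ᵥ (fun j => Vh j i) = (Real.sqrt n * Real.sqrt (μh i)) • fun j => Uh j i)

/-- Almost sure limit `μ̄` of the top sample eigenvalues (`s = σ²`). -/
def muBar (γ s μi : ℝ) : ℝ :=
  if s / Real.sqrt γ < μi then (μi + s) * (1 + s / (γ * μi))
  else s * (1 + 1 / Real.sqrt γ) ^ 2

/-- Limiting covariance matrix `Σ̄` of the fluctuations of the top sample eigenvalues. -/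
def sigmaBar {k : ℕ} (γ s : ℝ) (μ : Fin k → ℝ) (Cmat : Matrix (Fin k) (Fin k) ℝ) :
    Fin k → Fin k → ℝ := fun i j =>
  if s / Real.sqrt γ < μ i ∧ s / Real.sqrt γ < μ j then
    Cmat i j * (1 - s ^ 2 / (γ * (μ i) ^ 2)) * (1 - s ^ 2 / (γ * (μ j) ^ 2))
      + (if i = j then 2 * s * (2 * μ i + (1 + γ⁻¹) * s) * (1 - s ^ 2 / (γ * (μ i) ^ 2)) else 0)
  else 0

/-- The independent noise blocks `E_{n,12}`, `E_{n,21}` and the scaled Wishart eigenvalues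
`Λ_n` appearing after the change of basis. -/
structure NoiseBlocks (k : ℕ) (γ : ℝ) (p : ℕ → ℕ) (Ω : Type*) [MeasurableSpace Ω]
    (P : Measure Ω) where
  E12 : ∀ n : ℕ, Ω → Matrix (Fin k) (Fin (p n - k)) ℝ
  E21 : ∀ n : ℕ, Ω → Matrix (Fin (p n - k)) (Fin k) ℝ
  W : ∀ n : ℕ, Ω → Matrix (Fin (n - k)) (Fin (p n - k)) ℝ
  lam : ∀ n : ℕ, Ω → Fin (p n - k) → ℝ
  aspect : Tendsto (fun n : ℕ => (n : ℝ) / (p n)) atTop (𝓝 γ)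
  pTop : Tendsto p atTop atTop
  E12gauss : ∀ n, IIDGaussian P (fun ω => matEntries (E12 n ω)) 1
  E21gauss : ∀ n, IIDGaussian P (fun ω => matEntries (E21 n ω)) 1
  Wgauss : ∀ n, IIDGaussian P (fun ω => matEntries (W n ω)) 1
  /-- `n λ_{n,α}` are the decreasingly ordered eigenvalues of the white Wishart
  matrix `Wᵀ W`. -/
  lamEig : ∀ n ω, ∀ α : Fin (p n - k), (n : ℝ) * lam n ω α = ithEigDesc ((W n ω)ᵀ * W n ω) α
  indep1 : ∀ n, IndepFun (E12 n) (fun ω => (E21 n ω, W n ω)) P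
  indep2 : ∀ n, IndepFun (E21 n) (W n) P

namespace NoiseBlocks

variable {k : ℕ} {γ : ℝ} {p : ℕ → ℕ} {Ω : Type*} [MeasurableSpace Ω] {P : Measure Ω}

/-- `(1/n) E_{n,12} (Λ_n − z I)⁻¹ E_{n,12}ᵀ`. -/
def q1 (B : NoiseBlocks k γ p Ω P) (n : ℕ) (ω : Ω) (z : ℝ) : Matrix (Fin k) (Fin k) ℝ :=
  (1 / (n : ℝ)) • (B.E12 n ω * (Matrix.diagonal (B.lam n ω) - z • 1)⁻¹ * (B.E12 n ω)ᵀ)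

/-- `(1/n) E_{n,21}ᵀ (Λ_n − z I)⁻¹ E_{n,21}`. -/
def q2 (B : NoiseBlocks k γ p Ω P) (n : ℕ) (ω : Ω) (z : ℝ) : Matrix (Fin k) (Fin k) ℝ :=
  (1 / (n : ℝ)) • ((B.E21 n ω)ᵀ * (Matrix.diagonal (B.lam n ω) - z • 1)⁻¹ * B.E21 n ω)

/-- `(1/n) E_{n,12} (Λ_n − z I)⁻¹ Λ_n^{1/2} E_{n,21}`. -/
def q3 (B : NoiseBlocks k γ p Ω P) (n : ℕ) (ω : Ω) (z : ℝ) : Matrix (Fin k) (Fin k) ℝ :=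
  (1 / (n : ℝ)) • (B.E12 n ω * (Matrix.diagonal (B.lam n ω) - z • 1)⁻¹ *
    Matrix.diagonal (fun α => Real.sqrt (B.lam n ω α)) * B.E21 n ω)

/-- `F_n(z)`. -/
def Fn (B : NoiseBlocks k γ p Ω P) (n : ℕ) (ω : Ω) (z : ℝ) : Matrix (Fin k) (Fin k) ℝ :=
  Real.sqrt n • (B.q1 n ω z - (γ⁻¹ * mpStieltjes γ z) • 1)

/-- `G_n(z)`. -/
def Gn (B : NoiseBlocks k γ p Ω P) (n : ℕ) (ω : Ω) (z : ℝ) : Matrix (Fin k) (Fin k) ℝ :=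
  Real.sqrt n • B.q3 n ω z

/-- `H_n(z)`. -/
def Hn (B : NoiseBlocks k γ p Ω P) (n : ℕ) (ω : Ω) (z : ℝ) : Matrix (Fin k) (Fin k) ℝ :=
  Real.sqrt n • (B.q2 n ω z - (γ⁻¹ * mpStieltjes γ z) • 1)

end NoiseBlocks

/-- The difference quotient `(m(z₁) − m(z₂))/(z₁ − z₂)`, interpreted as `m'(z₁)` when
`z₁ = z₂`: covariance kernel of `F` and `H`. -/
def qFH (γ z₁ z₂ : ℝ) : ℝ :=
  if z₁ = z₂ then deriv (mpStieltjes γ) z₁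
  else (mpStieltjes γ z₁ - mpStieltjes γ z₂) / (z₁ - z₂)

/-- The difference quotient `(z₁ m(z₁) − z₂ m(z₂))/(z₁ − z₂)`, interpreted as
`m(z₁) + z₁ m'(z₁)` when `z₁ = z₂`: covariance kernel of `G`. -/
def qG (γ z₁ z₂ : ℝ) : ℝ :=
  if z₁ = z₂ then mpStieltjes γ z₁ + z₁ * deriv (mpStieltjes γ) z₁
  else (z₁ * mpStieltjes γ z₁ - z₂ * mpStieltjes γ z₂) / (z₁ - z₂)

/-- Covariance function of the limiting Gaussian family
`(F(z_r), G(z_r), H(z_r))_{r}` (index component `Fin 3`: `0 ↦ F`, `1 ↦ G`, `2 ↦ H`);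
it encodes that `F`, `G`, `H` are mutually independent, that `F` and `H` are symmetric,
and that all covariances vanish except the ones prescribed. -/
def covFGH (γ : ℝ) {l k : ℕ} (zs : Fin l → ℝ) :
    Fin l × Fin 3 × Fin k × Fin k → Fin l × Fin 3 × Fin k × Fin k → ℝ := fun q q' =>
  if q.2.1 = q'.2.1 then
    if q.2.1 = 1 then
      γ⁻¹ * qG γ (zs q.1) (zs q'.1) *
        (if q.2.2.1 = q'.2.2.1 ∧ q.2.2.2 = q'.2.2.2 then 1 else 0)
    else
      γ⁻¹ * qFH γ (zs q.1) (zs q'.1) *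
        ((if q.2.2.1 = q'.2.2.1 ∧ q.2.2.2 = q'.2.2.2 then 1 else 0)
          + (if q.2.2.1 = q'.2.2.2 ∧ q.2.2.2 = q'.2.2.1 then 1 else 0))
  else 0

/-- The model after the orthogonal change of basis: the data matrix `X̃_n` has block form
`[[√n D_n + E₁₁, E₁₂], [E₂₁, √n Λ_n^{1/2}], [E₃₁, 0]]`, with all blocks mutually independent,
the `E`-blocks having iid `N(0,1)` entries and `n λ_{n,α}` the decreasingly ordered
eigenvalues of a white Wishart matrix of dimension `p − k` with `n − k` degrees of freedom.
(Monotonicity assumptions on `d` and `μ` are stated separately when needed.) -/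
structure BlockModel (k : ℕ) (γ : ℝ) (p : ℕ → ℕ) (Ω : Type*) [MeasurableSpace Ω]
    (P : Measure Ω) (μ : Fin k → ℝ) where
  d : ∀ n : ℕ, Ω → Fin k → ℝ
  E11 : ∀ n : ℕ, Ω → Matrix (Fin k) (Fin k) ℝ
  E12 : ∀ n : ℕ, Ω → Matrix (Fin k) (Fin (p n - k)) ℝ
  E21 : ∀ n : ℕ, Ω → Matrix (Fin (p n - k)) (Fin k) ℝ
  E31 : ∀ n : ℕ, Ω → Matrix (Fin (n - p n)) (Fin k) ℝ
  W : ∀ n : ℕ, Ω → Matrix (Fin (n - k)) (Fin (p n - k)) ℝ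
  lam : ∀ n : ℕ, Ω → Fin (p n - k) → ℝ
  aspect : Tendsto (fun n : ℕ => Real.sqrt n * ((n : ℝ) / (p n) - γ)) atTop (𝓝 0)
  pTop : Tendsto p atTop atTop
  dpos : ∀ n ω i, 0 < d n ω i
  dconv : ∀ᵐ ω ∂P, ∀ i, Tendsto (fun n => d n ω i) atTop (𝓝 (Real.sqrt (μ i)))
  E11gauss : ∀ n, IIDGaussian P (fun ω => matEntries (E11 n ω)) 1
  E12gauss : ∀ n, IIDGaussian P (fun ω => matEntries (E12 n ω)) 1
  E21gauss : ∀ n, IIDGaussian P (fun ω => matEntries (E21 n ω)) 1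
  E31gauss : ∀ n, IIDGaussian P (fun ω => matEntries (E31 n ω)) 1
  Wgauss : ∀ n, IIDGaussian P (fun ω => matEntries (W n ω)) 1
  lamEig : ∀ n ω, ∀ α : Fin (p n - k), (n : ℝ) * lam n ω α = ithEigDesc ((W n ω)ᵀ * W n ω) α
  indep1 : ∀ n, IndepFun (d n) (fun ω => (E11 n ω, E12 n ω, E21 n ω, E31 n ω, W n ω)) P
  indep2 : ∀ n, IndepFun (E11 n) (fun ω => (E12 n ω, E21 n ω, E31 n ω, W n ω)) P
  indep3 : ∀ n, IndepFun (E12 n) (fun ω => (E21 n ω, E31 n ω, W n ω)) P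
  indep4 : ∀ n, IndepFun (E21 n) (fun ω => (E31 n ω, W n ω)) P
  indep5 : ∀ n, IndepFun (E31 n) (W n) P

namespace BlockModel

variable {k : ℕ} {γ : ℝ} {p : ℕ → ℕ} {Ω : Type*} [MeasurableSpace Ω] {P : Measure Ω}
  {μ : Fin k → ℝ}

/-- Upper-left block `S_{n,11}` of `S_n = (1/n) X̃_nᵀ X̃_n`. -/
def S11 (M : BlockModel k γ p Ω P μ) (n : ℕ) (ω : Ω) : Matrix (Fin k) (Fin k) ℝ :=
  Matrix.diagonal (fun i => (M.d n ω i) ^ 2)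
    + (1 / Real.sqrt n) •
      (Matrix.diagonal (M.d n ω) * M.E11 n ω + (M.E11 n ω)ᵀ * Matrix.diagonal (M.d n ω))
    + (1 / (n : ℝ)) •
      ((M.E11 n ω)ᵀ * M.E11 n ω + (M.E21 n ω)ᵀ * M.E21 n ω + (M.E31 n ω)ᵀ * M.E31 n ω)

/-- Block `S_{n,12}` of `S_n = (1/n) X̃_nᵀ X̃_n`. -/
def S12 (M : BlockModel k γ p Ω P μ) (n : ℕ) (ω : Ω) : Matrix (Fin k) (Fin (p n - k)) ℝ :=
  (1 / Real.sqrt n) • (Matrix.diagonal (M.d n ω) * M.E12 n ω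
      + (M.E21 n ω)ᵀ * Matrix.diagonal (fun α => Real.sqrt (M.lam n ω α)))
    + (1 / (n : ℝ)) • ((M.E11 n ω)ᵀ * M.E12 n ω)

/-- Block `S_{n,21}` of `S_n = (1/n) X̃_nᵀ X̃_n`. -/
def S21 (M : BlockModel k γ p Ω P μ) (n : ℕ) (ω : Ω) : Matrix (Fin (p n - k)) (Fin k) ℝ :=
  (1 / Real.sqrt n) • ((M.E12 n ω)ᵀ * Matrix.diagonal (M.d n ω)
      + Matrix.diagonal (fun α => Real.sqrt (M.lam n ω α)) * M.E21 n ω)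
    + (1 / (n : ℝ)) • ((M.E12 n ω)ᵀ * M.E11 n ω)

/-- Lower-right block `S_{n,22}` of `S_n = (1/n) X̃_nᵀ X̃_n`. -/
def S22 (M : BlockModel k γ p Ω P μ) (n : ℕ) (ω : Ω) :
    Matrix (Fin (p n - k)) (Fin (p n - k)) ℝ :=
  Matrix.diagonal (M.lam n ω) + (1 / (n : ℝ)) • ((M.E12 n ω)ᵀ * M.E12 n ω)

/-- The secular-equation matrix `T_n(z) = S₁₁ − z I − S₁₂ (S₂₂ − z I)⁻¹ S₂₁`. -/
def T (M : BlockModel k γ p Ω P μ) (n : ℕ) (ω : Ω) (z : ℝ) : Matrix (Fin k) (Fin k) ℝ :=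
  M.S11 n ω - z • 1 - M.S12 n ω * (M.S22 n ω - z • 1)⁻¹ * M.S21 n ω

/-- `F_n(z)` in the block model. -/
def Fmat (M : BlockModel k γ p Ω P μ) (n : ℕ) (ω : Ω) (z : ℝ) : Matrix (Fin k) (Fin k) ℝ :=
  Real.sqrt n • ((1 / (n : ℝ)) •
      (M.E12 n ω * (Matrix.diagonal (M.lam n ω) - z • 1)⁻¹ * (M.E12 n ω)ᵀ)
    - (γ⁻¹ * mpStieltjes γ z) • 1)

/-- `G_n(z)` in the block model. -/
def Gmat (M : BlockModel k γ p Ω P μ) (n : ℕ) (ω : Ω) (z : ℝ) : Matrix (Fin k) (Fin k) ℝ :=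
  Real.sqrt n • ((1 / (n : ℝ)) •
    (M.E12 n ω * (Matrix.diagonal (M.lam n ω) - z • 1)⁻¹ *
      Matrix.diagonal (fun α => Real.sqrt (M.lam n ω α)) * M.E21 n ω))

/-- `H_n(z)` in the block model. -/
def Hmat (M : BlockModel k γ p Ω P μ) (n : ℕ) (ω : Ω) (z : ℝ) : Matrix (Fin k) (Fin k) ℝ :=
  Real.sqrt n • ((1 / (n : ℝ)) •
      ((M.E21 n ω)ᵀ * (Matrix.diagonal (M.lam n ω) - z • 1)⁻¹ * M.E21 n ω)
    - (γ⁻¹ * mpStieltjes γ z) • 1)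

/-- `R_n(z) = D_n + n^{-1/2} E₁₁ − n^{-1/2} E₁₂ (S₂₂ − z I)⁻¹ S₂₁`. -/
def Rmat (M : BlockModel k γ p Ω P μ) (n : ℕ) (ω : Ω) (z : ℝ) : Matrix (Fin k) (Fin k) ℝ :=
  Matrix.diagonal (M.d n ω) + (1 / Real.sqrt n) • M.E11 n ω
    - (1 / Real.sqrt n) • (M.E12 n ω * (M.S22 n ω - z • 1)⁻¹ * M.S21 n ω)

/-- Euclidean norm of `x̃ = (x; −(S₂₂ − z I)⁻¹ S₂₁ x)`. -/
def xtNorm (M : BlockModel k γ p Ω P μ) (n : ℕ) (ω : Ω) (z : ℝ) (x : Fin k → ℝ) : ℝ :=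
  Real.sqrt (∑ j, x j ^ 2 +
    ∑ α, ((((M.S22 n ω - z • 1)⁻¹ * M.S21 n ω) *ᵥ x) α) ^ 2)

/-- First `k` components of the left singular vector: `y = R_n(z) x / ‖x̃‖₂`. -/
def yvec (M : BlockModel k γ p Ω P μ) (n : ℕ) (ω : Ω) (z : ℝ) (x : Fin k → ℝ) :
    Fin k → ℝ :=
  (M.xtNorm n ω z x)⁻¹ • (M.Rmat n ω z *ᵥ x)

end BlockModel

/-- The deterministic limit `T₀(z) = (1 + γ⁻¹ m(z))⁻¹ D² + m(z)⁻¹ I` of `T_n(z)`. -/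
def T0lim {k : ℕ} (γ : ℝ) (μ : Fin k → ℝ) (z : ℝ) : Matrix (Fin k) (Fin k) ℝ :=
  (1 + γ⁻¹ * mpStieltjes γ z)⁻¹ • Matrix.diagonal μ + (mpStieltjes γ z)⁻¹ • 1

/-! ### Standard Gaussian vectors and quadratic forms -/

/-- The standard Gaussian measure on `ι → ℝ`. -/
def stdG (ι : Type*) [Fintype ι] : Measure (ι → ℝ) := Measure.pi fun _ => gaussianReal 0 1

instance stdG_prob (ι : Type*) [Fintype ι] : IsProbabilityMeasure (stdG ι) := by
  unfold stdG; infer_instance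

lemma measurable_mulVec_const {ι ι' : Type*} [Fintype ι] [Fintype ι'] (A : Matrix ι' ι ℝ) :
    Measurable (fun x : ι → ℝ => A *ᵥ x) := by
  refine measurable_pi_lambda _ fun i => ?_
  simp only [Matrix.mulVec, dotProduct]
  fun_prop

/-- A matrix with orthonormal rows maps a standard Gaussian vector to a standard Gaussian vector.
This covers rotations, projections onto coordinates, and `(x + y) / √2`. -/
lemma stdG_map_mulVec {ι ι' : Type*} [Fintype ι] [Fintype ι'] [DecidableEq ι']
    (A : Matrix ι' ι ℝ) (hA : A * Aᵀ = 1) :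
    (stdG ι).map (fun x => A *ᵥ x) = stdG ι' := by
  have hm := measurable_mulVec_const A
  have : IsProbabilityMeasure ((stdG ι).map (fun x => A *ᵥ x)) :=
    Measure.isProbabilityMeasure_map hm.aemeasurable
  unfold stdG at *
  refine charFun_eq_pi_iff.1 fun t => ?_
  have h1 : charFun (((Measure.pi fun _ : ι => gaussianReal 0 1).map
      (fun x => A *ᵥ x)).map (WithLp.toLp 2)) t
      = charFun ((Measure.pi fun _ : ι => gaussianReal 0 1).map (WithLp.toLp 2))
        (WithLp.toLp 2 (Aᵀ *ᵥ (WithLp.ofLp t))) := by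
    rw [Measure.map_map (by fun_prop) hm]
    simp only [charFun]
    rw [integral_map (by fun_prop) (by fun_prop), integral_map (by fun_prop) (by fun_prop)]
    congr 1
    ext x
    congr 2
    simp only [EuclideanSpace.inner_eq_star_dotProduct, Function.comp]
    simp only [star_trivial]
    rw [Matrix.dotProduct_mulVec, ← Matrix.mulVec_transpose]
  rw [h1, charFun_pi]
  simp only [charFun_gaussianReal, ← Complex.exp_sum]
  congr 1
  have h2 : ∑ i, (Aᵀ *ᵥ (WithLp.ofLp t)) i ^ 2 = ∑ i, t i ^ 2 := by
    have : (Aᵀ *ᵥ (WithLp.ofLp t)) ⬝ᵥ (Aᵀ *ᵥ (WithLp.ofLp t))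
        = (WithLp.ofLp t) ⬝ᵥ (WithLp.ofLp t) := by
      rw [Matrix.dotProduct_mulVec, ← Matrix.mulVec_transpose, Matrix.transpose_transpose,
        Matrix.mulVec_mulVec, hA, Matrix.one_mulVec]
    simpa [dotProduct, sq] using this
  have h3 : ∑ i, ((Aᵀ *ᵥ (WithLp.ofLp t)) i : ℂ) ^ 2 = ∑ i, (t i : ℂ) ^ 2 := by exact_mod_cast h2
  simp only [Complex.ofReal_zero, mul_zero, zero_mul, NNReal.coe_one, Complex.ofReal_one, one_mul,
    zero_sub]
  rw [Finset.sum_neg_distrib, Finset.sum_neg_distrib, ← Finset.sum_div, ← Finset.sum_div, h3]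

/-- `E exp (t (x² - 1)) ≤ exp (4 t²)` for a standard Gaussian `x` and `|t| ≤ 1/4`. -/
lemma gauss_sq_mgf {t : ℝ} (ht : |t| ≤ 1 / 4) :
    Integrable (fun x => Real.exp (t * (x ^ 2 - 1))) (gaussianReal 0 1) ∧
    ∫ x, Real.exp (t * (x ^ 2 - 1)) ∂(gaussianReal 0 1) ≤ Real.exp (4 * t ^ 2) := by
  obtain ⟨h1, h2⟩ := abs_le.1 ht
  have hb : 0 < 1 / 2 - t := by linarith
  have e1 : ∀ x : ℝ, gaussianPDFReal 0 1 x • Real.exp (t * (x ^ 2 - 1))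
      = ((√(2 * Real.pi))⁻¹ * Real.exp (-t)) * Real.exp (-(1 / 2 - t) * x ^ 2) := by
    intro x
    simp only [gaussianPDFReal, smul_eq_mul, NNReal.coe_one, mul_one, sub_zero]
    rw [mul_assoc, mul_assoc, ← Real.exp_add, ← Real.exp_add]
    congr 2
    ring
  constructor
  · rw [gaussianReal_of_var_ne_zero _ one_ne_zero]
    rw [integrable_withDensity_iff_integrable_smul' (measurable_gaussianPDF 0 1)
      (ae_of_all _ fun x => gaussianPDF_lt_top)]
    simp only [toReal_gaussianPDF]
    simp only [e1]
    exact (integrable_exp_neg_mul_sq hb).const_mul _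
  · rw [integral_gaussianReal_eq_integral_smul one_ne_zero]
    simp only [e1]
    rw [integral_const_mul, integral_gaussian]
    have e2 : (√(2 * Real.pi))⁻¹ * Real.exp (-t) * √(Real.pi / (1 / 2 - t))
        = Real.exp (-t) * √((1 - 2 * t)⁻¹) := by
      have : Real.pi / (1 / 2 - t) = (2 * Real.pi) * (1 - 2 * t)⁻¹ := by
        have : 1 - 2 * t ≠ 0 := by linarith
        field_simp
      rw [this, Real.sqrt_mul (by positivity : (0 : ℝ) ≤ 2 * Real.pi)]
      have h5 : √(2 * Real.pi) ≠ 0 := by positivity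
      generalize √(2 * Real.pi) = w at h5
      generalize √((1 - 2 * t)⁻¹) = w'
      rw [mul_comm w⁻¹, mul_assoc, inv_mul_cancel_left₀ h5]
    rw [e2]
    have e3 : (1 - 2 * t)⁻¹ ≤ Real.exp (2 * t + 8 * t ^ 2) := by
      have hs : |2 * t| < 1 := by rw [abs_mul]; norm_num; linarith
      have hlog := Real.abs_log_sub_add_sum_range_le hs 1
      simp only [Finset.sum_range_one, zero_add, pow_one, Nat.cast_zero, div_one] at hlog
      have h4 : |2 * t| ^ (1 + 1) / (1 - |2 * t|) ≤ 4 * t ^ 2 * 2 := by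
        have : |2 * t| ≤ 1 / 2 := by rw [abs_mul]; norm_num; linarith
        rw [div_le_iff₀ (by linarith)]
        have : |2 * t| ^ (1 + 1) = 4 * t ^ 2 := by rw [one_add_one_eq_two, sq_abs]; ring
        rw [this]
        nlinarith [sq_nonneg t]
      have h6 : 0 < 1 - 2 * t := by linarith
      have h5 := (abs_le.1 (hlog.trans h4)).1
      rw [← Real.exp_log (inv_pos.2 h6), Real.log_inv]
      apply Real.exp_le_exp.2
      linarith
    calc Real.exp (-t) * √((1 - 2 * t)⁻¹)
        ≤ Real.exp (-t) * √(Real.exp (2 * t + 8 * t ^ 2)) := by gcongr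
      _ = Real.exp (4 * t ^ 2) := by
        rw [Real.sqrt_eq_rpow, ← Real.exp_mul, ← Real.exp_add]
        congr 1
        ring

lemma gauss_quad_diag_mgf {ι : Type*} [Fintype ι] (a : ι → ℝ) {s M : ℝ}
    (ha : ∀ i, |a i| ≤ M) (hs : |s| * M ≤ 1 / 4) :
    Integrable (fun x : ι → ℝ => Real.exp (s * ∑ i, a i * (x i ^ 2 - 1))) (stdG ι) ∧
    ∫ x, Real.exp (s * ∑ i, a i * (x i ^ 2 - 1)) ∂(stdG ι)
      ≤ Real.exp (4 * s ^ 2 * M ^ 2 * Fintype.card ι) := by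
  have hsa : ∀ i, |s * a i| ≤ 1 / 4 := fun i => by
    rw [abs_mul]
    exact (mul_le_mul_of_nonneg_left (ha i) (abs_nonneg s)).trans hs
  have e : ∀ x : ι → ℝ, Real.exp (s * ∑ i, a i * (x i ^ 2 - 1))
      = ∏ i, Real.exp ((s * a i) * (x i ^ 2 - 1)) := by
    intro x
    rw [← Real.exp_sum, Finset.mul_sum]
    simp only [mul_assoc]
  simp only [e]
  unfold stdG
  constructor
  · exact Integrable.fintype_prod
      (f := fun i (y : ℝ) => Real.exp ((s * a i) * (y ^ 2 - 1))) fun i => (gauss_sq_mgf (hsa i)).1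
  · rw [integral_fintype_prod_eq_prod
      (f := fun i (y : ℝ) => Real.exp ((s * a i) * (y ^ 2 - 1)))]
    calc _ ≤ ∏ i : ι, Real.exp (4 * s ^ 2 * M ^ 2) := by
          refine Finset.prod_le_prod (fun i _ => integral_nonneg fun x => (Real.exp_pos _).le)
            fun i _ => (gauss_sq_mgf (hsa i)).2.trans ?_
          apply Real.exp_le_exp.2
          have : (a i) ^ 2 ≤ M ^ 2 := sq_le_sq' (by linarith [(abs_le.1 (ha i)).1])
            (abs_le.1 (ha i)).2
          nlinarith [sq_nonneg s, mul_le_mul_of_nonneg_left this (sq_nonneg s)]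
      _ = _ := by
          rw [Finset.prod_const, ← Real.exp_nat_mul, Finset.card_univ]
          congr 1
          ring

/-- Spectral theorem in the form used for real quadratic forms. -/
lemma exists_orthogonal_diag {q : ℕ} (B : Matrix (Fin q) (Fin q) ℝ) (hB : B.IsHermitian) :
    ∃ U : Matrix (Fin q) (Fin q) ℝ, U * Uᵀ = 1 ∧ Uᵀ * U = 1 ∧
      B = U * diagonal hB.eigenvalues * Uᵀ := by
  refine ⟨hB.eigenvectorUnitary, ?_, ?_, ?_⟩
  · have := Matrix.mem_unitaryGroup_iff.1
      hB.eigenvectorUnitary.2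
    simpa [Matrix.star_eq_conjTranspose] using this
  · have := Matrix.mem_unitaryGroup_iff'.1
      hB.eigenvectorUnitary.2
    simpa [Matrix.star_eq_conjTranspose] using this
  · have := hB.spectral_theorem
    rw [Unitary.conjStarAlgAut_apply] at this
    simpa [Matrix.star_eq_conjTranspose, Function.comp_def] using this

lemma eigenvalues_abs_le {q : ℕ} {B : Matrix (Fin q) (Fin q) ℝ} (hB : B.IsHermitian) {M : ℝ}
    (hM : ∀ x : Fin q → ℝ, |x ⬝ᵥ (B *ᵥ x)| ≤ M * (x ⬝ᵥ x)) (i : Fin q) :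
    |hB.eigenvalues i| ≤ M := by
  obtain ⟨U, h1, h2, h3⟩ := exists_orthogonal_diag B hB
  have h := hM (U *ᵥ Pi.single i 1)
  have e1 : (U *ᵥ Pi.single i 1) ⬝ᵥ (U *ᵥ Pi.single i 1) = (1 : ℝ) := by
    rw [Matrix.dotProduct_mulVec, ← Matrix.mulVec_transpose, Matrix.mulVec_mulVec, h2]
    simp
  have e2 : (U *ᵥ Pi.single i 1) ⬝ᵥ (B *ᵥ (U *ᵥ Pi.single i 1)) = hB.eigenvalues i := by
    rw [Matrix.mulVec_mulVec]
    have : B * U = U * diagonal hB.eigenvalues := by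
      conv_lhs => rw [h3]
      rw [mul_assoc, h2, mul_one]
    rw [this, ← Matrix.mulVec_mulVec, Matrix.dotProduct_mulVec, ← Matrix.mulVec_transpose,
      Matrix.mulVec_mulVec, h2]
    simp
  rw [e1, e2] at h
  simpa using h

/-- Exponential moments of a centred Gaussian quadratic form, reduced to the diagonal case by
rotation invariance. -/
lemma gauss_quad_mgf {q : ℕ} (B : Matrix (Fin q) (Fin q) ℝ) (hB : B.IsHermitian) {s M : ℝ}
    (hM : ∀ x : Fin q → ℝ, |x ⬝ᵥ (B *ᵥ x)| ≤ M * (x ⬝ᵥ x)) (hs : |s| * M ≤ 1 / 4) :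
    Integrable (fun x : Fin q → ℝ => Real.exp (s * (x ⬝ᵥ (B *ᵥ x) - B.trace))) (stdG (Fin q)) ∧
    ∫ x, Real.exp (s * (x ⬝ᵥ (B *ᵥ x) - B.trace)) ∂(stdG (Fin q))
      ≤ Real.exp (4 * s ^ 2 * M ^ 2 * q) := by
  obtain ⟨U, h1, h2, h3⟩ := exists_orthogonal_diag B hB
  have key := gauss_quad_diag_mgf hB.eigenvalues (eigenvalues_abs_le hB hM) hs
  have hU : (stdG (Fin q)).map (fun x => Uᵀ *ᵥ x) = stdG (Fin q) :=
    stdG_map_mulVec _ (by rw [Matrix.transpose_transpose, h2])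
  have e : ∀ x : Fin q → ℝ, x ⬝ᵥ (B *ᵥ x) - B.trace
      = ∑ i, hB.eigenvalues i * ((Uᵀ *ᵥ x) i ^ 2 - 1) := by
    intro x
    have e1 : B.trace = ∑ i, hB.eigenvalues i := by
      conv_lhs => rw [h3]
      rw [mul_assoc, Matrix.trace_mul_comm, mul_assoc, h2, mul_one, Matrix.trace_diagonal]
    have e2 : x ⬝ᵥ (B *ᵥ x) = ∑ i, hB.eigenvalues i * (Uᵀ *ᵥ x) i ^ 2 := by
      conv_lhs => rw [h3]
      rw [← Matrix.mulVec_mulVec, ← Matrix.mulVec_mulVec, Matrix.dotProduct_mulVec,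
        ← Matrix.mulVec_transpose]
      simp only [dotProduct, Matrix.mulVec_diagonal]
      exact Finset.sum_congr rfl fun i _ => by ring
    rw [e1, e2, ← Finset.sum_sub_distrib]
    exact Finset.sum_congr rfl fun i _ => by ring
  simp only [e]
  have hm := measurable_mulVec_const Uᵀ
  rw [← hU] at key
  have hmeas : Measurable fun x : Fin q → ℝ =>
      Real.exp (s * ∑ i, hB.eigenvalues i * (x i ^ 2 - 1)) := by fun_prop
  rw [integrable_map_measure hmeas.aestronglyMeasurable hm.aemeasurable,
    integral_map hm.aemeasurable hmeas.aestronglyMeasurable] at key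
  simpa [Function.comp_def] using key

/-- Concentration of a Gaussian quadratic form `xᵀ B x` around `tr B`, where the matrix `B` may be
random but is independent of `x`. -/
lemma quad_concentration {Ω S : Type*} [MeasurableSpace Ω] [MeasurableSpace S] {P : Measure Ω}
    [IsProbabilityMeasure P] {q : ℕ} {X : Ω → Fin q → ℝ} {Y : Ω → S}
    (hX : P.map X = stdG (Fin q)) (hY : AEMeasurable Y P) (hXY : IndepFun X Y P)
    (B : S → Matrix (Fin q) (Fin q) ℝ) (hBm : ∀ i j, Measurable fun y => B y i j)
    (hB : ∀ y, (B y).IsHermitian) {s M r : ℝ} (hs0 : 0 ≤ s)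
    (hM : ∀ y, ∀ x : Fin q → ℝ, |x ⬝ᵥ (B y *ᵥ x)| ≤ M * (x ⬝ᵥ x)) (hs : s * M ≤ 1 / 4) :
    P {ω | r ≤ |X ω ⬝ᵥ (B (Y ω) *ᵥ X ω) - (B (Y ω)).trace|}
      ≤ ENNReal.ofReal (2 * Real.exp (-s * r + 4 * s ^ 2 * M ^ 2 * q)) := by
  have hXm : AEMeasurable X P := by
    apply AEMeasurable.of_map_ne_zero
    rw [hX]; exact IsProbabilityMeasure.ne_zero _
  have hlaw : P.map (fun ω => (X ω, Y ω)) = (stdG (Fin q)).prod (P.map Y) := by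
    rw [← hX]; exact (indepFun_iff_map_prod_eq_prod_map_map hXm hY).1 hXY
  have : IsProbabilityMeasure (P.map Y) := Measure.isProbabilityMeasure_map hY
  set F : (Fin q → ℝ) × S → ℝ := fun z => z.1 ⬝ᵥ (B z.2 *ᵥ z.1) - (B z.2).trace with hF
  have hFm : Measurable F := by
    have : ∀ i j, Measurable fun z : (Fin q → ℝ) × S => B z.2 i j := fun i j =>
      (hBm i j).comp measurable_snd
    simp only [hF, dotProduct, Matrix.mulVec, Matrix.trace, Matrix.diag]
    fun_prop
  -- one-sided Chernoff bound, used for both signs of the exponent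
  have chern : ∀ σ : ℝ, |σ| = 1 →
      P {ω | r ≤ σ * F (X ω, Y ω)}
        ≤ ENNReal.ofReal (Real.exp (-s * r + 4 * s ^ 2 * M ^ 2 * q)) := by
    intro σ hσ
    have h1 : ∀ y, ∫⁻ x, ENNReal.ofReal (Real.exp ((s * σ) * F (x, y))) ∂(stdG (Fin q))
        ≤ ENNReal.ofReal (Real.exp (4 * s ^ 2 * M ^ 2 * q)) := by
      intro y
      have hh := gauss_quad_mgf (B y) (hB y) (s := s * σ) (hM y)
        (by rwa [abs_mul, hσ, mul_one, abs_of_nonneg hs0])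
      rw [← ofReal_integral_eq_lintegral_ofReal hh.1 (ae_of_all _ fun x => (Real.exp_pos _).le)]
      apply ENNReal.ofReal_le_ofReal
      refine hh.2.trans_eq ?_
      have : σ ^ 2 = 1 := by rw [← sq_abs, hσ]; norm_num
      rw [mul_pow, this, mul_one]
    have hGm : Measurable fun z : (Fin q → ℝ) × S =>
        ENNReal.ofReal (Real.exp ((s * σ) * F z)) := by fun_prop
    have h2 : ∫⁻ ω, ENNReal.ofReal (Real.exp ((s * σ) * F (X ω, Y ω))) ∂P
        ≤ ENNReal.ofReal (Real.exp (4 * s ^ 2 * M ^ 2 * q)) := by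
      rw [← lintegral_map' (f := fun z => ENNReal.ofReal (Real.exp ((s * σ) * F z)))
        (g := fun ω => (X ω, Y ω)) hGm.aemeasurable (hXm.prodMk hY), hlaw,
        lintegral_prod_symm _ hGm.aemeasurable]
      calc _ ≤ ∫⁻ y, ENNReal.ofReal (Real.exp (4 * s ^ 2 * M ^ 2 * q)) ∂(P.map Y) :=
            lintegral_mono h1
        _ = _ := by simp
    have h3 : {ω | r ≤ σ * F (X ω, Y ω)} ⊆
        {ω | ENNReal.ofReal (Real.exp (s * r)) ≤
          ENNReal.ofReal (Real.exp ((s * σ) * F (X ω, Y ω)))} := by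
      intro ω hω
      apply ENNReal.ofReal_le_ofReal
      apply Real.exp_le_exp.2
      rw [mul_assoc]
      exact mul_le_mul_of_nonneg_left hω hs0
    have hGa : AEMeasurable (fun ω => ENNReal.ofReal (Real.exp ((s * σ) * F (X ω, Y ω)))) P :=
      hGm.comp_aemeasurable (hXm.prodMk hY)
    have h4 := meas_ge_le_lintegral_div hGa
      (ε := ENNReal.ofReal (Real.exp (s * r))) (by simp [Real.exp_pos]) (by simp)
    refine (measure_mono h3).trans (h4.trans ?_)
    rw [Real.exp_add, ENNReal.ofReal_mul (Real.exp_pos _).le, neg_mul, Real.exp_neg,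
      ENNReal.ofReal_inv_of_pos (Real.exp_pos _), ENNReal.div_eq_inv_mul]
    exact mul_le_mul_right h2 _
  have hsub : {ω | r ≤ |X ω ⬝ᵥ (B (Y ω) *ᵥ X ω) - (B (Y ω)).trace|} ⊆
      {ω | r ≤ 1 * F (X ω, Y ω)} ∪ {ω | r ≤ (-1) * F (X ω, Y ω)} := by
    intro ω hω
    rcases le_abs.1 (show r ≤ |F (X ω, Y ω)| from hω) with h | h
    · left; simpa [hF] using h
    · right; simpa [hF] using h
  refine (measure_mono hsub).trans ((measure_union_le _ _).trans ?_)
  refine (add_le_add (chern 1 (by simp)) (chern (-1) (by simp))).trans ?_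
  rw [← ENNReal.ofReal_add (Real.exp_pos _).le (Real.exp_pos _).le, two_mul]

/-! ### Gaussian integration by parts and Slepian's comparison -/

lemma stdG_map_comp {ι ι' : Type*} [Fintype ι] [Fintype ι'] (e : ι' → ι)
    (he : Function.Injective e) : (stdG ι).map (fun x i => x (e i)) = stdG ι' := by
  classical
  have h := stdG_map_mulVec (Matrix.of fun (i' : ι') (i : ι) => if e i' = i then (1 : ℝ) else 0)
    (by
      ext i j
      simp [Matrix.mul_apply, Matrix.one_apply, he.eq_iff, eq_comm])
  rw [← h]
  congr 1
  ext x i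
  simp [Matrix.mulVec, dotProduct]

lemma gauss_ibp_one {f f' : ℝ → ℝ} {C : ℝ} (hf : ∀ x, HasDerivAt f (f' x) x)
    (hb : ∀ x, |f x| ≤ C) (hb' : ∀ x, |f' x| ≤ C) (hm' : Measurable f') :
    ∫ x, x * f x ∂(gaussianReal 0 1) = ∫ x, f' x ∂(gaussianReal 0 1) := by
  have hfc : Continuous f := continuous_iff_continuousAt.2 fun x => (hf x).continuousAt
  have hpdf : ∀ x, HasDerivAt (gaussianPDFReal 0 1) (-x * gaussianPDFReal 0 1 x) x := by
    intro x
    have h1 : HasDerivAt (fun x : ℝ => -(x - 0) ^ 2 / (2 * ((1 : NNReal) : ℝ))) (-x) x := by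
      have := (((hasDerivAt_id x).sub_const 0).pow 2).neg.div_const (2 * ((1 : NNReal) : ℝ))
      refine this.congr_deriv ?_
      simp
      ring
    have h2 := (h1.exp).const_mul (√(2 * Real.pi * ((1 : NNReal) : ℝ)))⁻¹
    refine h2.congr_deriv ?_
    simp only [gaussianPDFReal]
    ring
  rw [integral_gaussianReal_eq_integral_smul one_ne_zero,
    integral_gaussianReal_eq_integral_smul one_ne_zero]
  have hi0 := integrable_gaussianPDFReal 0 1
  have hi1 : Integrable fun x => -x * gaussianPDFReal 0 1 x := by
    have h1 : Integrable (fun x : ℝ => x) (gaussianReal 0 1) :=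
      (memLp_id_gaussianReal 1).integrable le_rfl
    rw [gaussianReal_of_var_ne_zero _ one_ne_zero,
      integrable_withDensity_iff_integrable_smul' (measurable_gaussianPDF 0 1)
      (ae_of_all _ fun x => gaussianPDF_lt_top)] at h1
    simp only [toReal_gaussianPDF, smul_eq_mul] at h1
    refine h1.neg.congr (ae_of_all _ fun x => ?_)
    simp only [Pi.neg_apply]; ring
  have key := integral_mul_deriv_eq_deriv_mul_of_integrable (u := f) (v := gaussianPDFReal 0 1)
    (u' := f') (v' := fun x => -x * gaussianPDFReal 0 1 x) (fun x _ => hf x) (fun x _ => hpdf x)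
    (hi1.bdd_mul (c := C) hfc.aestronglyMeasurable (ae_of_all _ fun x => by simpa using hb x))
    (hi0.bdd_mul (c := C) hm'.aestronglyMeasurable (ae_of_all _ fun x => by simpa using hb' x))
    (hi0.bdd_mul (c := C) hfc.aestronglyMeasurable (ae_of_all _ fun x => by simpa using hb x))
  have e1 : ∫ x, gaussianPDFReal 0 1 x • (x * f x)
      = - ∫ x, f x * (-x * gaussianPDFReal 0 1 x) := by
    rw [← integral_neg]
    congr 1; ext x; simp only [smul_eq_mul]; ring
  rw [e1, key, neg_neg]
  congr 1; ext x; simp only [smul_eq_mul]; ring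

lemma integrable_coord_stdG {ι : Type*} [Fintype ι] (i : ι) :
    Integrable (fun x : ι → ℝ => x i) (stdG ι) := by
  classical
  have hmp : MeasurePreserving (fun x : ι → ℝ => x i) (stdG ι) (gaussianReal 0 1) :=
    measurePreserving_eval (fun _ : ι => gaussianReal 0 1) i
  have h1 : Integrable (fun x : ℝ => x) (gaussianReal 0 1) :=
    (memLp_id_gaussianReal 1).integrable le_rfl
  exact hmp.integrable_comp_of_integrable h1

lemma integrable_dot_stdG {ι : Type*} [Fintype ι] (c : ι → ℝ) :
    Integrable (fun x : ι → ℝ => c ⬝ᵥ x) (stdG ι) := by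
  simp only [dotProduct]
  exact integrable_finsetSum _ fun i _ => (integrable_coord_stdG i).const_mul _

lemma gauss_ibp_coord {d : ℕ} {G G' : (Fin d → ℝ) → ℝ} {C : ℝ} (i : Fin d)
    (hG : ∀ x s, HasDerivAt (fun s => G (Function.update x i s)) (G' (Function.update x i s)) s)
    (hb : ∀ x, |G x| ≤ C) (hb' : ∀ x, |G' x| ≤ C) (hm : Measurable G) (hm' : Measurable G') :
    ∫ x, x i * G x ∂(stdG (Fin d)) = ∫ x, G' x ∂(stdG (Fin d)) := by
  cases d with
  | zero => exact i.elim0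
  | succ d =>
  have hmp := measurePreserving_piFinSuccAbove (fun _ : Fin (d + 1) => gaussianReal 0 1) i
  have hmps := hmp.symm
  have hintg : Integrable (fun x : Fin (d + 1) → ℝ => x i * G x) (stdG (Fin (d + 1))) := by
    have := (integrable_coord_stdG i).bdd_mul (c := C) hm.aestronglyMeasurable
      (ae_of_all _ fun x => by simpa using hb x)
    refine this.congr (ae_of_all _ fun x => by simp only; ring)
  have hintg' : Integrable G' (stdG (Fin (d + 1))) :=
    Integrable.of_bound hm'.aestronglyMeasurable C (ae_of_all _ fun x => by simpa using hb' x)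
  unfold stdG at *
  rw [← hmps.integral_comp' , ← hmps.integral_comp']
  rw [integral_prod_symm, integral_prod_symm]
  · congr 1
    ext y
    have e : ∀ s : ℝ, (MeasurableEquiv.piFinSuccAbove (fun _ : Fin (d + 1) => ℝ) i).symm (s, y)
        = Function.update (Fin.insertNth (α := fun _ => ℝ) i 0 y) i s := by
      intro s
      rw [Fin.update_insertNth]
      rfl
    simp only [e]
    simp only [Function.update_self]
    exact gauss_ibp_one (fun s => hG _ s) (fun s => hb _) (fun s => hb' _)
      (hm'.comp (measurable_update _))
  · exact (hmps.integrable_comp_emb (MeasurableEquiv.measurableEmbedding _)).2 hintg'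
  · exact (hmps.integrable_comp_emb (MeasurableEquiv.measurableEmbedding _)).2 hintg

/-- The smooth surrogate `y ↦ exp (-w ∑ e^{β y_t})` for the indicator of `{max y_t < a}`, where
`w = e^{-β a}` and `β` is large. -/
def gumbel {T : Type*} [Fintype T] (β w : ℝ) (y : T → ℝ) : ℝ :=
  Real.exp (-∑ t, w * Real.exp (β * y t))

/-- First partial derivatives of `gumbel`. -/
def gumbel1 {T : Type*} [Fintype T] (β w : ℝ) (t : T) (y : T → ℝ) : ℝ :=
  -(β * (w * Real.exp (β * y t))) * gumbel β w y

open Classical in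
/-- Second partial derivatives of `gumbel`. -/
def gumbel2 {T : Type*} [Fintype T] (β w : ℝ) (t s : T) (y : T → ℝ) : ℝ :=
  (β ^ 2 * (w * Real.exp (β * y t)) * (w * Real.exp (β * y s))
    - if t = s then β ^ 2 * (w * Real.exp (β * y t)) else 0) * gumbel β w y

section Gumbel

variable {T : Type*} [Fintype T] {β w : ℝ}

lemma gumbel_pos (y : T → ℝ) : 0 < gumbel β w y := Real.exp_pos _

lemma gumbel_le_one (hw : 0 < w) (y : T → ℝ) : gumbel β w y ≤ 1 := by
  apply Real.exp_le_one_iff.2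
  rw [neg_nonpos]
  exact Finset.sum_nonneg fun t _ => by positivity

lemma gumbel_term_le (hw : 0 < w) (t : T) (y : T → ℝ) :
    w * Real.exp (β * y t) ≤ ∑ t, w * Real.exp (β * y t) :=
  Finset.single_le_sum (f := fun t => w * Real.exp (β * y t)) (fun t _ => by positivity)
    (Finset.mem_univ t)

lemma gumbel1_bound (hβ : 0 < β) (hw : 0 < w) (t : T) (y : T → ℝ) :
    |gumbel1 β w t y| ≤ β := by
  unfold gumbel1 gumbel
  rw [abs_mul, abs_neg, Real.abs_exp, abs_of_pos (by positivity)]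
  have h1 := gumbel_term_le (β := β) hw t y
  set S := ∑ t, w * Real.exp (β * y t)
  have h2 : S * Real.exp (-S) ≤ 1 := by
    rw [Real.exp_neg, mul_inv_le_iff₀ (Real.exp_pos _)]
    linarith [Real.add_one_le_exp S]
  have h3 : (w * Real.exp (β * y t)) * Real.exp (-S) ≤ 1 :=
    (mul_le_mul_of_nonneg_right h1 (Real.exp_pos _).le).trans h2
  calc _ = β * ((w * Real.exp (β * y t)) * Real.exp (-S)) := by ring
    _ ≤ β * 1 := by gcongr
    _ = β := mul_one _

lemma gumbel2_bound (hw : 0 < w) (t s : T) (y : T → ℝ) :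
    |gumbel2 β w t s y| ≤ 3 * β ^ 2 := by
  unfold gumbel2 gumbel
  have h1 := gumbel_term_le (β := β) hw t y
  have h1' := gumbel_term_le (β := β) hw s y
  set S := ∑ t, w * Real.exp (β * y t)
  have hA : 0 < w * Real.exp (β * y t) := by positivity
  have hB : 0 < w * Real.exp (β * y s) := by positivity
  set A := w * Real.exp (β * y t)
  set B := w * Real.exp (β * y s)
  have hS : 0 < S := hA.trans_le h1
  have h2 : S * Real.exp (-S) ≤ 1 := by
    rw [Real.exp_neg, mul_inv_le_iff₀ (Real.exp_pos _)]
    linarith [Real.add_one_le_exp S]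
  have h3 : S ^ 2 * Real.exp (-S) ≤ 2 := by
    rw [Real.exp_neg, mul_inv_le_iff₀ (Real.exp_pos _)]
    have := Real.quadratic_le_exp_of_nonneg hS.le
    nlinarith
  have hAB : A * B ≤ S ^ 2 := by rw [sq]; exact mul_le_mul h1 h1' hB.le hS.le
  have h4 : β ^ 2 * (A * B * Real.exp (-S)) ≤ β ^ 2 * 2 :=
    mul_le_mul_of_nonneg_left
      ((mul_le_mul_of_nonneg_right hAB (Real.exp_pos _).le).trans h3) (sq_nonneg _)
  have h5 : β ^ 2 * (A * Real.exp (-S)) ≤ β ^ 2 * 1 :=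
    mul_le_mul_of_nonneg_left
      ((mul_le_mul_of_nonneg_right h1 (Real.exp_pos _).le).trans h2) (sq_nonneg _)
  have h6 : 0 ≤ β ^ 2 * (A * B * Real.exp (-S)) := by positivity
  have h7 : 0 ≤ β ^ 2 * (A * Real.exp (-S)) := by positivity
  rw [abs_le]
  split_ifs
  · constructor <;> nlinarith
  · constructor <;> nlinarith

lemma gumbel2_nonneg (hw : 0 < w) {t s : T} (h : t ≠ s) (y : T → ℝ) :
    0 ≤ gumbel2 β w t s y := by
  unfold gumbel2 gumbel
  rw [if_neg h, sub_zero]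
  positivity

lemma measurable_gumbel : Measurable (gumbel (T := T) β w) := by unfold gumbel; fun_prop

lemma measurable_gumbel1 (t : T) : Measurable (gumbel1 β w t) := by
  have := measurable_gumbel (T := T) (β := β) (w := w)
  unfold gumbel1; fun_prop

lemma measurable_gumbel2 (t s : T) : Measurable (gumbel2 β w t s) := by
  have := measurable_gumbel (T := T) (β := β) (w := w)
  unfold gumbel2
  split_ifs <;> fun_prop

lemma hasDerivAt_gumbel {y : ℝ → T → ℝ} {y' : T → ℝ} {s : ℝ}
    (hy : ∀ t, HasDerivAt (fun s => y s t) (y' t) s) :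
    HasDerivAt (fun s => gumbel β w (y s)) (∑ t, gumbel1 β w t (y s) * y' t) s := by
  unfold gumbel1 gumbel
  have h1 : HasDerivAt (fun s => -∑ t, w * Real.exp (β * y s t))
      (-∑ t, w * (Real.exp (β * y s t) * (β * y' t))) s := by
    apply HasDerivAt.neg
    exact HasDerivAt.fun_sum fun t _ => (((hy t).const_mul β).exp).const_mul w
  refine h1.exp.congr_deriv ?_
  rw [mul_neg, Finset.mul_sum, ← Finset.sum_neg_distrib]
  exact Finset.sum_congr rfl fun t _ => by ring

lemma hasDerivAt_gumbel1 {y : ℝ → T → ℝ} {y' : T → ℝ} {s : ℝ} (t : T)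
    (hy : ∀ t, HasDerivAt (fun s => y s t) (y' t) s) :
    HasDerivAt (fun s => gumbel1 β w t (y s)) (∑ r, gumbel2 β w t r (y s) * y' r) s := by
  classical
  have h1 := ((((hy t).const_mul β).exp.const_mul w).const_mul β).neg.mul
    (hasDerivAt_gumbel (β := β) (w := w) hy)
  refine h1.congr_deriv ?_
  simp only [gumbel2, gumbel1, sub_mul, Finset.sum_sub_distrib, Finset.mul_sum]
  have : ∑ r, (if t = r then β ^ 2 * (w * Real.exp (β * y s t)) else 0) * gumbel β w (y s) * y' r
      = β ^ 2 * (w * Real.exp (β * y s t)) * gumbel β w (y s) * y' t := by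
    rw [Finset.sum_eq_single t]
    · simp
    · intro r _ hr; simp [hr.symm]
    · simp
  rw [this, add_comm, sub_eq_add_neg]
  congr 1
  · refine Finset.sum_congr rfl fun r _ => ?_
    simp only [Pi.neg_apply]
    ring
  · ring

end Gumbel

lemma hasDerivAt_dot_update {d : ℕ} (c x : Fin d → ℝ) (i : Fin d) (s : ℝ) :
    HasDerivAt (fun s => c ⬝ᵥ Function.update x i s) (c i) s := by
  have : (fun s => c ⬝ᵥ Function.update x i s)
      = fun s => c i * s + ∑ j ∈ Finset.univ.erase i, c j * x j := by
    ext s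
    rw [dotProduct, ← Finset.add_sum_erase _ _ (Finset.mem_univ i), Function.update_self]
    congr 1
    exact Finset.sum_congr rfl fun j hj => by rw [Function.update_of_ne (Finset.ne_of_mem_erase hj)]
  rw [this]
  exact (((hasDerivAt_id' s).const_mul (c i)).add_const
    (∑ j ∈ Finset.univ.erase i, c j * x j)).congr_deriv (mul_one _)

/-- Gaussian integration by parts for the first derivatives of `gumbel` along linear forms. -/
lemma gumbel_ibp {T : Type*} [Fintype T] {β w : ℝ} (hβ : 0 < β) (hw : 0 < w) {d : ℕ}
    (L : T → Fin d → ℝ) (t : T) (c : Fin d → ℝ) :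
    ∫ x, gumbel1 β w t (fun r => L r ⬝ᵥ x) * (c ⬝ᵥ x) ∂(stdG (Fin d))
      = ∑ r, (c ⬝ᵥ L r) * ∫ x, gumbel2 β w t r (fun r => L r ⬝ᵥ x) ∂(stdG (Fin d)) := by
  have hLm : Measurable fun (x : Fin d → ℝ) (r : T) => L r ⬝ᵥ x :=
    measurable_pi_lambda _ fun r => by simp only [dotProduct]; fun_prop
  have hm1 : Measurable fun x : Fin d → ℝ => gumbel1 β w t (fun r => L r ⬝ᵥ x) :=
    (measurable_gumbel1 t).comp hLm
  have hm2 : ∀ r, Measurable fun x : Fin d → ℝ => gumbel2 β w t r (fun r => L r ⬝ᵥ x) :=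
    fun r => (measurable_gumbel2 t r).comp hLm
  have hint2 : ∀ r, Integrable (fun x : Fin d → ℝ => gumbel2 β w t r (fun r => L r ⬝ᵥ x))
      (stdG (Fin d)) := fun r => Integrable.of_bound (hm2 r).aestronglyMeasurable (3 * β ^ 2)
        (ae_of_all _ fun x => gumbel2_bound hw t r _)
  have hint1 : ∀ i, Integrable (fun x : Fin d → ℝ =>
      c i * (x i * gumbel1 β w t (fun r => L r ⬝ᵥ x))) (stdG (Fin d)) := by
    intro i
    have := (integrable_coord_stdG i).bdd_mul (c := β) hm1.aestronglyMeasurable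
      (ae_of_all _ fun x => gumbel1_bound hβ hw t _)
    refine (this.const_mul (c i)).congr (ae_of_all _ fun x => by simp only; ring)
  have e1 : ∀ x : Fin d → ℝ, gumbel1 β w t (fun r => L r ⬝ᵥ x) * (c ⬝ᵥ x)
      = ∑ i, c i * (x i * gumbel1 β w t (fun r => L r ⬝ᵥ x)) := by
    intro x
    rw [dotProduct, Finset.mul_sum]
    exact Finset.sum_congr rfl fun i _ => by ring
  simp only [e1]
  rw [integral_finsetSum _ fun i _ => hint1 i]
  have hcoord : ∀ i, ∫ x, x i * gumbel1 β w t (fun r => L r ⬝ᵥ x) ∂(stdG (Fin d))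
      = ∑ r, L r i * ∫ x, gumbel2 β w t r (fun r => L r ⬝ᵥ x) ∂(stdG (Fin d)) := by
    intro i
    rw [gauss_ibp_coord (G := fun x => gumbel1 β w t (fun r => L r ⬝ᵥ x))
      (G' := fun x => ∑ r, gumbel2 β w t r (fun r => L r ⬝ᵥ x) * L r i)
      (C := β + ∑ r, 3 * β ^ 2 * |L r i|) i]
    · rw [integral_finsetSum _ fun r _ => (hint2 r).mul_const _]
      exact Finset.sum_congr rfl fun r _ => by rw [integral_mul_const, mul_comm]
    · intro x s
      exact hasDerivAt_gumbel1 (y := fun s r => L r ⬝ᵥ Function.update x i s) t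
        fun r => hasDerivAt_dot_update (L r) x i s
    · intro x
      exact (gumbel1_bound hβ hw t _).trans
        (le_add_of_nonneg_right (Finset.sum_nonneg fun r _ => by positivity))
    · intro x
      refine (Finset.abs_sum_le_sum_abs _ _).trans ?_
      refine (Finset.sum_le_sum fun r _ => ?_).trans (le_add_of_nonneg_left hβ.le)
      rw [abs_mul]
      exact mul_le_mul_of_nonneg_right (gumbel2_bound hw t r _) (abs_nonneg _)
    · exact hm1
    · exact Finset.measurable_fun_sum _ fun r _ => (hm2 r).mul_const _
  simp only [integral_const_mul, hcoord, Finset.mul_sum]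
  rw [Finset.sum_comm]
  refine Finset.sum_congr rfl fun r _ => ?_
  rw [dotProduct, Finset.sum_mul]
  exact Finset.sum_congr rfl fun i _ => by ring

/-- Slepian's inequality for the smooth functional `gumbel`: the family with larger correlations
has the stochastically smaller maximum. The two families `a`, `b` of linear forms live on
orthogonal sets of coordinates, and the interpolation `cos θ · a + sin θ · b` is differentiated. -/
lemma slepian_gumbel_fin {T : Type*} [Fintype T] {β w : ℝ} (hβ : 0 < β) (hw : 0 < w) {d : ℕ}
    (a b : T → Fin d → ℝ) (hab : ∀ s t, a s ⬝ᵥ b t = 0) (hvar : ∀ t, a t ⬝ᵥ a t = b t ⬝ᵥ b t)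
    (hcov : ∀ s t, b s ⬝ᵥ b t ≤ a s ⬝ᵥ a t) :
    ∫ x, gumbel β w (fun t => b t ⬝ᵥ x) ∂(stdG (Fin d))
      ≤ ∫ x, gumbel β w (fun t => a t ⬝ᵥ x) ∂(stdG (Fin d)) := by
  set L : ℝ → T → Fin d → ℝ := fun θ t => Real.cos θ • a t + Real.sin θ • b t with hL
  set L' : ℝ → T → Fin d → ℝ := fun θ t => (-Real.sin θ) • a t + Real.cos θ • b t with hL'
  set ψ : ℝ → ℝ := fun θ => ∫ x, gumbel β w (fun t => L θ t ⬝ᵥ x) ∂(stdG (Fin d)) with hψ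
  have hLm : ∀ θ, Measurable fun (x : Fin d → ℝ) (r : T) => L θ r ⬝ᵥ x := fun θ =>
    measurable_pi_lambda _ fun r => by simp only [dotProduct]; fun_prop
  have hLm' : ∀ θ t, Measurable fun (x : Fin d → ℝ) => L' θ t ⬝ᵥ x := fun θ t => by
    simp only [dotProduct]; fun_prop
  have hder : ∀ θ, HasDerivAt ψ
      (∫ x, ∑ t, gumbel1 β w t (fun t => L θ t ⬝ᵥ x) * (L' θ t ⬝ᵥ x) ∂(stdG (Fin d))) θ := by
    intro θ
    refine (hasDerivAt_integral_of_dominated_loc_of_deriv_le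
      (F := fun θ x => gumbel β w (fun t => L θ t ⬝ᵥ x))
      (F' := fun θ x => ∑ t, gumbel1 β w t (fun t => L θ t ⬝ᵥ x) * (L' θ t ⬝ᵥ x))
      (bound := fun x => ∑ t, β * (|a t ⬝ᵥ x| + |b t ⬝ᵥ x|)) (s := Set.univ) univ_mem
      ?_ ?_ ?_ ?_ ?_ ?_).2
    · exact Eventually.of_forall fun θ =>
        (measurable_gumbel.comp (hLm θ)).aestronglyMeasurable
    · exact Integrable.of_bound (measurable_gumbel.comp (hLm θ)).aestronglyMeasurable 1
        (ae_of_all _ fun x => by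
          rw [Real.norm_eq_abs, abs_of_pos (gumbel_pos _)]; exact gumbel_le_one hw _)
    · exact (Finset.measurable_fun_sum _ fun t _ =>
        ((measurable_gumbel1 t).comp (hLm θ)).mul (hLm' θ t)).aestronglyMeasurable
    · refine ae_of_all _ fun x θ _ => ?_
      refine (norm_sum_le _ _).trans (Finset.sum_le_sum fun t _ => ?_)
      rw [norm_mul]
      refine mul_le_mul (gumbel1_bound hβ hw t _) ?_ (norm_nonneg _) hβ.le
      simp only [hL', add_dotProduct, smul_dotProduct, smul_eq_mul, Real.norm_eq_abs]
      refine (abs_add_le _ _).trans ?_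
      rw [abs_mul, abs_mul, abs_neg]
      exact add_le_add (mul_le_of_le_one_left (abs_nonneg _) (Real.abs_sin_le_one _))
        (mul_le_of_le_one_left (abs_nonneg _) (Real.abs_cos_le_one _))
    · exact integrable_finsetSum _ fun t _ =>
        ((integrable_dot_stdG (a t)).abs.add (integrable_dot_stdG (b t)).abs).const_mul β
    · refine ae_of_all _ fun x θ _ => ?_
      refine hasDerivAt_gumbel (y := fun θ t => L θ t ⬝ᵥ x) (y' := fun t => L' θ t ⬝ᵥ x)
        fun t => ?_
      simp only [hL, hL', add_dotProduct, smul_dotProduct, smul_eq_mul]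
      exact ((Real.hasDerivAt_cos θ).mul_const _).add ((Real.hasDerivAt_sin θ).mul_const _)
  have hval : ∀ θ, ∫ x, ∑ t, gumbel1 β w t (fun t => L θ t ⬝ᵥ x) * (L' θ t ⬝ᵥ x) ∂(stdG (Fin d))
      = ∑ t, ∑ r, (Real.sin θ * Real.cos θ * (b t ⬝ᵥ b r - a t ⬝ᵥ a r)) *
        ∫ x, gumbel2 β w t r (fun r => L θ r ⬝ᵥ x) ∂(stdG (Fin d)) := by
    intro θ
    rw [integral_finsetSum]
    · refine Finset.sum_congr rfl fun t _ => ?_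
      rw [gumbel_ibp hβ hw (L θ) t (L' θ t)]
      refine Finset.sum_congr rfl fun r _ => ?_
      congr 1
      simp only [hL, hL', add_dotProduct, dotProduct_add, smul_dotProduct, dotProduct_smul,
        smul_eq_mul, hab, dotProduct_comm (b t) (a r)]
      ring
    · intro t _
      exact (integrable_dot_stdG (L' θ t)).bdd_mul (c := β)
        ((measurable_gumbel1 t).comp (hLm θ)).aestronglyMeasurable
        (ae_of_all _ fun x => gumbel1_bound hβ hw t _)
  have hanti : AntitoneOn ψ (Set.Icc 0 (Real.pi / 2)) := by
    refine antitoneOn_of_deriv_nonpos (convex_Icc _ _)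
      (fun θ _ => (hder θ).continuousAt.continuousWithinAt)
      (fun θ _ => (hder θ).differentiableAt.differentiableWithinAt) fun θ hθ => ?_
    rw [interior_Icc] at hθ
    rw [(hder θ).deriv, hval]
    refine Finset.sum_nonpos fun t _ => Finset.sum_nonpos fun r _ => ?_
    rcases eq_or_ne t r with rfl | htr
    · rw [hvar, sub_self, mul_zero, zero_mul]
    · refine mul_nonpos_of_nonpos_of_nonneg ?_ (integral_nonneg fun x => gumbel2_nonneg hw htr _)
      have h1 := Real.sin_nonneg_of_nonneg_of_le_pi hθ.1.le
        (by linarith [hθ.2, Real.pi_pos])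
      have h2 := Real.cos_nonneg_of_neg_pi_div_two_le_of_le (x := θ)
        (by linarith [hθ.1, Real.pi_pos]) hθ.2.le
      exact mul_nonpos_of_nonneg_of_nonpos (mul_nonneg h1 h2) (by linarith [hcov t r])
  have := hanti (Set.left_mem_Icc.2 (by positivity)) (Set.right_mem_Icc.2 (by positivity))
    (by positivity : (0 : ℝ) ≤ Real.pi / 2)
  simpa [hψ, hL] using this

lemma slepian_gumbel {T ι : Type*} [Fintype T] [Fintype ι] {β w : ℝ} (hβ : 0 < β) (hw : 0 < w)
    (a b : T → ι → ℝ) (hab : ∀ s t, a s ⬝ᵥ b t = 0) (hvar : ∀ t, a t ⬝ᵥ a t = b t ⬝ᵥ b t)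
    (hcov : ∀ s t, b s ⬝ᵥ b t ≤ a s ⬝ᵥ a t) :
    ∫ x, gumbel β w (fun t => b t ⬝ᵥ x) ∂(stdG ι)
      ≤ ∫ x, gumbel β w (fun t => a t ⬝ᵥ x) ∂(stdG ι) := by
  set e := (Fintype.equivFin ι).symm
  have hd : ∀ c y : ι → ℝ, (fun i => c (e i)) ⬝ᵥ (fun i => y (e i)) = c ⬝ᵥ y := fun c y =>
    e.sum_comp fun i => c i * y i
  have h := slepian_gumbel_fin hβ hw (fun t i => a t (e i)) (fun t i => b t (e i))
    (fun s t => by rw [hd]; exact hab s t) (fun t => by rw [hd, hd]; exact hvar t)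
    (fun s t => by rw [hd, hd]; exact hcov s t)
  have hm : Measurable fun (x : ι → ℝ) i => x (e i) := by fun_prop
  rw [← stdG_map_comp e e.injective] at h
  have hgm : ∀ c : T → Fin (Fintype.card ι) → ℝ, Measurable fun x =>
      gumbel β w (fun t => c t ⬝ᵥ x) := fun c =>
    measurable_gumbel.comp (measurable_pi_lambda _ fun r => by simp only [dotProduct]; fun_prop)
  rw [integral_map hm.aemeasurable (hgm _).aestronglyMeasurable,
    integral_map hm.aemeasurable (hgm _).aestronglyMeasurable] at h
  simpa only [hd] using h

/-! ### The largest eigenvalue: Slepian comparison -/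

/-- Slepian's inequality: the process with the smaller covariances and the same variances has
the stochastically larger maximum. -/
lemma slepian_prob {T ι : Type*} [Fintype T] [Fintype ι]
    (a b : T → ι → ℝ) (hab : ∀ s t, a s ⬝ᵥ b t = 0) (hvar : ∀ t, a t ⬝ᵥ a t = b t ⬝ᵥ b t)
    (hcov : ∀ s t, b s ⬝ᵥ b t ≤ a s ⬝ᵥ a t) {r δ : ℝ} (hδ : 0 < δ) :
    (stdG ι).real {x | ∃ t, r + δ ≤ a t ⬝ᵥ x} ≤ (stdG ι).real {x | ∃ t, r - δ < b t ⬝ᵥ x} := by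
  have hlin : ∀ c : ι → ℝ, Measurable fun x : ι → ℝ => c ⬝ᵥ x := fun c => by
    simp only [dotProduct]; fun_prop
  have hma : MeasurableSet {x : ι → ℝ | ∃ t, r + δ ≤ a t ⬝ᵥ x} := by
    rw [Set.ofPred_exists]
    exact MeasurableSet.iUnion fun t => measurableSet_le measurable_const (hlin _)
  have hmb : MeasurableSet {x : ι → ℝ | ∃ t, r - δ < b t ⬝ᵥ x} := by
    rw [Set.ofPred_exists]
    exact MeasurableSet.iUnion fun t => measurableSet_lt measurable_const (hlin _)
  set A := {x : ι → ℝ | ∃ t, r + δ ≤ a t ⬝ᵥ x} with hA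
  set D := {x : ι → ℝ | ∃ t, r - δ < b t ⬝ᵥ x} with hD
  have hgm : ∀ (β w : ℝ) (c : T → ι → ℝ), Measurable fun x => gumbel β w (fun t => c t ⬝ᵥ x) :=
    fun β w c => measurable_gumbel.comp (measurable_pi_lambda _ fun t => hlin (c t))
  have hg0 : ∀ (β w : ℝ) (y : T → ℝ), 0 < gumbel β w y := fun β w y => Real.exp_pos _
  have hg1 : ∀ (β w : ℝ), 0 < w → ∀ (y : T → ℝ), gumbel β w y ≤ 1 := fun β w hw y => by
    unfold gumbel
    rw [Real.exp_le_one_iff, neg_nonpos]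
    exact Finset.sum_nonneg fun t _ => by positivity
  have hgi : ∀ (β w : ℝ), 0 < w → ∀ c : T → ι → ℝ,
      Integrable (fun x => gumbel β w (fun t => c t ⬝ᵥ x)) (stdG ι) := fun β w hw c =>
    Integrable.of_bound (hgm β w c).aestronglyMeasurable 1 (ae_of_all _ fun x => by
      rw [Real.norm_of_nonneg (hg0 _ _ _).le]; exact hg1 _ _ hw _)
  -- the inequality for finite inverse temperature
  have key : ∀ β : ℝ, 0 < β →
      Real.exp (-(Fintype.card T * Real.exp (-(β * δ)))) * (1 - (stdG ι).real D)
        ≤ (1 - (stdG ι).real A) + Real.exp (-Real.exp (β * δ)) := by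
    intro β hβ
    have hw : 0 < Real.exp (-(β * r)) := Real.exp_pos _
    have h := slepian_gumbel hβ hw a b hab hvar hcov
    rw [← probReal_compl_eq_one_sub hmb, ← probReal_compl_eq_one_sub hma]
    have hlow : Real.exp (-(Fintype.card T * Real.exp (-(β * δ)))) * (stdG ι).real Dᶜ
        ≤ ∫ x, gumbel β (Real.exp (-(β * r))) (fun t => b t ⬝ᵥ x) ∂(stdG ι) := by
      rw [mul_comm, ← smul_eq_mul, ← integral_indicator_const _ hmb.compl]
      refine integral_mono ((integrable_const _).indicator hmb.compl) (hgi _ _ hw _) fun x => ?_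
      by_cases hx : x ∈ Dᶜ
      · rw [Set.indicator_of_mem hx]
        unfold gumbel
        rw [Real.exp_le_exp, neg_le_neg_iff, ← nsmul_eq_mul]
        refine Finset.sum_le_card_nsmul _ _ _ fun t _ => ?_
        have : b t ⬝ᵥ x ≤ r - δ := not_lt.1 fun hlt => hx ⟨t, hlt⟩
        rw [← Real.exp_add, Real.exp_le_exp]
        nlinarith
      · rw [Set.indicator_of_notMem hx]
        exact (hg0 _ _ _).le
    have hup : ∫ x, gumbel β (Real.exp (-(β * r))) (fun t => a t ⬝ᵥ x) ∂(stdG ι)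
        ≤ (stdG ι).real Aᶜ + Real.exp (-Real.exp (β * δ)) := by
      have h2 : (stdG ι).real Aᶜ + Real.exp (-Real.exp (β * δ))
          = ∫ x, (Aᶜ.indicator (fun _ => (1 : ℝ)) x + Real.exp (-Real.exp (β * δ))) ∂(stdG ι) := by
        rw [integral_add ((integrable_const _).indicator hma.compl) (integrable_const _),
          integral_indicator_const _ hma.compl]
        simp
      rw [h2]
      refine integral_mono (hgi _ _ hw _)
        (((integrable_const _).indicator hma.compl).add (integrable_const _)) fun x => ?_
      by_cases hx : x ∈ Aᶜ
      · simp only [Set.indicator_of_mem hx]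
        linarith [hg1 β _ hw (fun t => a t ⬝ᵥ x), Real.exp_pos (-Real.exp (β * δ))]
      · simp only [Set.indicator_of_notMem hx, zero_add]
        obtain ⟨t, ht⟩ := Set.notMem_compl_iff.1 hx
        unfold gumbel
        rw [Real.exp_le_exp, neg_le_neg_iff]
        refine le_trans ?_ (Finset.single_le_sum (f := fun t =>
          Real.exp (-(β * r)) * Real.exp (β * (a t ⬝ᵥ x))) (fun t _ => by positivity)
          (Finset.mem_univ t))
        rw [← Real.exp_add, Real.exp_le_exp]
        nlinarith
    linarith
  have hbd : Tendsto (fun β : ℝ => β * δ) atTop atTop := tendsto_id.atTop_mul_const hδ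
  have l1 : Tendsto (fun β : ℝ =>
      Real.exp (-(Fintype.card T * Real.exp (-(β * δ)))) * (1 - (stdG ι).real D)) atTop
      (𝓝 (Real.exp (-(Fintype.card T * 0)) * (1 - (stdG ι).real D))) :=
    (((Real.continuous_exp.tendsto _).comp ((Real.tendsto_exp_neg_atTop_nhds_zero.comp
      hbd).const_mul _).neg)).mul_const _
  have l2 : Tendsto (fun β : ℝ => (1 - (stdG ι).real A) + Real.exp (-Real.exp (β * δ))) atTop
      (𝓝 ((1 - (stdG ι).real A) + 0)) :=
    (Real.tendsto_exp_neg_atTop_nhds_zero.comp (Real.tendsto_exp_atTop.comp hbd)).const_add _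
  have h3 := le_of_tendsto_of_tendsto l1 l2 ((eventually_gt_atTop 0).mono key)
  simp only [mul_zero, neg_zero, Real.exp_zero, one_mul, add_zero] at h3
  linarith

/-- The matrix with prescribed entries. -/
def toMat {m q : ℕ} (x : Fin m × Fin q → ℝ) : Matrix (Fin m) (Fin q) ℝ := Matrix.of fun i j => x (i, j)

lemma toMat_matEntries {m q : ℕ} (W : Matrix (Fin m) (Fin q) ℝ) : toMat (matEntries W) = W := rfl

lemma dot_le_sqrt {ι : Type*} [Fintype ι] {g u : ι → ℝ} (hu : u ⬝ᵥ u = 1) :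
    u ⬝ᵥ g ≤ √(g ⬝ᵥ g) := by
  apply Real.le_sqrt_of_sq_le
  have := Finset.sum_mul_sq_le_sq_mul_sq Finset.univ u g
  have h1 : ∑ i, u i ^ 2 = 1 := by rw [← hu]; simp [dotProduct, sq]
  have h2 : ∑ i, g i ^ 2 = g ⬝ᵥ g := by simp [dotProduct, sq]
  rw [h1, h2, one_mul] at this
  exact this

lemma dot_sub_nonneg {ι : Type*} [Fintype ι] {u v : ι → ℝ} (hu : u ⬝ᵥ u = 1) (hv : v ⬝ᵥ v = 1) :
    u ⬝ᵥ v ≤ 1 := by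
  have := dot_le_sqrt (g := v) hu
  rwa [hv, Real.sqrt_one] at this

/-- Index set of the Gaussian variables in the comparison: the entries of the matrix, one
auxiliary variable, and two Gaussian vectors. -/
abbrev CmpIdx (m q : ℕ) := (Fin m × Fin q) ⊕ (Unit ⊕ (Fin m ⊕ Fin q))

/-- Gordon–Chevet comparison for a finite family of pairs of unit vectors. -/
lemma bilin_tail_finite {m q N : ℕ} (u : Fin N → Fin m → ℝ) (v : Fin N → Fin q → ℝ)
    (hu : ∀ t, u t ⬝ᵥ u t = 1) (hv : ∀ t, v t ⬝ᵥ v t = 1) {r c₁ c₂ : ℝ} (hr : √c₁ + √c₂ < r) :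
    (stdG (Fin m × Fin q)).real {x | ∃ t, r ≤ u t ⬝ᵥ (toMat x *ᵥ v t)}
      ≤ 2 * ((stdG (Fin m)).real {g | c₁ ≤ g ⬝ᵥ g} + (stdG (Fin q)).real {h | c₂ ≤ h ⬝ᵥ h}) := by
  let a : Fin N → CmpIdx m q → ℝ := fun t => Sum.elim (fun ij => u t ij.1 * v t ij.2)
    (Sum.elim (fun _ => 1) (fun _ => 0))
  let b : Fin N → CmpIdx m q → ℝ := fun t => Sum.elim (fun _ => 0)
    (Sum.elim (fun _ => 0) (Sum.elim (u t) (v t)))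
  have hlin : ∀ c : CmpIdx m q → ℝ, Measurable fun x : CmpIdx m q → ℝ => c ⬝ᵥ x := fun c => by
    simp only [dotProduct]; fun_prop
  have hprod : ∀ (f f' : Fin m → ℝ) (g g' : Fin q → ℝ),
      ∑ ij : Fin m × Fin q, (f ij.1 * g ij.2) * (f' ij.1 * g' ij.2) = (f ⬝ᵥ f') * (g ⬝ᵥ g') := by
    intro f f' g g'
    rw [Fintype.sum_prod_type, dotProduct, dotProduct, Finset.sum_mul_sum]
    exact Finset.sum_congr rfl fun i _ => Finset.sum_congr rfl fun j _ => by ring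
  have haa : ∀ s t, a s ⬝ᵥ a t = (u s ⬝ᵥ u t) * (v s ⬝ᵥ v t) + 1 := by
    intro s t
    simp only [a, dotProduct, Fintype.sum_sum_type, Sum.elim_inl, Sum.elim_inr]
    rw [hprod]
    simp [dotProduct]
  have hbb : ∀ s t, b s ⬝ᵥ b t = u s ⬝ᵥ u t + v s ⬝ᵥ v t := by
    intro s t
    simp [b, dotProduct, Fintype.sum_sum_type, Sum.elim_inl, Sum.elim_inr]
  have hδ : 0 < (r - (√c₁ + √c₂)) / 2 := by linarith
  have h1 := slepian_prob a b (fun s t => by simp [a, b, dotProduct, Fintype.sum_sum_type])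
    (fun t => by rw [haa, hbb, hu, hv]; norm_num)
    (fun s t => by
      rw [haa, hbb]
      nlinarith [dot_sub_nonneg (hu s) (hu t), dot_sub_nonneg (hv s) (hv t)])
    (r := (r + (√c₁ + √c₂)) / 2) hδ
  have e1 : (r + (√c₁ + √c₂)) / 2 + (r - (√c₁ + √c₂)) / 2 = r := by ring
  have e2 : (r + (√c₁ + √c₂)) / 2 - (r - (√c₁ + √c₂)) / 2 = √c₁ + √c₂ := by ring
  rw [e1, e2] at h1
  -- restriction maps
  have hmapW := stdG_map_comp (ι := CmpIdx m q) (fun ij : Fin m × Fin q => Sum.inl ij) Sum.inl_injective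
  have hmapg := stdG_map_comp (ι := CmpIdx m q) (fun i : Fin m => Sum.inr (Sum.inr (Sum.inl i)))
    (fun i j h => by simpa using h)
  have hmaph := stdG_map_comp (ι := CmpIdx m q) (fun i : Fin q => Sum.inr (Sum.inr (Sum.inr i)))
    (fun i j h => by simpa using h)
  have hbil : ∀ t (x : Fin m × Fin q → ℝ), u t ⬝ᵥ (toMat x *ᵥ v t)
      = ∑ ij : Fin m × Fin q, u t ij.1 * v t ij.2 * x ij := by
    intro t x
    rw [Fintype.sum_prod_type]
    simp only [toMat, dotProduct, mulVec, Matrix.of_apply, Finset.mul_sum]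
    exact Finset.sum_congr rfl fun i _ => Finset.sum_congr rfl fun j _ => by ring
  have hmA : MeasurableSet {x : Fin m × Fin q → ℝ | ∃ t, r ≤ u t ⬝ᵥ (toMat x *ᵥ v t)} := by
    rw [Set.ofPred_exists]
    refine MeasurableSet.iUnion fun t => measurableSet_le measurable_const ?_
    simp only [hbil]; fun_prop
  have hmg : MeasurableSet {g : Fin m → ℝ | c₁ ≤ g ⬝ᵥ g} :=
    measurableSet_le measurable_const (by simp only [dotProduct]; fun_prop)
  have hmh : MeasurableSet {g : Fin q → ℝ | c₂ ≤ g ⬝ᵥ g} :=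
    measurableSet_le measurable_const (by simp only [dotProduct]; fun_prop)
  -- upper bound for the comparison process
  have hD : (stdG (CmpIdx m q)).real {x | ∃ t, √c₁ + √c₂ < b t ⬝ᵥ x}
      ≤ (stdG (Fin m)).real {g | c₁ ≤ g ⬝ᵥ g} + (stdG (Fin q)).real {h | c₂ ≤ h ⬝ᵥ h} := by
    rw [← hmapg, ← hmaph, map_measureReal_apply (by fun_prop) hmg,
      map_measureReal_apply (by fun_prop) hmh]
    refine le_trans (measureReal_mono ?_) (measureReal_union_le _ _)
    rintro x ⟨t, ht⟩
    by_contra hcon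
    rw [Set.mem_union, not_or] at hcon
    have h3 : (fun i : Fin m => x (Sum.inr (Sum.inr (Sum.inl i)))) ⬝ᵥ
      (fun i : Fin m => x (Sum.inr (Sum.inr (Sum.inl i)))) < c₁ := not_le.1 hcon.1
    have h4 : (fun i : Fin q => x (Sum.inr (Sum.inr (Sum.inr i)))) ⬝ᵥ
      (fun i : Fin q => x (Sum.inr (Sum.inr (Sum.inr i)))) < c₂ := not_le.1 hcon.2
    have h5 : b t ⬝ᵥ x = u t ⬝ᵥ (fun i : Fin m => x (Sum.inr (Sum.inr (Sum.inl i))))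
        + v t ⬝ᵥ (fun i : Fin q => x (Sum.inr (Sum.inr (Sum.inr i)))) := by
      simp [b, dotProduct, Fintype.sum_sum_type]
    rw [h5] at ht
    have h6 := (dot_le_sqrt (hu t) (g := fun i : Fin m => x (Sum.inr (Sum.inr (Sum.inl i))))).trans
      (Real.sqrt_le_sqrt h3.le)
    have h7 := (dot_le_sqrt (hv t) (g := fun i : Fin q => x (Sum.inr (Sum.inr (Sum.inr i))))).trans
      (Real.sqrt_le_sqrt h4.le)
    linarith
  -- sign symmetry of the auxiliary variable
  set Aset := {x : CmpIdx m q → ℝ | ∃ t, r ≤ u t ⬝ᵥ (toMat (fun ij => x (Sum.inl ij)) *ᵥ v t)} with hAset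
  have hAm : MeasurableSet Aset :=
    hmA.preimage (f := fun (x : CmpIdx m q → ℝ) (ij : Fin m × Fin q) => x (Sum.inl ij)) (by fun_prop)
  let ξ : CmpIdx m q := Sum.inr (Sum.inl ())
  have hAx : ∀ t (x : CmpIdx m q → ℝ), a t ⬝ᵥ x
      = u t ⬝ᵥ (toMat (fun ij => x (Sum.inl ij)) *ᵥ v t) + x ξ := by
    intro t x
    rw [hbil]
    simp [a, ξ, dotProduct, Fintype.sum_sum_type]
  let sg : CmpIdx m q → ℝ := fun i => if i = ξ then -1 else 1
  have hflip := stdG_map_mulVec (Matrix.diagonal sg) (by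
    rw [diagonal_transpose, diagonal_mul_diagonal, ← diagonal_one]
    congr 1; ext i; simp only [sg]; split_ifs <;> norm_num)
  have hfl : (stdG (CmpIdx m q)).real (Aset ∩ {x | x ξ ≤ 0}) = (stdG (CmpIdx m q)).real (Aset ∩ {x | 0 ≤ x ξ}) := by
    have hm0 : MeasurableSet (Aset ∩ {x | 0 ≤ x ξ}) :=
      hAm.inter (measurableSet_le measurable_const (by fun_prop))
    conv_rhs => rw [← hflip]
    rw [map_measureReal_apply (measurable_mulVec_const _) hm0]
    congr 1
    ext x
    have : ∀ ij : Fin m × Fin q, (diagonal sg *ᵥ x) (Sum.inl ij) = x (Sum.inl ij) := by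
      intro ij; rw [mulVec_diagonal]; simp [sg, ξ]
    have h8 : (diagonal sg *ᵥ x) ξ = - x ξ := by rw [mulVec_diagonal]; simp [sg]
    simp only [Set.mem_inter_iff, Set.mem_preimage, hAset]
    refine and_congr ?_ ?_
    · show (∃ t, r ≤ u t ⬝ᵥ (toMat (fun ij => x (Sum.inl ij)) *ᵥ v t)) ↔
        ∃ t, r ≤ u t ⬝ᵥ (toMat (fun ij => (diagonal sg *ᵥ x) (Sum.inl ij)) *ᵥ v t)
      simp only [this]
    · show x ξ ≤ 0 ↔ 0 ≤ (diagonal sg *ᵥ x) ξ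
      rw [h8]; constructor <;> intro h <;> linarith
  have hfin : (stdG (Fin m × Fin q)).real {x | ∃ t, r ≤ u t ⬝ᵥ (toMat x *ᵥ v t)}
      = (stdG (CmpIdx m q)).real Aset := by
    rw [← hmapW, map_measureReal_apply (by fun_prop) hmA]
    rfl
  rw [hfin]
  have hun : (stdG (CmpIdx m q)).real Aset
      ≤ (stdG (CmpIdx m q)).real (Aset ∩ {x | x ξ ≤ 0}) + (stdG (CmpIdx m q)).real (Aset ∩ {x | 0 ≤ x ξ}) := by
    refine le_trans (measureReal_mono fun x hx => ?_) (measureReal_union_le _ _)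
    rcases le_total (x ξ) 0 with h | h
    · exact Or.inl ⟨hx, h⟩
    · exact Or.inr ⟨hx, h⟩
  have hsub : (stdG (CmpIdx m q)).real (Aset ∩ {x | 0 ≤ x ξ}) ≤ (stdG (CmpIdx m q)).real {x | ∃ t, r ≤ a t ⬝ᵥ x} := by
    refine measureReal_mono ?_
    rintro x ⟨⟨t, ht⟩, hx⟩
    refine ⟨t, ?_⟩
    rw [hAx]
    have : 0 ≤ x ξ := hx
    linarith
  linarith

/-! ### The largest eigenvalue: almost sure bound -/

/-- Tail bound for the operator norm of a Gaussian matrix. -/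
lemma opnorm_tail {m q : ℕ} {r c₁ c₂ : ℝ} (hr : √c₁ + √c₂ < r) :
    (stdG (Fin m × Fin q)) {x | ¬ ∀ y, (toMat x *ᵥ y) ⬝ᵥ (toMat x *ᵥ y) ≤ r ^ 2 * (y ⬝ᵥ y)}
      ≤ 2 * ((stdG (Fin m)) {g | c₁ ≤ g ⬝ᵥ g} + (stdG (Fin q)) {h | c₂ ≤ h ⬝ᵥ h}) := by
  have hr0 : 0 < r := lt_of_le_of_lt (by positivity) hr
  set D := {p : (Fin m → ℝ) × (Fin q → ℝ) // p.1 ⬝ᵥ p.1 = 1 ∧ p.2 ⬝ᵥ p.2 = 1}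
  have hnn : ∀ {n : ℕ} (y : Fin n → ℝ), 0 ≤ y ⬝ᵥ y := fun y =>
    Finset.sum_nonneg fun i _ => mul_self_nonneg _
  -- it is enough to bound the bilinear form on pairs of unit vectors
  have hred : ∀ x : Fin m × Fin q → ℝ, (∀ p : D, p.1.1 ⬝ᵥ (toMat x *ᵥ p.1.2) ≤ r) →
      ∀ y, (toMat x *ᵥ y) ⬝ᵥ (toMat x *ᵥ y) ≤ r ^ 2 * (y ⬝ᵥ y) := by
    intro x hx y
    set w := toMat x *ᵥ y with hw
    rcases (hnn w).eq_or_lt with h0 | h0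
    · rw [← h0]; exact mul_nonneg (sq_nonneg _) (hnn y)
    have hy0 : 0 < y ⬝ᵥ y := by
      rcases (hnn y).eq_or_lt with h1 | h1
      · have : y = 0 := dotProduct_self_eq_zero.1 h1.symm
        rw [hw, this, mulVec_zero] at h0
        simp at h0
      · exact h1
    have hsw := Real.sqrt_pos.2 h0
    have hsy := Real.sqrt_pos.2 hy0
    have := hx ⟨((√(w ⬝ᵥ w))⁻¹ • w, (√(y ⬝ᵥ y))⁻¹ • y), by
      constructor
      · rw [smul_dotProduct, dotProduct_smul, smul_eq_mul, smul_eq_mul]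
        nth_rw 3 [← Real.mul_self_sqrt h0.le]
        field_simp
      · rw [smul_dotProduct, dotProduct_smul, smul_eq_mul, smul_eq_mul]
        nth_rw 3 [← Real.mul_self_sqrt hy0.le]
        field_simp⟩
    simp only [mulVec_smul, smul_dotProduct, dotProduct_smul, smul_eq_mul, ← hw] at this
    have h2 : w ⬝ᵥ w ≤ r * √(w ⬝ᵥ w) * √(y ⬝ᵥ y) := by
      rw [inv_mul_le_iff₀ hsy, inv_mul_le_iff₀ hsw] at this
      linarith
    have h3 : √(w ⬝ᵥ w) ≤ r * √(y ⬝ᵥ y) := by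
      have h4 : √(w ⬝ᵥ w) * √(w ⬝ᵥ w) ≤ √(w ⬝ᵥ w) * (r * √(y ⬝ᵥ y)) := by
        rw [Real.mul_self_sqrt h0.le]; linarith
      exact le_of_mul_le_mul_left h4 hsw
    calc w ⬝ᵥ w = √(w ⬝ᵥ w) ^ 2 := (Real.sq_sqrt h0.le).symm
      _ ≤ (r * √(y ⬝ᵥ y)) ^ 2 := by gcongr
      _ = r ^ 2 * (y ⬝ᵥ y) := by rw [mul_pow, Real.sq_sqrt hy0.le]
  rcases isEmpty_or_nonempty D with hD | hD
  · have : {x : Fin m × Fin q → ℝ |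
        ¬ ∀ y, (toMat x *ᵥ y) ⬝ᵥ (toMat x *ᵥ y) ≤ r ^ 2 * (y ⬝ᵥ y)} = ∅ := by
      ext x
      exact iff_of_false (fun h => h (hred x fun p => hD.elim p)) id
    rw [this]; simp
  set d := TopologicalSpace.denseSeq D
  have hd : DenseRange d := TopologicalSpace.denseRange_denseSeq D
  have hsub : {x : Fin m × Fin q → ℝ |
        ¬ ∀ y, (toMat x *ᵥ y) ⬝ᵥ (toMat x *ᵥ y) ≤ r ^ 2 * (y ⬝ᵥ y)} ⊆
      ⋃ N : ℕ, {x | ∃ t : Fin N, r ≤ (d t).1.1 ⬝ᵥ (toMat x *ᵥ (d t).1.2)} := by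
    intro x hx
    by_contra hcon
    refine hx (hred x ?_)
    have hcl : IsClosed {p : D | p.1.1 ⬝ᵥ (toMat x *ᵥ p.1.2) ≤ r} := by
      refine isClosed_le ?_ continuous_const
      simp only [dotProduct, mulVec]
      fun_prop
    intro p
    have : p ∈ closure (Set.range d) := hd p
    refine (hcl.closure_subset_iff.2 ?_) this
    rintro _ ⟨t, rfl⟩
    by_contra hlt
    refine hcon (Set.mem_iUnion.2 ⟨t + 1, ⟨⟨t, Nat.lt_succ_self t⟩, ?_⟩⟩)
    exact (not_le.1 hlt).le
  refine (measure_mono hsub).trans ?_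
  rw [Monotone.measure_iUnion]
  · refine iSup_le fun N => ?_
    have h := bilin_tail_finite (fun t : Fin N => (d t).1.1) (fun t : Fin N => (d t).1.2)
      (fun t => (d t).2.1) (fun t => (d t).2.2) hr
    rw [← ENNReal.toReal_le_toReal (measure_ne_top _ _) (by finiteness)]
    refine h.trans_eq ?_
    rw [ENNReal.toReal_mul, ENNReal.toReal_add (measure_ne_top _ _) (measure_ne_top _ _)]
    rfl
  · rintro N N' hNN x ⟨t, ht⟩
    exact ⟨⟨t, t.2.trans_le hNN⟩, ht⟩

/-- Chi-square concentration. -/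
lemma chisq_tail {Ω : Type*} [MeasurableSpace Ω] {P : Measure Ω} [IsProbabilityMeasure P]
    {q n : ℕ} {X : Ω → Fin q → ℝ} (hX : P.map X = stdG (Fin q)) {ε : ℝ} (hε : 0 < ε) (hε1 : ε ≤ 1)
    (hq : q ≤ 2 * n) :
    P {ω | ε * n ≤ |X ω ⬝ᵥ X ω - q|} ≤ ENNReal.ofReal (2 * Real.exp (-(ε ^ 2 / 32 * n))) := by
  have h := quad_concentration (P := P) (Y := fun _ => ()) hX (by fun_prop)
    (indepFun_const_right X ()) (fun _ => (1 : Matrix (Fin q) (Fin q) ℝ)) (s := ε / 16) (M := 1)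
    (r := ε * n) (fun i j => by fun_prop) (fun _ => isHermitian_one) (by positivity)
    (fun _ x => by
      rw [one_mulVec, one_mul, abs_of_nonneg]
      exact Finset.sum_nonneg fun i _ => mul_self_nonneg _) (by linarith)
  simp only [one_mulVec, trace_one, Fintype.card_fin] at h
  refine h.trans (ENNReal.ofReal_le_ofReal ?_)
  gcongr
  have : (q : ℝ) ≤ 2 * n := by exact_mod_cast hq
  have hs : 0 ≤ (ε / 16) ^ 2 := sq_nonneg _
  nlinarith [mul_le_mul_of_nonneg_left this hs]

lemma summable_exp_neg {c : ℝ} (hc : 0 < c) : Summable fun n : ℕ => Real.exp (-(c * n)) := by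
  have := Real.summable_exp_nat_mul_iff.2 (show -c < 0 by linarith)
  refine this.congr fun n => by ring_nf

lemma ae_eventually_of_exp_bound {Ω : Type*} [MeasurableSpace Ω] {P : Measure Ω}
    {s : ℕ → Set Ω} {C c : ℝ} (hc : 0 < c) (N : ℕ)
    (hs : ∀ n ≥ N, P (s n) ≤ ENNReal.ofReal (C * Real.exp (-(c * n)))) :
    ∀ᵐ ω ∂P, ∀ᶠ n in atTop, ω ∉ s n := by
  have hsum : ∑' n, P (if N ≤ n then s n else ∅) ≠ ⊤ := by
    refine ne_top_of_le_ne_top ?_ (ENNReal.tsum_le_tsum (g := fun n : ℕ =>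
      ENNReal.ofReal (|C| * Real.exp (-(c * n)))) fun n => ?_)
    · rw [← ENNReal.ofReal_tsum_of_nonneg (fun n => by positivity)
        ((summable_exp_neg hc).mul_left _)]
      exact ENNReal.ofReal_ne_top
    · split_ifs with h
      · refine (hs n h).trans (ENNReal.ofReal_le_ofReal ?_)
        gcongr; exact le_abs_self C
      · simp
  filter_upwards [ae_eventually_notMem hsum] with ω hω
  filter_upwards [hω, eventually_ge_atTop N] with n hn hN
  rwa [if_pos hN] at hn

/-- Almost surely the largest eigenvalue of `WᵀW / n` is eventually below any level beyond the
upper edge `(1 + √c)²`, where `c` is the limiting ratio of columns to `n`. -/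
lemma ae_opnorm_le {Ω : Type*} [MeasurableSpace Ω] {P : Measure Ω} [IsProbabilityMeasure P]
    {m q : ℕ → ℕ} {W : ∀ n, Ω → Matrix (Fin (m n)) (Fin (q n)) ℝ} {c u₀ : ℝ} (hc0 : 0 ≤ c)
    (hc1 : c ≤ 1)
    (hW : ∀ n, P.map (fun ω => matEntries (W n ω)) = stdG (Fin (m n) × Fin (q n)))
    (hm : ∀ n, m n ≤ n) (hq : Tendsto (fun n => (q n : ℝ) / n) atTop (𝓝 c))
    (hu : (1 + √c) ^ 2 < u₀) :
    ∀ᵐ ω ∂P, ∀ᶠ n in atTop, ∀ y, (W n ω *ᵥ y) ⬝ᵥ (W n ω *ᵥ y) ≤ n * u₀ * (y ⬝ᵥ y) := by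
  obtain ⟨ε, hε0, hε1, hε⟩ : ∃ ε : ℝ, 0 < ε ∧ ε ≤ 1 ∧ √(1 + ε) + √(c + 2 * ε) < √u₀ := by
    have h1 : Tendsto (fun ε : ℝ => √(1 + ε) + √(c + 2 * ε)) (𝓝[>] 0) (𝓝 (√(1 + 0) + √(c + 2 * 0))) :=
      (Continuous.tendsto (by fun_prop) 0).mono_left nhdsWithin_le_nhds
    have h2 : √(1 + 0) + √(c + 2 * 0) < √u₀ := by
      rw [add_zero, Real.sqrt_one, mul_zero, add_zero]
      exact Real.lt_sqrt_of_sq_lt hu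
    obtain ⟨ε, h3, h4, h5⟩ := ((h1.eventually (gt_mem_nhds h2)).and
      ((eventually_mem_nhdsWithin).and
        (mem_nhdsWithin_of_mem_nhds (Iic_mem_nhds (zero_lt_one' ℝ))))).exists
    exact ⟨ε, h4, h5, h3⟩
  obtain ⟨N, hN⟩ : ∃ N : ℕ, ∀ n ≥ N, (q n : ℝ) ≤ (c + ε) * n := by
    have := hq.eventually (gt_mem_nhds (show c < c + ε by linarith))
    obtain ⟨N, hN⟩ := eventually_atTop.1 (this.and (eventually_gt_atTop 0))
    refine ⟨N, fun n hn => ?_⟩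
    have h0 : (0 : ℝ) < n := by exact_mod_cast (hN n hn).2
    exact ((div_lt_iff₀ h0).1 (hN n hn).1).le
  have hbad := ae_eventually_of_exp_bound (P := P)
    (s := fun n => {ω | ¬ ∀ y, (W n ω *ᵥ y) ⬝ᵥ (W n ω *ᵥ y) ≤ n * u₀ * (y ⬝ᵥ y)})
    (C := 8) (c := ε ^ 2 / 32) (by positivity) (N + 1) (fun n hn => by
      have hn0 : (0 : ℝ) < n := by exact_mod_cast (by omega : 0 < n)
      have hu0 : 0 ≤ u₀ := le_trans (sq_nonneg _) hu.le
      have hlt : √(m n + ε * n) + √(q n + ε * n) < √(n * u₀) := by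
        have e1 : √(m n + ε * n) ≤ √n * √(1 + ε) := by
          rw [← Real.sqrt_mul hn0.le]
          apply Real.sqrt_le_sqrt
          have : (m n : ℝ) ≤ n := by exact_mod_cast hm n
          linarith
        have e2 : √(q n + ε * n) ≤ √n * √(c + 2 * ε) := by
          rw [← Real.sqrt_mul hn0.le]
          apply Real.sqrt_le_sqrt
          have := hN n (by omega)
          linarith
        rw [Real.sqrt_mul hn0.le]
        have := mul_lt_mul_of_pos_left hε (Real.sqrt_pos.2 hn0)
        linarith
      have hrel : {ω | ¬ ∀ y, (W n ω *ᵥ y) ⬝ᵥ (W n ω *ᵥ y) ≤ n * u₀ * (y ⬝ᵥ y)}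
          = (fun ω => matEntries (W n ω)) ⁻¹' {x | ¬ ∀ y, (toMat x *ᵥ y) ⬝ᵥ (toMat x *ᵥ y)
            ≤ √(n * u₀) ^ 2 * (y ⬝ᵥ y)} := by
        rw [Real.sq_sqrt (by positivity)]; rfl
      have hae : AEMeasurable (fun ω => matEntries (W n ω)) P :=
        AEMeasurable.of_map_ne_zero (by rw [hW]; exact NeZero.ne _)
      rw [hrel]
      refine (Measure.le_map_apply hae _).trans ?_
      rw [hW]
      refine (opnorm_tail hlt).trans ?_
      have hq2 : q n ≤ 2 * n := by
        have : (q n : ℝ) ≤ 2 * n := (hN n (by omega)).trans (by nlinarith)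
        exact_mod_cast this
      have t1 := chisq_tail (P := stdG (Fin (m n))) (X := id) (n := n) (by simp) hε0 hε1
        ((hm n).trans (by omega))
      have t2 := chisq_tail (P := stdG (Fin (q n))) (X := id) (n := n) (by simp) hε0 hε1 hq2
      have hsubs : ∀ d : ℕ, {g : Fin d → ℝ | d + ε * n ≤ g ⬝ᵥ g} ⊆
          {g | ε * n ≤ |id g ⬝ᵥ id g - d|} := fun d g hg => by
        have h1 : d + ε * n ≤ g ⬝ᵥ g := hg
        show ε * n ≤ |g ⬝ᵥ g - d|
        exact le_trans (by linarith) (le_abs_self _)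
      calc _ ≤ 2 * (ENNReal.ofReal (2 * Real.exp (-(ε ^ 2 / 32 * n)))
              + ENNReal.ofReal (2 * Real.exp (-(ε ^ 2 / 32 * n)))) := by
            gcongr
            · exact (measure_mono (hsubs _)).trans t1
            · exact (measure_mono (hsubs _)).trans t2
        _ = _ := by
            rw [← ENNReal.ofReal_add (by positivity) (by positivity),
              show (2 : ENNReal) = ENNReal.ofReal 2 by simp,
              ← ENNReal.ofReal_mul (by norm_num)]
            congr 1; ring)
  filter_upwards [hbad] with ω hω
  filter_upwards [hω] with n hn
  exact not_not.1 hn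

/-! ### Leave-one-out identities for the resolvent -/

section Resolvent

variable {q : ℕ}

lemma dot_self_nn {ι : Type*} [Fintype ι] (y : ι → ℝ) : 0 ≤ y ⬝ᵥ y :=
  Finset.sum_nonneg fun i _ => mul_self_nonneg _

lemma dot_sq_le {ι : Type*} [Fintype ι] (x y : ι → ℝ) : (x ⬝ᵥ y) ^ 2 ≤ (x ⬝ᵥ x) * (y ⬝ᵥ y) := by
  have := Finset.sum_mul_sq_le_sq_mul_sq Finset.univ x y
  have h1 : ∀ g : ι → ℝ, ∑ i, g i ^ 2 = g ⬝ᵥ g := fun g => by simp [dotProduct, sq]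
  rwa [h1, h1] at this

/-- A matrix whose quadratic form is bounded below by `d > 0` is invertible. -/
lemma isUnit_of_coercive {M : Matrix (Fin q) (Fin q) ℝ} {d : ℝ} (hd : 0 < d)
    (hM : ∀ y, d * (y ⬝ᵥ y) ≤ y ⬝ᵥ (M *ᵥ y)) : IsUnit M.det := by
  rw [← Matrix.isUnit_iff_isUnit_det, ← Matrix.mulVec_injective_iff_isUnit]
  intro x y hxy
  have h0 : M *ᵥ (x - y) = 0 := by rw [mulVec_sub, sub_eq_zero]; exact hxy
  have h1 := hM (x - y)
  rw [h0, dotProduct_zero] at h1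
  have h2 : (x - y) ⬝ᵥ (x - y) = 0 := le_antisymm (by nlinarith [dot_self_nn (x - y)]) (dot_self_nn _)
  exact sub_eq_zero.1 (dotProduct_self_eq_zero.1 h2)

lemma inv_mulVec_bound {M : Matrix (Fin q) (Fin q) ℝ} {d : ℝ} (hd : 0 < d)
    (hM : ∀ y, d * (y ⬝ᵥ y) ≤ y ⬝ᵥ (M *ᵥ y)) (x : Fin q → ℝ) :
    d * ((M⁻¹ *ᵥ x) ⬝ᵥ (M⁻¹ *ᵥ x)) ≤ x ⬝ᵥ (M⁻¹ *ᵥ x) := by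
  have hu := isUnit_of_coercive hd hM
  have := hM (M⁻¹ *ᵥ x)
  rwa [mulVec_mulVec, Matrix.mul_nonsing_inv _ hu, one_mulVec, dotProduct_comm _ x] at this

lemma inv_quad_nonneg {M : Matrix (Fin q) (Fin q) ℝ} {d : ℝ} (hd : 0 < d)
    (hM : ∀ y, d * (y ⬝ᵥ y) ≤ y ⬝ᵥ (M *ᵥ y)) (x : Fin q → ℝ) : 0 ≤ x ⬝ᵥ (M⁻¹ *ᵥ x) :=
  le_trans (mul_nonneg hd.le (dot_self_nn _)) (inv_mulVec_bound hd hM x)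

lemma inv_quad_le {M : Matrix (Fin q) (Fin q) ℝ} {d : ℝ} (hd : 0 < d)
    (hM : ∀ y, d * (y ⬝ᵥ y) ≤ y ⬝ᵥ (M *ᵥ y)) (x : Fin q → ℝ) :
    x ⬝ᵥ (M⁻¹ *ᵥ x) ≤ d⁻¹ * (x ⬝ᵥ x) := by
  have h1 := inv_mulVec_bound hd hM x
  have h2 := dot_sq_le x (M⁻¹ *ᵥ x)
  have h0 := inv_quad_nonneg hd hM x
  set a := x ⬝ᵥ (M⁻¹ *ᵥ x)
  set b := (M⁻¹ *ᵥ x) ⬝ᵥ (M⁻¹ *ᵥ x)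
  rw [inv_mul_eq_div, le_div_iff₀ hd]
  rcases h0.eq_or_lt with h | h
  · rw [← h, zero_mul]; exact dot_self_nn x
  · have h3 : (x ⬝ᵥ x) * (d * b) ≤ (x ⬝ᵥ x) * a := mul_le_mul_of_nonneg_left h1 (dot_self_nn x)
    have h4 : a * (a * d) ≤ a * (x ⬝ᵥ x) := by nlinarith
    exact le_of_mul_le_mul_left h4 h

end Resolvent

/-- The matrix `z - WᵀW / n`. -/
def shiftedGram {m q : ℕ} (n : ℕ) (z : ℝ) (W : Matrix (Fin m) (Fin q) ℝ) :
    Matrix (Fin q) (Fin q) ℝ := z • 1 - (1 / (n : ℝ)) • (Wᵀ * W)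

/-- The bound `WᵀW ≤ n u`. -/
def GramLe {m q : ℕ} (n : ℕ) (u : ℝ) (W : Matrix (Fin m) (Fin q) ℝ) : Prop :=
  ∀ y, (W *ᵥ y) ⬝ᵥ (W *ᵥ y) ≤ n * u * (y ⬝ᵥ y)

section Loo

variable {m q n : ℕ} {z u₀ : ℝ} {W : Matrix (Fin m) (Fin q) ℝ}

lemma shiftedGram_quad (y : Fin q → ℝ) :
    y ⬝ᵥ (shiftedGram n z W *ᵥ y) = z * (y ⬝ᵥ y) - (1 / (n : ℝ)) * ((W *ᵥ y) ⬝ᵥ (W *ᵥ y)) := by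
  unfold shiftedGram
  rw [sub_mulVec, dotProduct_sub, smul_mulVec, smul_mulVec, one_mulVec, dotProduct_smul,
    dotProduct_smul, ← mulVec_mulVec, dotProduct_mulVec y Wᵀ, vecMul_transpose, smul_eq_mul,
    smul_eq_mul]

lemma shiftedGram_coercive (hn : 0 < n) (hW : GramLe n u₀ W) (y : Fin q → ℝ) :
    (z - u₀) * (y ⬝ᵥ y) ≤ y ⬝ᵥ (shiftedGram n z W *ᵥ y) := by
  have hn' : (0 : ℝ) < n := by exact_mod_cast hn
  rw [shiftedGram_quad]
  have := mul_le_mul_of_nonneg_left (hW y) (one_div_nonneg.2 hn'.le)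
  have e : 1 / (n : ℝ) * (n * u₀ * (y ⬝ᵥ y)) = u₀ * (y ⬝ᵥ y) := by field_simp
  rw [e] at this
  linarith

lemma shiftedGram_isHermitian : (shiftedGram n z W).IsHermitian := by
  unfold shiftedGram Matrix.IsHermitian
  simp [conjTranspose_eq_transpose_of_trivial, transpose_sub, transpose_smul, transpose_mul]

lemma shiftedGram_inv_transpose : ((shiftedGram n z W)⁻¹)ᵀ = (shiftedGram n z W)⁻¹ := by
  rw [transpose_nonsing_inv]
  congr 1
  have := shiftedGram_isHermitian (n := n) (z := z) (W := W)
  rwa [Matrix.IsHermitian, conjTranspose_eq_transpose_of_trivial] at this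

/-- `W` with its `i`-th row replaced by zero. -/
def zeroRow (i : Fin m) (W : Matrix (Fin m) (Fin q) ℝ) : Matrix (Fin m) (Fin q) ℝ :=
  Matrix.of fun a b => if a = i then 0 else W a b

lemma gram_zeroRow (i : Fin m) :
    Wᵀ * W = (zeroRow i W)ᵀ * zeroRow i W + vecMulVec (W i) (W i) := by
  ext a b
  simp only [mul_apply, transpose_apply, Matrix.add_apply, vecMulVec_apply]
  rw [← Finset.add_sum_erase _ _ (Finset.mem_univ i), ← Finset.add_sum_erase _
    (fun x => zeroRow i W x a * zeroRow i W x b) (Finset.mem_univ i)]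
  have h1 : zeroRow i W i a * zeroRow i W i b = 0 := by simp [zeroRow]
  rw [h1, zero_add, add_comm]
  congr 1
  refine Finset.sum_congr rfl fun x hx => ?_
  simp [zeroRow, Finset.ne_of_mem_erase hx]

lemma quad_gram (y : Fin q → ℝ) (V : Matrix (Fin m) (Fin q) ℝ) :
    y ⬝ᵥ ((Vᵀ * V) *ᵥ y) = (V *ᵥ y) ⬝ᵥ (V *ᵥ y) := by
  rw [← mulVec_mulVec, dotProduct_mulVec y Vᵀ, vecMul_transpose]

lemma zeroRow_quad (i : Fin m) (y : Fin q → ℝ) :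
    (W *ᵥ y) ⬝ᵥ (W *ᵥ y) = (zeroRow i W *ᵥ y) ⬝ᵥ (zeroRow i W *ᵥ y) + (W i ⬝ᵥ y) ^ 2 := by
  rw [← quad_gram, ← quad_gram, gram_zeroRow i, add_mulVec, dotProduct_add, vecMulVec_mulVec]
  simp [dotProduct_comm y, sq]

lemma GramLe.zeroRow (hW : GramLe n u₀ W) (i : Fin m) : GramLe n u₀ (zeroRow i W) := fun y => by
  have := hW y
  rw [zeroRow_quad i] at this
  nlinarith [sq_nonneg (W i ⬝ᵥ y)]

lemma shiftedGram_zeroRow (i : Fin m) :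
    shiftedGram n z (zeroRow i W) = shiftedGram n z W + (1 / (n : ℝ)) • vecMulVec (W i) (W i) := by
  unfold shiftedGram
  rw [gram_zeroRow (W := W) i, smul_add]
  abel

/-- `t_i = w_iᵀ R w_i / n` for the full resolvent `R`. -/
def looT (n : ℕ) (z : ℝ) (W : Matrix (Fin m) (Fin q) ℝ) (i : Fin m) : ℝ :=
  (1 / (n : ℝ)) * (W i ⬝ᵥ ((shiftedGram n z W)⁻¹ *ᵥ W i))

lemma looT_nonneg (hn : 0 < n) (hz : u₀ < z) (hW : GramLe n u₀ W) (i : Fin m) :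
    0 ≤ looT n z W i :=
  mul_nonneg (by positivity) (inv_quad_nonneg (sub_pos.2 hz) (shiftedGram_coercive hn hW) _)

lemma looT_le (hn : 0 < n) (hu : 0 ≤ u₀) (hz : u₀ < z) (hW : GramLe n u₀ W) (i : Fin m) :
    looT n z W i ≤ u₀ / (z - u₀) := by
  have hn' : (0 : ℝ) < n := by exact_mod_cast hn
  have hd := sub_pos.2 hz
  have h0 := looT_nonneg hn hz hW i
  have h1 := inv_mulVec_bound hd (shiftedGram_coercive hn hW) (W i)
  set y := (shiftedGram n z W)⁻¹ *ᵥ W i with hy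
  have e : W i ⬝ᵥ y = n * looT n z W i := by unfold looT; field_simp; rfl
  have h2 := hW y
  rw [zeroRow_quad i, e] at h2
  rw [e] at h1
  have h3 := dot_self_nn (zeroRow i W *ᵥ y)
  set t := looT n z W i
  rw [le_div_iff₀ hd]
  rcases h0.eq_or_lt with h | h
  · rw [← h, zero_mul]; exact hu
  have h4 : (n * t) ^ 2 * (z - u₀) ≤ n * u₀ * (n * t) := by
    have := mul_le_mul_of_nonneg_left h1 (show 0 ≤ n * u₀ by positivity)
    nlinarith
  have h5 : (n * (n * t)) * (t * (z - u₀)) ≤ (n * (n * t)) * u₀ := by nlinarith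
  exact le_of_mul_le_mul_left h5 (by positivity)

/-- The Sherman–Morrison relation `R_i w_i = R w_i / (1 + t_i)`. -/
lemma loo_mulVec (hn : 0 < n) (hz : u₀ < z) (hW : GramLe n u₀ W) (i : Fin m) :
    (shiftedGram n z (zeroRow i W))⁻¹ *ᵥ W i
      = (1 + looT n z W i)⁻¹ • ((shiftedGram n z W)⁻¹ *ᵥ W i) := by
  have hd := sub_pos.2 hz
  have hu := isUnit_of_coercive hd (shiftedGram_coercive hn hW)
  have hui := isUnit_of_coercive hd (shiftedGram_coercive hn (hW.zeroRow i))
  have h0 := looT_nonneg hn hz hW i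
  have h1 : shiftedGram n z (zeroRow i W) *ᵥ ((shiftedGram n z W)⁻¹ *ᵥ W i)
      = (1 + looT n z W i) • W i := by
    rw [shiftedGram_zeroRow, add_mulVec, mulVec_mulVec, mul_nonsing_inv _ hu, one_mulVec,
      smul_mulVec, vecMulVec_mulVec, add_smul, one_smul]
    congr 1
    ext j
    simp [looT]
    ring
  have h2 : (shiftedGram n z W)⁻¹ *ᵥ W i
      = (1 + looT n z W i) • ((shiftedGram n z (zeroRow i W))⁻¹ *ᵥ W i) := by
    rw [← mulVec_smul, ← h1, mulVec_mulVec, nonsing_inv_mul _ hui, one_mulVec]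
  rw [h2, smul_smul, inv_mul_cancel₀ (by linarith), one_smul]

lemma loo_quad (hn : 0 < n) (hz : u₀ < z) (hW : GramLe n u₀ W) (i : Fin m) :
    (1 / (n : ℝ)) * (W i ⬝ᵥ ((shiftedGram n z (zeroRow i W))⁻¹ *ᵥ W i))
      = (1 + looT n z W i)⁻¹ * looT n z W i := by
  rw [loo_mulVec hn hz hW, dotProduct_smul, smul_eq_mul]
  unfold looT
  ring

/-- Removing one row changes the trace of the resolvent by a bounded amount. -/
lemma loo_trace (hn : 0 < n) (hz : u₀ < z) (hW : GramLe n u₀ W) (i : Fin m) :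
    |(shiftedGram n z W)⁻¹.trace - (shiftedGram n z (zeroRow i W))⁻¹.trace| ≤ (z - u₀)⁻¹ := by
  have hn' : (0 : ℝ) < n := by exact_mod_cast hn
  have hd := sub_pos.2 hz
  have hu := isUnit_of_coercive hd (shiftedGram_coercive hn hW)
  have hui := isUnit_of_coercive hd (shiftedGram_coercive hn (hW.zeroRow i))
  have h0 := looT_nonneg hn hz hW i
  set R := (shiftedGram n z W)⁻¹ with hR
  set Ri := (shiftedGram n z (zeroRow i W))⁻¹ with hRi
  have h1 : R - Ri = Ri * ((1 / (n : ℝ)) • vecMulVec (W i) (W i)) * R := by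
    have e : (1 / (n : ℝ)) • vecMulVec (W i) (W i)
        = shiftedGram n z (zeroRow i W) - shiftedGram n z W := by
      rw [shiftedGram_zeroRow (W := W) i]; abel
    rw [e, mul_sub, sub_mul, hRi, nonsing_inv_mul _ hui, one_mul, mul_assoc, hR,
      mul_nonsing_inv _ hu, mul_one]
  have hRt : Rᵀ = R := shiftedGram_inv_transpose
  have h2 : R.trace - Ri.trace = (1 / (n : ℝ)) * (1 + looT n z W i)⁻¹
      * ((R *ᵥ W i) ⬝ᵥ (R *ᵥ W i)) := by
    rw [← trace_sub, h1, Matrix.mul_smul, Matrix.smul_mul, trace_smul, mul_vecMulVec, vecMulVec_mul,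
      trace_vecMulVec, loo_mulVec hn hz hW, smul_dotProduct, ← mulVec_transpose, hRt]
    simp only [smul_eq_mul]; ring
  have h3 := inv_mulVec_bound hd (shiftedGram_coercive hn hW) (W i)
  rw [← hR] at h3
  have e : W i ⬝ᵥ (R *ᵥ W i) = n * looT n z W i := by unfold looT; field_simp; rfl
  rw [e] at h3
  have h4 := dot_self_nn (R *ᵥ W i)
  rw [h2, abs_of_nonneg (by positivity)]
  set t := looT n z W i
  set b := (R *ᵥ W i) ⬝ᵥ (R *ᵥ W i)
  have : 1 / (n : ℝ) * (1 + t)⁻¹ * b = b / (n * (1 + t)) := by field_simp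
  rw [this, div_le_iff₀ (by positivity), inv_mul_eq_div, le_div_iff₀ hd]
  nlinarith

lemma loo_sum (hn : 0 < n) (hz : u₀ < z) (hW : GramLe n u₀ W) :
    ∑ i, looT n z W i = z * (shiftedGram n z W)⁻¹.trace - q := by
  have hd := sub_pos.2 hz
  have hu := isUnit_of_coercive hd (shiftedGram_coercive hn hW)
  set R := (shiftedGram n z W)⁻¹ with hR
  have h1 : ∑ i, looT n z W i = (((1 / (n : ℝ)) • (Wᵀ * W)) * R).trace := by
    unfold looT
    rw [← Finset.mul_sum, Matrix.smul_mul, trace_smul, smul_eq_mul]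
    congr 1
    rw [Matrix.mul_assoc, trace_mul_comm, ← hR, trace]
    refine Finset.sum_congr rfl fun i _ => ?_
    rw [diag_apply, mul_apply, dotProduct]
    simp only [mul_apply, transpose_apply, mulVec, dotProduct, Finset.sum_mul, Finset.mul_sum]
    rw [Finset.sum_comm]
    have hRt : Rᵀ = R := shiftedGram_inv_transpose
    refine Finset.sum_congr rfl fun a _ => Finset.sum_congr rfl fun b _ => ?_
    ring
  have h2 : (1 / (n : ℝ)) • (Wᵀ * W) = z • 1 - shiftedGram n z W := by unfold shiftedGram; abel
  rw [h1, h2, sub_mul, hR, mul_nonsing_inv _ hu, Matrix.smul_mul, one_mul, trace_sub, trace_smul,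
    trace_one, Fintype.card_fin, smul_eq_mul]

/-- Approximate self-consistent equation for the normalised trace of the resolvent. -/
lemma mp_equation (hn : 0 < n) (hmn : m ≤ n) (hu : 0 ≤ u₀) (hz : u₀ < z) (hW : GramLe n u₀ W)
    {ε : ℝ} (hε0 : 0 ≤ ε)
    (hε : ∀ i, |W i ⬝ᵥ ((shiftedGram n z (zeroRow i W))⁻¹ *ᵥ W i)
      - (shiftedGram n z (zeroRow i W))⁻¹.trace| ≤ ε * n) :
    |(z * ((shiftedGram n z W)⁻¹.trace / n) - q / n) * (1 - (shiftedGram n z W)⁻¹.trace / n)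
        - m / n * ((shiftedGram n z W)⁻¹.trace / n)|
      ≤ (ε + (z - u₀)⁻¹ / n) * (1 + u₀ / (z - u₀)) := by
  have hn' : (0 : ℝ) < n := by exact_mod_cast hn
  have hd := sub_pos.2 hz
  set S := (shiftedGram n z W)⁻¹.trace / n with hS
  have h1 : (z * S - q / n) * (1 - S) - m / n * S
      = (1 / (n : ℝ)) * ∑ i, (looT n z W i * (1 - S) - S) := by
    rw [Finset.sum_sub_distrib, ← Finset.sum_mul, loo_sum hn hz hW, Finset.sum_const,
      Finset.card_univ, Fintype.card_fin, nsmul_eq_mul, hS]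
    field_simp
  have h2 : ∀ i, |looT n z W i * (1 - S) - S| ≤ (ε + (z - u₀)⁻¹ / n) * (1 + u₀ / (z - u₀)) := by
    intro i
    have ht0 := looT_nonneg hn hz hW i
    have ht1 := looT_le hn hu hz hW i
    have hq := loo_quad hn hz hW i
    have htr := loo_trace hn hz hW i
    have he := hε i
    set t := looT n z W i
    set Q := W i ⬝ᵥ ((shiftedGram n z (zeroRow i W))⁻¹ *ᵥ W i)
    set tri := (shiftedGram n z (zeroRow i W))⁻¹.trace
    have e1 : t * (1 - S) - S = (1 / (n : ℝ) * Q - S) * (1 + t) := by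
      rw [hq]; field_simp; ring
    have e2 : 1 / (n : ℝ) * Q - S = (1 / n) * ((Q - tri) - ((shiftedGram n z W)⁻¹.trace - tri)) := by
      rw [hS]; field_simp; ring
    have e3 : |1 / (n : ℝ) * Q - S| ≤ ε + (z - u₀)⁻¹ / n := by
      rw [e2, abs_mul, abs_of_pos (by positivity : 0 < 1 / (n : ℝ))]
      have := (abs_sub (Q - tri) ((shiftedGram n z W)⁻¹.trace - tri)).trans (add_le_add he htr)
      refine (mul_le_mul_of_nonneg_left this (by positivity)).trans_eq ?_
      field_simp
    rw [e1, abs_mul, abs_of_nonneg (by linarith : 0 ≤ 1 + t)]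
    exact mul_le_mul e3 (by linarith) (by linarith) ((abs_nonneg _).trans e3)
  rw [h1, abs_mul, abs_of_pos (by positivity : 0 < 1 / (n : ℝ))]
  rcases Nat.eq_zero_or_pos m with hm0 | hm0
  · subst hm0
    simp only [Finset.univ_eq_empty, Finset.sum_empty, abs_zero, mul_zero]
    positivity
  have hB := (abs_nonneg _).trans (h2 ⟨0, hm0⟩)
  have h3 : |∑ i, (looT n z W i * (1 - S) - S)| ≤ m * ((ε + (z - u₀)⁻¹ / n) * (1 + u₀ / (z - u₀))) := by
    refine (Finset.abs_sum_le_sum_abs _ _).trans ((Finset.sum_le_card_nsmul _ _ _ fun i _ => h2 i).trans_eq ?_)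
    simp
  have h4 : (m : ℝ) ≤ n := by exact_mod_cast hmn
  rw [one_div, inv_mul_le_iff₀ hn']
  exact h3.trans (mul_le_mul_of_nonneg_right h4 hB)

end Loo

/-! ### The self-consistent equation -/

/-- The exponential rate in `quad_tail`. -/
def rateQ (ε M : ℝ) : ℝ := min (ε / (16 * M ^ 2)) (1 / (4 * M)) * ε / 2

lemma rateQ_pos {ε M : ℝ} (hε : 0 < ε) (hM : 0 < M) : 0 < rateQ ε M := by
  unfold rateQ
  have : 0 < min (ε / (16 * M ^ 2)) (1 / (4 * M)) := lt_min (by positivity) (by positivity)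
  positivity

/-- Exponential concentration of a Gaussian quadratic form whose matrix is independent of the
vector and bounded by `M`. -/
lemma quad_tail {Ω S : Type*} [MeasurableSpace Ω] [MeasurableSpace S] {P : Measure Ω}
    [IsProbabilityMeasure P] {q n : ℕ} {X : Ω → Fin q → ℝ} {Y : Ω → S}
    (hX : P.map X = stdG (Fin q)) (hY : AEMeasurable Y P) (hXY : IndepFun X Y P)
    (B : S → Matrix (Fin q) (Fin q) ℝ) (hBm : ∀ i j, Measurable fun y => B y i j)
    (hB : ∀ y, (B y).IsHermitian) {M ε : ℝ} (hε : 0 < ε) (hM0 : 0 < M)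
    (hM : ∀ y, ∀ x : Fin q → ℝ, |x ⬝ᵥ (B y *ᵥ x)| ≤ M * (x ⬝ᵥ x)) (hq : q ≤ 2 * n) :
    P {ω | ε * n ≤ |X ω ⬝ᵥ (B (Y ω) *ᵥ X ω) - (B (Y ω)).trace|}
      ≤ ENNReal.ofReal (2 * Real.exp (-(rateQ ε M * n))) := by
  set s := min (ε / (16 * M ^ 2)) (1 / (4 * M)) with hs
  have hs0 : 0 < s := lt_min (by positivity) (by positivity)
  have hs1 : s ≤ ε / (16 * M ^ 2) := min_le_left _ _
  have hs2 : s ≤ 1 / (4 * M) := min_le_right _ _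
  refine (quad_concentration hX hY hXY B hBm hB hs0.le hM (by
    rw [le_div_iff₀ (by positivity)] at hs2; linarith)).trans (ENNReal.ofReal_le_ofReal ?_)
  gcongr
  have hq' : (q : ℝ) ≤ 2 * n := by exact_mod_cast hq
  rw [le_div_iff₀ (by positivity)] at hs1
  have h1 : 4 * s ^ 2 * M ^ 2 * q ≤ 4 * s ^ 2 * M ^ 2 * (2 * n) := by gcongr
  have h2 : s * n * (s * (16 * M ^ 2)) ≤ s * n * ε := by gcongr
  unfold rateQ
  rw [← hs]
  nlinarith

lemma continuous_shiftedGram {m q : ℕ} (n : ℕ) (z : ℝ) :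
    Continuous fun x : Fin m × Fin q → ℝ => shiftedGram n z (toMat x) := by
  unfold shiftedGram toMat
  have : Continuous fun x : Fin m × Fin q → ℝ => (Matrix.of fun i j => x (i, j) : Matrix _ _ ℝ) :=
    continuous_matrix fun i j => by simp only [Matrix.of_apply]; fun_prop
  exact continuous_const.sub ((this.matrix_transpose.matrix_mul this).fun_const_smul _)

lemma measurable_shiftedGram_inv {m q : ℕ} (n : ℕ) (z : ℝ) (i j : Fin q) :
    Measurable fun x : Fin m × Fin q → ℝ => (shiftedGram n z (toMat x))⁻¹ i j := by
  have h := continuous_shiftedGram (m := m) (q := q) n z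
  simp only [Matrix.inv_def, Matrix.smul_apply, Ring.inverse_eq_inv', smul_eq_mul]
  exact (h.matrix_det.measurable.inv).mul (h.matrix_adjugate.matrix_elem i j).measurable

lemma isClosed_gramLe {m q : ℕ} (n : ℕ) (u : ℝ) :
    IsClosed {x : Fin m × Fin q → ℝ | GramLe n u (toMat x)} := by
  unfold GramLe
  rw [Set.ofPred_forall]
  refine isClosed_iInter fun y => isClosed_le ?_ continuous_const
  simp only [toMat, dotProduct, mulVec, Matrix.of_apply]
  fun_prop

open Classical in
/-- The resolvent of `WᵀW / n`, replaced by `0` off the event `WᵀW ≤ n u`. -/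
def truncRes {m q : ℕ} (n : ℕ) (u z : ℝ) (x : Fin m × Fin q → ℝ) : Matrix (Fin q) (Fin q) ℝ :=
  if GramLe n u (toMat x) then (shiftedGram n z (toMat x))⁻¹ else 0

lemma measurable_truncRes {m q : ℕ} (n : ℕ) (u z : ℝ) (i j : Fin q) :
    Measurable fun x : Fin m × Fin q → ℝ => truncRes n u z x i j := by
  classical
  have : (fun x : Fin m × Fin q → ℝ => truncRes n u z x i j)
      = fun x => if GramLe n u (toMat x) then (shiftedGram n z (toMat x))⁻¹ i j else 0 := by
    ext x; unfold truncRes; split_ifs <;> rfl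
  rw [this]
  exact Measurable.ite (isClosed_gramLe n u).measurableSet (measurable_shiftedGram_inv n z i j)
    measurable_const

lemma truncRes_isHermitian {m q : ℕ} (n : ℕ) (u z : ℝ) (x : Fin m × Fin q → ℝ) :
    (truncRes n u z x).IsHermitian := by
  unfold truncRes
  split_ifs
  · rw [Matrix.IsHermitian, conjTranspose_eq_transpose_of_trivial]
    exact shiftedGram_inv_transpose
  · exact isHermitian_zero

lemma truncRes_bound {m q n : ℕ} (hn : 0 < n) {u z : ℝ} (hz : u < z) (x : Fin m × Fin q → ℝ)
    (y : Fin q → ℝ) : |y ⬝ᵥ (truncRes n u z x *ᵥ y)| ≤ (z - u)⁻¹ * (y ⬝ᵥ y) := by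
  have hd := sub_pos.2 hz
  unfold truncRes
  split_ifs with h
  · rw [abs_of_nonneg (inv_quad_nonneg hd (shiftedGram_coercive hn h) y)]
    exact inv_quad_le hd (shiftedGram_coercive hn h) y
  · rw [zero_mulVec, dotProduct_zero, abs_zero]
    exact mul_nonneg (by positivity) (dot_self_nn y)

/-- One row of a Gaussian matrix: its law, and its independence of the other rows. -/
lemma row_law_indep {Ω : Type*} [MeasurableSpace Ω] {P : Measure Ω} [IsProbabilityMeasure P]
    {m q : ℕ} {W : Ω → Matrix (Fin m) (Fin q) ℝ}
    (hW : P.map (fun ω => matEntries (W ω)) = stdG (Fin m × Fin q)) (i : Fin m) :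
    P.map (fun ω => W ω i) = stdG (Fin q) ∧
      AEMeasurable (fun ω => matEntries (zeroRow i (W ω))) P ∧
      IndepFun (fun ω => W ω i) (fun ω => matEntries (zeroRow i (W ω))) P := by
  classical
  have hae : AEMeasurable (fun ω => matEntries (W ω)) P :=
    AEMeasurable.of_map_ne_zero (by rw [hW]; exact NeZero.ne _)
  have hae' : ∀ ij : Fin m × Fin q, AEMeasurable (fun ω => W ω ij.1 ij.2) P := fun ij =>
    (measurable_pi_apply ij).comp_aemeasurable hae
  have hlaw : ∀ ij : Fin m × Fin q, P.map (fun ω => W ω ij.1 ij.2) = gaussianReal 0 1 := by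
    intro ij
    have : (fun ω => W ω ij.1 ij.2) = (fun x : Fin m × Fin q → ℝ => x ij) ∘
        fun ω => matEntries (W ω) := rfl
    rw [this, ← AEMeasurable.map_map_of_aemeasurable
      (measurable_pi_apply ij).aemeasurable hae, hW]
    exact (measurePreserving_eval _ ij).map_eq
  have hind : iIndepFun (fun (ij : Fin m × Fin q) ω => W ω ij.1 ij.2) P := by
    rw [iIndepFun_iff_map_fun_eq_pi_map hae']
    simp only [hlaw]
    exact hW
  refine ⟨?_, ?_, ?_⟩
  · have : (fun ω => W ω i) = (fun (x : Fin m × Fin q → ℝ) j => x (i, j)) ∘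
        fun ω => matEntries (W ω) := rfl
    rw [this, ← AEMeasurable.map_map_of_aemeasurable
      (measurable_pi_lambda _ fun j => measurable_pi_apply _).aemeasurable hae, hW]
    exact stdG_map_comp (fun j => (i, j)) fun a b h => (Prod.mk.inj h).2
  · refine aemeasurable_pi_lambda _ fun ij => ?_
    by_cases h : ij.1 = i
    · simp only [matEntries, zeroRow, Matrix.of_apply, h, if_true]; fun_prop
    · simp only [matEntries, zeroRow, Matrix.of_apply, h, if_false]; exact hae' ij
  · let S : Finset (Fin m × Fin q) := Finset.univ.filter fun ij => ij.1 = i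
    let T : Finset (Fin m × Fin q) := Finset.univ.filter fun ij => ¬ ij.1 = i
    have h := hind.indepFun_finset₀ S T (Finset.disjoint_filter_filter_not _ _ _) hae'
    let φ : (S → ℝ) → Fin q → ℝ := fun x j => x ⟨(i, j), by simp [S]⟩
    let ψ : (T → ℝ) → Fin m × Fin q → ℝ := fun x ij =>
      if hij : ij.1 = i then 0 else x ⟨ij, by simp [T, hij]⟩
    have hφ : Measurable φ := measurable_pi_lambda _ fun j => measurable_pi_apply _
    have hψ : Measurable ψ := measurable_pi_lambda _ fun ij => by
      by_cases hij : ij.1 = i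
      · simp only [ψ, hij, dite_true]; exact measurable_const
      · simp only [ψ, hij, dite_false]; exact measurable_pi_apply _
    have h2 := h.comp hφ hψ
    have e : (fun ω => matEntries (zeroRow i (W ω)))
        = ψ ∘ fun ω (ij : T) => W ω (ij : Fin m × Fin q).1 (ij : Fin m × Fin q).2 := by
      funext ω ij
      simp only [matEntries, zeroRow, Matrix.of_apply, Function.comp, ψ]
      split_ifs <;> rfl
    rw [e]
    exact h2

/-- The almost sure self-consistent equation for the normalised trace of the resolvent. -/
lemma ae_mp_equation {Ω : Type*} [MeasurableSpace Ω] {P : Measure Ω} [IsProbabilityMeasure P]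
    {m q : ℕ → ℕ} {W : ∀ n, Ω → Matrix (Fin (m n)) (Fin (q n)) ℝ} {u₀ z : ℝ} (hu0 : 0 ≤ u₀)
    (hz : u₀ < z)
    (hW : ∀ n, P.map (fun ω => matEntries (W n ω)) = stdG (Fin (m n) × Fin (q n)))
    (hm : ∀ n, m n ≤ n) (hq : ∀ᶠ n in atTop, q n ≤ 2 * n)
    (hop : ∀ᵐ ω ∂P, ∀ᶠ n in atTop, GramLe n u₀ (W n ω)) :
    ∀ᵐ ω ∂P, Tendsto (fun n : ℕ =>
      (z * ((shiftedGram n z (W n ω))⁻¹.trace / n) - q n / n)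
          * (1 - (shiftedGram n z (W n ω))⁻¹.trace / n)
        - m n / n * ((shiftedGram n z (W n ω))⁻¹.trace / n)) atTop (𝓝 0) := by
  have hd := sub_pos.2 hz
  have hMpos : 0 < (z - u₀)⁻¹ := inv_pos.2 hd
  have hrow : ∀ ε : ℝ, 0 < ε → ∀ᵐ ω ∂P, ∀ᶠ n in atTop, ∀ i,
      |W n ω i ⬝ᵥ (truncRes n u₀ z (matEntries (zeroRow i (W n ω))) *ᵥ W n ω i)
        - (truncRes n u₀ z (matEntries (zeroRow i (W n ω)))).trace| ≤ ε * n := by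
    intro ε hε
    set c := rateQ ε (z - u₀)⁻¹ with hc
    have hc0 : 0 < c := rateQ_pos hε hMpos
    obtain ⟨N, hN⟩ := eventually_atTop.1 hq
    have := ae_eventually_of_exp_bound (P := P) (s := fun n => ⋃ i, {ω | ε * n ≤
      |W n ω i ⬝ᵥ (truncRes n u₀ z (matEntries (zeroRow i (W n ω))) *ᵥ W n ω i)
        - (truncRes n u₀ z (matEntries (zeroRow i (W n ω)))).trace|})
      (C := 4 / c) (c := c / 2) (by positivity) (N + 1) (fun n hn => by
        have hb : ∀ i, P {ω | ε * n ≤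
            |W n ω i ⬝ᵥ (truncRes n u₀ z (matEntries (zeroRow i (W n ω))) *ᵥ W n ω i)
            - (truncRes n u₀ z (matEntries (zeroRow i (W n ω)))).trace|}
            ≤ ENNReal.ofReal (2 * Real.exp (-(c * n))) := by
          intro i
          obtain ⟨h1, h2, h3⟩ := row_law_indep (hW n) i
          exact quad_tail h1 h2 h3 (truncRes n u₀ z) (measurable_truncRes n u₀ z)
            (truncRes_isHermitian n u₀ z) hε hMpos (truncRes_bound (by omega) hz) (hN n (by omega))
        refine (measure_iUnion_fintype_le P _).trans ((Finset.sum_le_card_nsmul _ _ _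
          fun i _ => hb i).trans ?_)
        rw [Finset.card_univ, Fintype.card_fin, nsmul_eq_mul, ← ENNReal.ofReal_natCast,
          ← ENNReal.ofReal_mul (by positivity)]
        apply ENNReal.ofReal_le_ofReal
        have e1 : Real.exp (-(c * n)) = Real.exp (-(c / 2 * n)) * Real.exp (-(c / 2 * n)) := by
          rw [← Real.exp_add]; ring_nf
        have e2 : c / 2 * n ≤ Real.exp (c / 2 * n) := by
          linarith [Real.add_one_le_exp (c / 2 * n)]
        have e3 : (n : ℝ) * Real.exp (-(c / 2 * n)) ≤ 2 / c := by
          rw [Real.exp_neg, ← div_eq_mul_inv, div_le_div_iff₀ (Real.exp_pos _) hc0]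
          linarith
        have e4 : (m n : ℝ) ≤ n := by exact_mod_cast hm n
        calc (m n : ℝ) * (2 * Real.exp (-(c * n))) ≤ n * (2 * Real.exp (-(c * n))) := by gcongr
          _ = 2 * (n * Real.exp (-(c / 2 * n))) * Real.exp (-(c / 2 * n)) := by rw [e1]; ring
          _ ≤ 2 * (2 / c) * Real.exp (-(c / 2 * n)) := by gcongr
          _ = _ := by ring)
    filter_upwards [this] with ω hω
    filter_upwards [hω] with n hn i
    rw [Set.mem_iUnion, not_exists] at hn
    exact (not_le.1 (hn i)).le
  have hrow' := ae_all_iff.2 fun j : ℕ => hrow (1 / ((j : ℝ) + 1)) (by positivity)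
  filter_upwards [hop, hrow'] with ω h1 h2
  rw [Metric.tendsto_atTop]
  intro δ hδ
  set K := 1 + u₀ / (z - u₀) with hK
  have hK0 : 0 < K := by positivity
  obtain ⟨j, hj⟩ := exists_nat_one_div_lt (show 0 < δ / (2 * K) by positivity)
  have hlim : Tendsto (fun n : ℕ => (z - u₀)⁻¹ / (n : ℝ)) atTop (𝓝 0) :=
    tendsto_const_div_atTop_nhds_zero_nat _
  have hev := hlim.eventually (gt_mem_nhds (show 0 < δ / (2 * K) by positivity))
  obtain ⟨N, hN⟩ := eventually_atTop.1 (((h1.and (h2 j)).and hev).and (eventually_gt_atTop 0))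
  refine ⟨N, fun n hn => ?_⟩
  obtain ⟨⟨⟨ha, hb⟩, hcn⟩, hn0⟩ := hN n hn
  rw [Real.dist_eq, sub_zero]
  have h3 := mp_equation hn0 (hm n) hu0 hz ha (ε := 1 / ((j : ℝ) + 1)) (by positivity) (fun i => by
    have := hb i
    have hg : GramLe n u₀ (toMat (matEntries (zeroRow i (W n ω)))) := ha.zeroRow i
    unfold truncRes at this
    rw [if_pos hg] at this
    exact this)
  refine h3.trans_lt ?_
  rw [← hK]
  calc _ < (δ / (2 * K) + δ / (2 * K)) * K := by gcongr
    _ = δ := by field_simp; ring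

/-! ### The ordered list of eigenvalues -/

lemma length_eigsDesc {q : ℕ} {A : Matrix (Fin q) (Fin q) ℝ} (hA : A.IsHermitian) :
    (eigsDesc A).length = q := by
  rw [eigsDesc, dif_pos hA, List.length_insertionSort, List.length_ofFn]

lemma ithEigDesc_eq {q : ℕ} {A : Matrix (Fin q) (Fin q) ℝ} (hA : A.IsHermitian) (α : Fin q) :
    ithEigDesc A α = (eigsDesc A)[α.1]'(by rw [length_eigsDesc hA]; exact α.2) := by
  unfold ithEigDesc
  rw [List.getD_eq_getElem]

/-- Symmetric sums over the sorted eigenvalues agree with those over Mathlib's enumeration. -/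
lemma sum_ithEigDesc {q : ℕ} {A : Matrix (Fin q) (Fin q) ℝ} (hA : A.IsHermitian) (g : ℝ → ℝ) :
    ∑ α : Fin q, g (ithEigDesc A α) = ∑ i, g (hA.eigenvalues i) := by
  have h1 : ((eigsDesc A).map g).sum = ∑ i, g (hA.eigenvalues i) := by
    have hp : (eigsDesc A).Perm (List.ofFn hA.eigenvalues) := by
      simp only [eigsDesc, hA, dite_true]
      exact List.perm_insertionSort _ _
    rw [(hp.map g).sum_eq, List.map_ofFn, List.sum_ofFn]
    rfl
  rw [← h1, ← Fin.sum_univ_getElem]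
  have hl : ((eigsDesc A).map g).length = q := by rw [List.length_map, length_eigsDesc hA]
  refine Fintype.sum_equiv (finCongr hl.symm) _ _ fun α => ?_
  rw [ithEigDesc_eq hA]
  simp

lemma ithEigDesc_mem {q : ℕ} {A : Matrix (Fin q) (Fin q) ℝ} (hA : A.IsHermitian) (α : Fin q) :
    ∃ i, ithEigDesc A α = hA.eigenvalues i := by
  have h : ithEigDesc A α ∈ eigsDesc A := by rw [ithEigDesc_eq hA]; exact List.getElem_mem _
  simp only [eigsDesc, hA, dite_true, List.mem_insertionSort, List.mem_ofFn] at h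
  obtain ⟨i, hi⟩ := h
  exact ⟨i, hi.symm⟩

lemma ithEigDesc_antitone {q : ℕ} {A : Matrix (Fin q) (Fin q) ℝ} (hA : A.IsHermitian) :
    Antitone fun α : Fin q => ithEigDesc A α := by
  have hs : (eigsDesc A).Pairwise (· ≥ ·) := by
    simp only [eigsDesc, hA, dite_true]
    exact List.pairwise_insertionSort _ _
  intro α β hαβ
  rcases hαβ.eq_or_lt with h | h
  · rw [h]
  · dsimp only
    rw [ithEigDesc_eq hA, ithEigDesc_eq hA]
    exact List.pairwise_iff_getElem.1 hs _ _ _ _ h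

lemma gram_isHermitian {m q : ℕ} (W : Matrix (Fin m) (Fin q) ℝ) : (Wᵀ * W).IsHermitian := by
  rw [Matrix.IsHermitian, conjTranspose_eq_transpose_of_trivial]; simp

lemma gram_eig_quad {m q : ℕ} (W : Matrix (Fin m) (Fin q) ℝ) (i : Fin q) :
    ∃ y : Fin q → ℝ, y ⬝ᵥ y = 1 ∧
      (W *ᵥ y) ⬝ᵥ (W *ᵥ y) = (gram_isHermitian W).eigenvalues i := by
  obtain ⟨U, h1, h2, h3⟩ := exists_orthogonal_diag _ (gram_isHermitian W)
  refine ⟨U *ᵥ Pi.single i 1, ?_, ?_⟩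
  · rw [Matrix.dotProduct_mulVec, ← Matrix.mulVec_transpose, Matrix.mulVec_mulVec, h2]
    simp
  · rw [← quad_gram]
    conv_lhs => rw [h3]
    rw [Matrix.dotProduct_mulVec, ← Matrix.mulVec_transpose, dotProduct_comm]
    simp only [Matrix.mulVec_mulVec, Matrix.transpose_mul, Matrix.transpose_transpose,
      Matrix.diagonal_transpose]
    rw [Matrix.dotProduct_mulVec, ← Matrix.mulVec_transpose, Matrix.mulVec_mulVec]
    simp only [Matrix.transpose_mul, Matrix.transpose_transpose, Matrix.diagonal_transpose]
    have : Uᵀ * (U * (diagonal (gram_isHermitian W).eigenvalues * (Uᵀ * U)))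
      = diagonal (gram_isHermitian W).eigenvalues := by
      rw [h2, Matrix.mul_one, ← Matrix.mul_assoc, h2, Matrix.one_mul]
    simp only [Matrix.mul_assoc, this]
    simp

lemma gram_ithEig_nonneg {m q : ℕ} (W : Matrix (Fin m) (Fin q) ℝ) (α : Fin q) :
    0 ≤ ithEigDesc (Wᵀ * W) α := by
  obtain ⟨i, hi⟩ := ithEigDesc_mem (gram_isHermitian W) α
  obtain ⟨y, -, hy⟩ := gram_eig_quad W i
  rw [hi, ← hy]
  exact dot_self_nn _

lemma gram_ithEig_le {m q n : ℕ} {u : ℝ} {W : Matrix (Fin m) (Fin q) ℝ} (h : GramLe n u W)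
    (α : Fin q) : ithEigDesc (Wᵀ * W) α ≤ n * u := by
  obtain ⟨i, hi⟩ := ithEigDesc_mem (gram_isHermitian W) α
  obtain ⟨y, hy1, hy⟩ := gram_eig_quad W i
  have := h y
  rwa [hy1, mul_one, hy, ← hi] at this

lemma trace_inv_conj_diag {q : ℕ} {U : Matrix (Fin q) (Fin q) ℝ} (h1 : U * Uᵀ = 1)
    (h2 : Uᵀ * U = 1) {d : Fin q → ℝ} (hd : ∀ i, d i ≠ 0) :
    (U * diagonal d * Uᵀ)⁻¹.trace = ∑ i, (d i)⁻¹ := by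
  have : (U * diagonal d * Uᵀ)⁻¹ = U * diagonal (fun i => (d i)⁻¹) * Uᵀ := by
    refine Matrix.inv_eq_right_inv ?_
    calc U * diagonal d * Uᵀ * (U * diagonal (fun i => (d i)⁻¹) * Uᵀ)
        = U * (diagonal d * ((Uᵀ * U) * diagonal (fun i => (d i)⁻¹))) * Uᵀ := by
          simp only [Matrix.mul_assoc]
      _ = 1 := by
          rw [h2, Matrix.one_mul, Matrix.diagonal_mul_diagonal]
          simp only [mul_inv_cancel₀ (hd _)]
          rw [Matrix.diagonal_one, Matrix.mul_one, h1]
  rw [this, Matrix.trace_mul_comm, ← Matrix.mul_assoc, h2, Matrix.one_mul, Matrix.trace_diagonal]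

lemma smul_one_conj {q : ℕ} {U : Matrix (Fin q) (Fin q) ℝ} (h1 : U * Uᵀ = 1) (z : ℝ) :
    z • (1 : Matrix (Fin q) (Fin q) ℝ) = U * diagonal (fun _ => z) * Uᵀ := by
  have : diagonal (fun _ : Fin q => z) = z • (1 : Matrix (Fin q) (Fin q) ℝ) := by
    ext i j; simp [Matrix.diagonal_apply, Matrix.one_apply]
  rw [this, Matrix.mul_smul, Matrix.smul_mul, Matrix.mul_one, h1]

/-- The trace of the resolvent, in terms of the sorted eigenvalues. -/
lemma trace_shiftedGram_inv {m q n : ℕ} (hn : 0 < n) {u z : ℝ} (hz : u < z)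
    {W : Matrix (Fin m) (Fin q) ℝ} (h : GramLe n u W) :
    (shiftedGram n z W)⁻¹.trace = ∑ α : Fin q, (z - ithEigDesc (Wᵀ * W) α / n)⁻¹ := by
  have hn' : (0 : ℝ) < n := by exact_mod_cast hn
  rw [sum_ithEigDesc (gram_isHermitian W) fun x => (z - x / n)⁻¹]
  obtain ⟨U, h1, h2, h3⟩ := exists_orthogonal_diag _ (gram_isHermitian W)
  have hne : ∀ i, z - (gram_isHermitian W).eigenvalues i / n ≠ 0 := fun i => by
    obtain ⟨y, hy1, hy⟩ := gram_eig_quad W i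
    have := h y
    rw [hy1, mul_one, hy] at this
    have : (gram_isHermitian W).eigenvalues i / n ≤ u := by
      rw [div_le_iff₀ hn']; linarith
    intro h0; linarith
  rw [← trace_inv_conj_diag h1 h2 hne]
  congr 2
  unfold shiftedGram
  conv_lhs => rw [h3, smul_one_conj h1 z]
  rw [← Matrix.smul_mul, ← Matrix.mul_smul, ← Matrix.sub_mul, ← Matrix.mul_sub]
  congr 2
  ext i j
  simp only [Matrix.sub_apply, Matrix.smul_apply, Matrix.diagonal_apply, smul_eq_mul]
  split_ifs <;> ring

lemma pow_conj {q : ℕ} {U : Matrix (Fin q) (Fin q) ℝ} (h1 : U * Uᵀ = 1)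
    (h2 : Uᵀ * U = 1) (d : Fin q → ℝ) (k : ℕ) :
    (U * diagonal d * Uᵀ) ^ k = U * diagonal (fun i => d i ^ k) * Uᵀ := by
  induction k with
  | zero => simp [h1]
  | succ k ih =>
    rw [pow_succ, ih]
    calc _ = U * (diagonal (fun i => d i ^ k) * ((Uᵀ * U) * diagonal d)) * Uᵀ := by
          simp only [Matrix.mul_assoc]
      _ = _ := by rw [h2, Matrix.one_mul, Matrix.diagonal_mul_diagonal]; simp only [pow_succ]

/-- A smoothed eigenvalue count, expressed by a rational function of the matrix entries. -/
lemma trace_smooth_count {m q : ℕ} (W : Matrix (Fin m) (Fin q) ℝ) {t : ℝ} (ht : 0 < t) (k : ℕ) :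
    t ^ k * (((Wᵀ * W) ^ k + (t ^ k) • 1)⁻¹).trace
      = ∑ α : Fin q, t ^ k / (ithEigDesc (Wᵀ * W) α ^ k + t ^ k) := by
  rw [sum_ithEigDesc (gram_isHermitian W) fun x => t ^ k / (x ^ k + t ^ k)]
  obtain ⟨U, h1, h2, h3⟩ := exists_orthogonal_diag _ (gram_isHermitian W)
  have hpos : ∀ i, 0 ≤ (gram_isHermitian W).eigenvalues i := fun i => by
    obtain ⟨y, hy1, hy⟩ := gram_eig_quad W i
    rw [← hy]; exact dot_self_nn _
  have e : (Wᵀ * W) ^ k + (t ^ k) • 1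
      = U * diagonal (fun i => (gram_isHermitian W).eigenvalues i ^ k + t ^ k) * Uᵀ := by
    conv_lhs => rw [h3, pow_conj h1 h2, smul_one_conj h1 (t ^ k)]
    rw [← Matrix.add_mul, ← Matrix.mul_add, Matrix.diagonal_add]
  rw [e, trace_inv_conj_diag h1 h2, Finset.mul_sum]
  · rfl
  · intro i
    have := hpos i
    positivity

lemma smooth_count_tendsto {x t : ℝ} (hx : 0 ≤ x) (ht : 0 < t) :
    Tendsto (fun k : ℕ => t ^ k / (x ^ k + t ^ k)) atTop
      (𝓝 (if x < t then 1 else if x = t then 1 / 2 else 0)) := by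
  split_ifs with h1 h2
  · have h : Tendsto (fun k : ℕ => 1 / ((x / t) ^ k + 1)) atTop (𝓝 (1 / (0 + 1))) :=
      tendsto_const_nhds.div ((tendsto_pow_atTop_nhds_zero_of_lt_one (by positivity)
        ((div_lt_one ht).2 h1)).add_const 1) (by norm_num)
    rw [zero_add, div_one] at h
    refine h.congr fun k => ?_
    have : 0 < t ^ k := by positivity
    have h3 : 0 ≤ x ^ k := by positivity
    rw [div_pow]; field_simp
  · subst h2
    refine tendsto_const_nhds.congr fun k => ?_
    have : 0 < x ^ k := by positivity
    field_simp; norm_num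
  · have hlt : t < x := lt_of_le_of_ne (not_lt.1 h1) (Ne.symm h2)
    have hx0 : 0 < x := ht.trans hlt
    have h0 := tendsto_pow_atTop_nhds_zero_of_lt_one (show 0 ≤ t / x by positivity)
        ((div_lt_one hx0).2 hlt)
    have h : Tendsto (fun k : ℕ => (t / x) ^ k / (1 + (t / x) ^ k)) atTop (𝓝 (0 / (1 + 0))) :=
      h0.div (h0.const_add 1) (by norm_num)
    rw [zero_div] at h
    refine h.congr fun k => ?_
    have : 0 < t ^ k := by positivity
    have h3 : 0 < x ^ k := by positivity
    rw [div_pow]; field_simp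

/-- The number of eigenvalues below `t`, those equal to `t` counting one half. -/
def lowCount {q : ℕ} (t : ℝ) (l : Fin q → ℝ) : ℝ :=
  ∑ α, if l α < t then 1 else if l α = t then 1 / 2 else 0

lemma lowCount_of_lt {q : ℕ} {l : Fin q → ℝ} (hl : Antitone l) {t : ℝ} {α : Fin q} (h : t < l α) :
    lowCount t l ≤ q - 1 - α := by
  unfold lowCount
  have : ∑ β, (if l β < t then 1 else if l β = t then 1 / 2 else 0 : ℝ)
      ≤ ∑ β, if α < β then (1 : ℝ) else 0 := by
    refine Finset.sum_le_sum fun β _ => ?_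
    by_cases hb : α < β
    · rw [if_pos hb]; split_ifs <;> norm_num
    · have := h.trans_le (hl (not_lt.1 hb))
      rw [if_neg (not_lt.2 this.le), if_neg this.ne', if_neg hb]
  refine this.trans ?_
  rw [Finset.sum_boole, Finset.filter_lt_eq_Ioi, Fin.card_Ioi]
  have : 1 + α.1 ≤ q := by omega
  rw [show q - 1 - α.1 = q - (1 + α.1) by omega, Nat.cast_sub this]
  push_cast; linarith

lemma lt_of_lowCount {q : ℕ} {l : Fin q → ℝ} (hl : Antitone l) {t : ℝ} {α : Fin q}
    (h : lowCount t l ≤ q - 1 - α) : t ≤ l α := by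
  by_contra hlt
  rw [not_le] at hlt
  unfold lowCount at h
  have : ∑ β, (if α ≤ β then (1 : ℝ) else 0)
      ≤ ∑ β, (if l β < t then 1 else if l β = t then 1 / 2 else 0 : ℝ) := by
    refine Finset.sum_le_sum fun β _ => ?_
    by_cases hb : α ≤ β
    · rw [if_pos hb, if_pos ((hl hb).trans_lt hlt)]
    · rw [if_neg hb]; split_ifs <;> norm_num
  rw [Finset.sum_boole, Finset.filter_le_eq_Ici, Fin.card_Ici, Nat.cast_sub α.2.le] at this
  linarith

/-- The sorted eigenvalues are determined by the eigenvalue counts `lowCount`, which are limits of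
rational functions of the entries; this makes them measurable. -/
lemma measurable_ithEig {m q : ℕ} (α : Fin q) :
    Measurable fun x : Fin m × Fin q → ℝ => ithEigDesc ((toMat x)ᵀ * toMat x) α := by
  have hc : Continuous fun x : Fin m × Fin q → ℝ => ((toMat x)ᵀ * toMat x) := by
    unfold toMat
    have : Continuous fun x : Fin m × Fin q → ℝ => (Matrix.of fun i j => x (i, j) : Matrix _ _ ℝ) :=
      continuous_matrix fun i j => by simp only [Matrix.of_apply]; fun_prop
    exact this.matrix_transpose.matrix_mul this
  have hcount : ∀ t : ℝ, 0 < t → Measurable fun x : Fin m × Fin q → ℝ =>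
      lowCount t fun β : Fin q => ithEigDesc ((toMat x)ᵀ * toMat x) β := by
    intro t ht
    refine measurable_of_tendsto_metrizable (f := fun (k : ℕ) (x : Fin m × Fin q → ℝ) =>
      t ^ k * (((((toMat x)ᵀ * toMat x)) ^ k + (t ^ k) • 1)⁻¹).trace) ?_ ?_
    · intro k
      refine measurable_const.mul ?_
      simp only [Matrix.trace, Matrix.diag_apply]
      refine Finset.measurable_fun_sum _ fun i _ => ?_
      have h : Continuous fun x : Fin m × Fin q → ℝ =>
          ((toMat x)ᵀ * toMat x) ^ k + (t ^ k) • (1 : Matrix (Fin q) (Fin q) ℝ) :=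
        (hc.pow k).add continuous_const
      simp only [Matrix.inv_def, Matrix.smul_apply, Ring.inverse_eq_inv', smul_eq_mul]
      exact (h.matrix_det.measurable.inv).mul (h.matrix_adjugate.matrix_elem i i).measurable
    · rw [tendsto_pi_nhds]
      intro x
      simp only [trace_smooth_count (toMat x) ht]
      exact tendsto_finsetSum _ fun β _ => smooth_count_tendsto (gram_ithEig_nonneg _ β) ht
  refine measurable_of_Ioi fun t => ?_
  rcases lt_or_ge t 0 with ht | ht
  · convert MeasurableSet.univ
    ext x
    simpa using ht.trans_le (gram_ithEig_nonneg (toMat x) α)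
  · have : (fun x : Fin m × Fin q → ℝ => ithEigDesc ((toMat x)ᵀ * toMat x) α) ⁻¹' Set.Ioi t
        = ⋃ s : ℚ, ⋃ _ : t < (s : ℝ), {x | lowCount (s : ℝ)
            (fun β : Fin q => ithEigDesc ((toMat x)ᵀ * toMat x) β) ≤ q - 1 - α} := by
      ext x
      have hl := ithEigDesc_antitone (gram_isHermitian (toMat x))
      simp only [Set.mem_preimage, Set.mem_Ioi, Set.mem_iUnion]
      constructor
      · intro h
        obtain ⟨s, h1, h2⟩ := exists_rat_btwn h
        exact ⟨s, h1, lowCount_of_lt hl h2⟩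
      · rintro ⟨s, h1, h2⟩
        exact h1.trans_le (lt_of_lowCount hl h2)
    rw [this]
    refine MeasurableSet.iUnion fun s => MeasurableSet.iUnion fun hs => ?_
    exact measurableSet_le (hcount _ (ht.trans_lt hs)) measurable_const

/-! ### Selecting the root of the limiting quadratic equation -/

/-- The smaller root of `z s² - (z + c - 1) s + c = 0`; it is the almost sure limit of
`(1/n) tr (z - WᵀW/n)⁻¹`. -/
def mpRoot (c z : ℝ) : ℝ := ((z + c - 1) - √((z + c - 1) ^ 2 - 4 * c * z)) / (2 * z)

/-- If `y` and `x` nearly solve the quadratic equations at `z` and at `z' < z`, and `y ≤ x`, then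
`y` is near the smaller root: the larger root is strictly increasing in `z`. -/
lemma root_pick {r z z' : ℝ} (hr0 : 0 ≤ r) (hr1 : r ≤ 1) (hz' : (1 + r) ^ 2 < z') (hzz : z' < z)
    {x y : ℕ → ℝ} (hyx : ∀ᶠ n in atTop, y n ≤ x n)
    (hx : Tendsto (fun n => z' * x n ^ 2 - (z' + r ^ 2 - 1) * x n + r ^ 2) atTop (𝓝 0))
    (hy : Tendsto (fun n => z * y n ^ 2 - (z + r ^ 2 - 1) * y n + r ^ 2) atTop (𝓝 0)) :
    Tendsto y atTop (𝓝 (mpRoot (r ^ 2) z)) := by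
  have key : ∀ {w : ℝ} {s : ℕ → ℝ}, (1 + r) ^ 2 < w →
      Tendsto (fun n => w * s n ^ 2 - (w + r ^ 2 - 1) * s n + r ^ 2) atTop (𝓝 0) →
      Tendsto (fun n => |s n - (w + r ^ 2 - 1) / (2 * w)|) atTop
        (𝓝 (√((w + r ^ 2 - 1) ^ 2 - 4 * r ^ 2 * w) / (2 * w))) := by
    intro w s hw hs
    have hw0 : 0 < w := lt_of_le_of_lt (by positivity) hw
    have h1 : Tendsto (fun n => (s n - (w + r ^ 2 - 1) / (2 * w)) ^ 2) atTop
        (𝓝 (0 / w + ((w + r ^ 2 - 1) ^ 2 - 4 * r ^ 2 * w) / (2 * w) ^ 2)) := by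
      refine ((hs.div_const w).add_const _).congr fun n => ?_
      field_simp; ring
    have h2 := (Real.continuous_sqrt.tendsto _).comp h1
    rw [zero_div, zero_add, Real.sqrt_div' _ (by positivity), Real.sqrt_sq (by positivity)] at h2
    exact h2.congr fun n => Real.sqrt_sq_eq_abs _
  have kx := key hz' hx
  have ky := key (hz'.trans hzz) hy
  have hz0' : 0 < z' := lt_of_le_of_lt (by positivity) hz'
  have hz0 : 0 < z := hz0'.trans hzz
  have form : ∀ {w : ℝ}, 0 < w → √((w + r ^ 2 - 1) ^ 2 - 4 * r ^ 2 * w) / (2 * w)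
      = √((1 - (1 - r) ^ 2 * w⁻¹) * (1 - (1 + r) ^ 2 * w⁻¹)) / 2 := by
    intro w hw
    have : √((1 - (1 - r) ^ 2 * w⁻¹) * (1 - (1 + r) ^ 2 * w⁻¹))
        = √((w + r ^ 2 - 1) ^ 2 - 4 * r ^ 2 * w) / w := by
      rw [eq_div_iff hw.ne']
      conv_lhs => rw [← Real.sqrt_sq hw.le]
      rw [← Real.sqrt_mul' _ (by positivity), Real.sqrt_sq hw.le]
      congr 1
      field_simp; ring
    rw [this]
    field_simp
  have hlt : (z' + r ^ 2 - 1) / (2 * z') + √((z' + r ^ 2 - 1) ^ 2 - 4 * r ^ 2 * z') / (2 * z')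
      < (z + r ^ 2 - 1) / (2 * z) + √((z + r ^ 2 - 1) ^ 2 - 4 * r ^ 2 * z) / (2 * z) := by
    rw [form hz0, form hz0']
    have hinv : z⁻¹ < z'⁻¹ := (inv_lt_inv₀ hz0 hz0').2 hzz
    have hi0 : 0 < z⁻¹ := inv_pos.2 hz0
    have hb : (1 + r) ^ 2 * z'⁻¹ < 1 := by rw [← div_eq_mul_inv, div_lt_one hz0']; exact hz'
    have hab : (1 - r) ^ 2 * z'⁻¹ ≤ (1 + r) ^ 2 * z'⁻¹ :=
      mul_le_mul_of_nonneg_right (by nlinarith) (inv_pos.2 hz0').le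
    have e1 : ∀ {w : ℝ}, 0 < w → (w + r ^ 2 - 1) / (2 * w) = 1 / 2 - (1 - r ^ 2) / 2 * w⁻¹ := by
      intro w hw; field_simp; ring
    rw [e1 hz0, e1 hz0']
    have h1 : (1 - r ^ 2) / 2 * z⁻¹ ≤ (1 - r ^ 2) / 2 * z'⁻¹ :=
      mul_le_mul_of_nonneg_left hinv.le (by nlinarith)
    have h2 : √((1 - (1 - r) ^ 2 * z'⁻¹) * (1 - (1 + r) ^ 2 * z'⁻¹))
        < √((1 - (1 - r) ^ 2 * z⁻¹) * (1 - (1 + r) ^ 2 * z⁻¹)) := by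
      refine Real.sqrt_lt_sqrt (mul_nonneg (by linarith) (by linarith)) ?_
      refine mul_lt_mul' ?_ ?_ (by linarith) ?_
      · have := mul_le_mul_of_nonneg_left hinv.le (sq_nonneg (1 - r)); linarith
      · have := mul_lt_mul_of_pos_left hinv (show 0 < (1 + r) ^ 2 by positivity); linarith
      · have := mul_le_mul_of_nonneg_left hinv.le (sq_nonneg (1 - r)); linarith
    linarith
  set h' := (z' + r ^ 2 - 1) / (2 * z')
  set h := (z + r ^ 2 - 1) / (2 * z) with hh
  set d' := √((z' + r ^ 2 - 1) ^ 2 - 4 * r ^ 2 * z') / (2 * z')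
  set d := √((z + r ^ 2 - 1) ^ 2 - 4 * r ^ 2 * z) / (2 * z) with hd
  have hlim : mpRoot (r ^ 2) z = h - d := by rw [mpRoot, hh, hd, sub_div]
  rw [hlim]
  have hev : ∀ᶠ n in atTop, h - |y n - h| = y n := by
    have ex := kx.eventually_lt_const (show d' < d' + (h + d - h' - d') / 2 by linarith)
    have ey := ky.eventually_const_lt (show d - (h + d - h' - d') / 2 < d by linarith)
    filter_upwards [ex, ey, hyx] with n h1 h2 h3
    have h4 := le_abs_self (x n - h')
    rcases le_total (y n) h with h5 | h5
    · rw [abs_of_nonpos (by linarith)]; ring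
    · rw [abs_of_nonneg (by linarith)] at h2; linarith
  exact ((tendsto_const_nhds (x := h)).sub ky).congr' hev

/-- Almost sure convergence of the normalized trace of the resolvent right of the spectrum. -/
lemma ae_trace_tendsto {Ω : Type*} [MeasurableSpace Ω] {P : Measure Ω} [IsProbabilityMeasure P]
    {m q : ℕ → ℕ} {W : ∀ n, Ω → Matrix (Fin (m n)) (Fin (q n)) ℝ} {u₀ z r : ℝ} (hr0 : 0 ≤ r)
    (hr1 : r ≤ 1) (hu0 : (1 + r) ^ 2 < u₀) (hz : u₀ < z)
    (hW : ∀ n, P.map (fun ω => matEntries (W n ω)) = stdG (Fin (m n) × Fin (q n)))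
    (hm : ∀ n, m n ≤ n) (hq : ∀ᶠ n in atTop, q n ≤ 2 * n)
    (hm1 : Tendsto (fun n => (m n : ℝ) / n) atTop (𝓝 1))
    (hqc : Tendsto (fun n => (q n : ℝ) / n) atTop (𝓝 (r ^ 2)))
    (hop : ∀ᵐ ω ∂P, ∀ᶠ n in atTop, GramLe n u₀ (W n ω)) :
    ∀ᵐ ω ∂P, Tendsto (fun n : ℕ =>
      (∑ α : Fin (q n), (z - ithEigDesc ((W n ω)ᵀ * W n ω) α / n)⁻¹) / n) atTop
      (𝓝 (mpRoot (r ^ 2) z)) := by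
  have hu00 : 0 ≤ u₀ := le_trans (by positivity) hu0.le
  set z' := (u₀ + z) / 2 with hz'
  have hz1 : u₀ < z' := by rw [hz']; linarith
  have hz2 : z' < z := by rw [hz']; linarith
  filter_upwards [ae_mp_equation hu00 hz hW hm hq hop, ae_mp_equation hu00 hz1 hW hm hq hop, hop]
    with ω h1 h2 h3
  have hgood : ∀ᶠ n : ℕ in atTop, 0 < n ∧ q n ≤ 2 * n ∧ GramLe n u₀ (W n ω) := by
    filter_upwards [eventually_gt_atTop 0, hq, h3] with n a b c using ⟨a, b, c⟩
  have hlamle : ∀ n : ℕ, 0 < n → GramLe n u₀ (W n ω) → ∀ α : Fin (q n),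
      ithEigDesc ((W n ω)ᵀ * W n ω) α / n ≤ u₀ := by
    intro n hn hg α
    rw [div_le_iff₀ (by exact_mod_cast hn)]
    linarith [gram_ithEig_le hg α]
  have eqn : ∀ {w : ℝ}, u₀ < w → Tendsto (fun n : ℕ =>
        (w * ((shiftedGram n w (W n ω))⁻¹.trace / n) - q n / n) *
          (1 - (shiftedGram n w (W n ω))⁻¹.trace / n)
        - m n / n * ((shiftedGram n w (W n ω))⁻¹.trace / n)) atTop (𝓝 0) →
      Tendsto (fun n : ℕ =>
        w * ((∑ α : Fin (q n), (w - ithEigDesc ((W n ω)ᵀ * W n ω) α / n)⁻¹) / n) ^ 2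
        - (w + r ^ 2 - 1) * ((∑ α : Fin (q n), (w - ithEigDesc ((W n ω)ᵀ * W n ω) α / n)⁻¹) / n)
        + r ^ 2) atTop (𝓝 0) := by
    intro w hw h
    set S : ℕ → ℝ := fun n =>
      (∑ α : Fin (q n), (w - ithEigDesc ((W n ω)ᵀ * W n ω) α / n)⁻¹) / n with hS
    have hb : ∀ᶠ n in atTop, ‖S n‖ ≤ 2 * (w - u₀)⁻¹ := by
      filter_upwards [hgood] with n ⟨hn, hq2, hg⟩
      have hn' : (0 : ℝ) < n := by exact_mod_cast hn
      have hq2' : (q n : ℝ) ≤ 2 * n := by exact_mod_cast hq2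
      have hd : 0 < w - u₀ := sub_pos.2 hw
      have e : ∀ α : Fin (q n), 0 ≤ (w - ithEigDesc ((W n ω)ᵀ * W n ω) α / n)⁻¹ ∧
          (w - ithEigDesc ((W n ω)ᵀ * W n ω) α / n)⁻¹ ≤ (w - u₀)⁻¹ := fun α => by
        have := hlamle n hn hg α
        exact ⟨inv_nonneg.2 (by linarith), inv_anti₀ hd (by linarith)⟩
      rw [Real.norm_of_nonneg (div_nonneg (Finset.sum_nonneg fun α _ => (e α).1) hn'.le),
        div_le_iff₀ hn']
      calc _ ≤ ∑ _α : Fin (q n), (w - u₀)⁻¹ := Finset.sum_le_sum fun α _ => (e α).2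
        _ = q n * (w - u₀)⁻¹ := by simp
        _ ≤ (2 * n) * (w - u₀)⁻¹ := mul_le_mul_of_nonneg_right hq2' (inv_pos.2 hd).le
        _ = _ := by ring
    have hcoef : Tendsto (fun n => ((q n : ℝ) / n - r ^ 2) - ((m n : ℝ) / n - 1)) atTop (𝓝 0) := by
      have := (hqc.sub_const (r ^ 2)).sub (hm1.sub_const 1)
      simpa using this
    have h5 : Tendsto (fun n => (((q n : ℝ) / n - r ^ 2) - ((m n : ℝ) / n - 1)) * S n) atTop (𝓝 0) := by
      refine hcoef.zero_mul_isBoundedUnder_le ?_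
      exact isBoundedUnder_of_eventually_le hb
    have h6 : Tendsto (fun n => (q n : ℝ) / n - r ^ 2) atTop (𝓝 0) := by
      rw [← sub_self (r ^ 2)]; exact hqc.sub_const (r ^ 2)
    have h7 := (h5.sub h6).sub h
    rw [sub_zero, sub_zero] at h7
    refine h7.congr' ?_
    filter_upwards [hgood] with n ⟨hn, hq2, hg⟩
    rw [trace_shiftedGram_inv hn hw hg]
    simp only [hS]
    ring
  refine root_pick hr0 hr1 (hu0.trans hz1) hz2 ?_ (eqn hz1 h2) (eqn hz h1)
  filter_upwards [hgood] with n ⟨hn, hq2, hg⟩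
  refine div_le_div_of_nonneg_right (Finset.sum_le_sum fun α _ => ?_) (Nat.cast_nonneg _)
  have := hlamle n hn hg α
  exact inv_anti₀ (by linarith) (by linarith)

/-! ### The Stieltjes transform of the Marchenko–Pastur law -/

/-- The part `y arcsin (x/R) - √(R² - x²)` common to the primitives of the semicircle kernel. -/
lemma hasDerivAt_semicircle_aux {R y x : ℝ} (hR : 0 < R) (hx : x ∈ Set.Ioo (-R) R) :
    HasDerivAt (fun x => y * Real.arcsin (x / R) - √(R ^ 2 - x ^ 2))
      ((y + x) / √(R ^ 2 - x ^ 2)) x := by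
  have hpos : 0 < R ^ 2 - x ^ 2 := by nlinarith [hx.1, hx.2]
  have h1 : HasDerivAt (fun x => Real.arcsin (x / R)) (1 / √(1 - (x / R) ^ 2) * (1 / R)) x :=
    (Real.hasDerivAt_arcsin (by rw [ne_eq, div_eq_iff hR.ne']; linarith [hx.1])
      (by rw [ne_eq, div_eq_iff hR.ne']; linarith [hx.2])).comp x ((hasDerivAt_id x).div_const R)
  have h2 : HasDerivAt (fun x => √(R ^ 2 - x ^ 2)) ((-(2 * x)) / (2 * √(R ^ 2 - x ^ 2))) x := by
    refine HasDerivAt.sqrt ?_ hpos.ne'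
    simpa using ((hasDerivAt_id x).pow 2).const_sub (R ^ 2)
  have e : √(1 - (x / R) ^ 2) = √(R ^ 2 - x ^ 2) / R := by
    rw [eq_div_iff hR.ne']
    conv_lhs => rw [← Real.sqrt_sq hR.le]
    rw [← Real.sqrt_mul' _ (by positivity), Real.sqrt_sq hR.le]
    congr 1; field_simp
  have hs : 0 < √(R ^ 2 - x ^ 2) := Real.sqrt_pos.2 hpos
  refine ((h1.const_mul y).sub h2).congr_deriv ?_
  rw [e]
  field_simp
  ring

lemma semicircle_integral_gt {R y : ℝ} (hR : 0 < R) (hy : R < y) :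
    ∫ x in (-R)..R, √(R ^ 2 - x ^ 2) / (y - x) = Real.pi * (y - √(y ^ 2 - R ^ 2)) := by
  have hRR : -R ≤ R := by linarith
  set F : ℝ → ℝ := fun x => (y * Real.arcsin (x / R) - √(R ^ 2 - x ^ 2))
    - √(y ^ 2 - R ^ 2) * Real.arcsin ((x * y - R ^ 2) / (R * (y - x))) with hF
  have hk : 0 < y ^ 2 - R ^ 2 := by nlinarith
  have hsk : 0 < √(y ^ 2 - R ^ 2) := Real.sqrt_pos.2 hk
  have hder : ∀ x ∈ Set.Ioo (-R) R, HasDerivAt F (√(R ^ 2 - x ^ 2) / (y - x)) x := by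
    intro x hx
    have hyx : 0 < y - x := by linarith [hx.2]
    have hpos : 0 < R ^ 2 - x ^ 2 := by nlinarith [hx.1, hx.2]
    have hs : 0 < √(R ^ 2 - x ^ 2) := Real.sqrt_pos.2 hpos
    have hg : HasDerivAt (fun x => (x * y - R ^ 2) / (R * (y - x)))
        ((y * (R * (y - x)) - (x * y - R ^ 2) * (-R)) / (R * (y - x)) ^ 2) x := by
      have a1 : HasDerivAt (fun x => x * y - R ^ 2) y x := by
        simpa using ((hasDerivAt_id x).mul_const y).sub_const (R ^ 2)
      have a2 : HasDerivAt (fun x => R * (y - x)) (-R) x := by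
        simpa using ((hasDerivAt_id x).const_sub y).const_mul R
      exact a1.div a2 (by positivity)
    have hsq : 1 - ((x * y - R ^ 2) / (R * (y - x))) ^ 2
        = (R ^ 2 - x ^ 2) * (y ^ 2 - R ^ 2) / (R * (y - x)) ^ 2 := by
      field_simp; ring
    have hsqpos : 0 < 1 - ((x * y - R ^ 2) / (R * (y - x))) ^ 2 := by rw [hsq]; positivity
    have h1 := (Real.hasDerivAt_arcsin (x := (x * y - R ^ 2) / (R * (y - x)))
      (by intro h; rw [h] at hsqpos; norm_num at hsqpos)
      (by intro h; rw [h] at hsqpos; norm_num at hsqpos)).comp x hg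
    refine ((hasDerivAt_semicircle_aux (y := y) hR hx).sub (h1.const_mul _)).congr_deriv ?_
    rw [hsq, Real.sqrt_div' _ (by positivity), Real.sqrt_sq (by positivity),
      Real.sqrt_mul hpos.le]
    have e1 : √(R ^ 2 - x ^ 2) ^ 2 = R ^ 2 - x ^ 2 := Real.sq_sqrt hpos.le
    have e2 : √(y ^ 2 - R ^ 2) ^ 2 = y ^ 2 - R ^ 2 := Real.sq_sqrt hk.le
    field_simp
    rw [e1]
    ring
  have hcont : ContinuousOn F (Set.Icc (-R) R) := by
    refine ContinuousOn.sub (Continuous.continuousOn ?_) (ContinuousOn.mul continuousOn_const ?_)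
    · have := Real.continuous_arcsin
      fun_prop
    · refine Real.continuous_arcsin.comp_continuousOn (ContinuousOn.div (by fun_prop) (by fun_prop) ?_)
      intro x hx
      have : 0 < y - x := by linarith [hx.2]
      positivity
  have hintg : IntervalIntegrable (fun x => √(R ^ 2 - x ^ 2) / (y - x)) volume (-R) R := by
    refine ContinuousOn.intervalIntegrable ?_
    rw [Set.uIcc_of_le hRR]
    refine ContinuousOn.div (by fun_prop) (by fun_prop) fun x hx => ?_
    have : 0 < y - x := by linarith [hx.2]
    exact this.ne'
  rw [intervalIntegral.integral_eq_sub_of_hasDerivAt_of_le hRR hcont hder hintg, hF]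
  have g1 : (R * y - R ^ 2) / (R * (y - R)) = 1 := by
    have : y - R ≠ 0 := by linarith
    field_simp
  have g2 : (-R * y - R ^ 2) / (R * (y - -R)) = -1 := by
    have : y - -R ≠ 0 := by linarith
    rw [div_eq_iff (by positivity)]
    ring
  simp only [g1, g2, neg_div, div_self hR.ne', Real.arcsin_one, Real.arcsin_neg, neg_sq, sub_self,
    Real.sqrt_zero]
  ring

lemma semicircle_integral_eq {R : ℝ} (hR : 0 < R) :
    IntervalIntegrable (fun x => √(R ^ 2 - x ^ 2) / (R - x)) volume (-R) R ∧
    ∫ x in (-R)..R, √(R ^ 2 - x ^ 2) / (R - x) = Real.pi * R := by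
  have hRR : -R ≤ R := by linarith
  set F : ℝ → ℝ := fun x => R * Real.arcsin (x / R) - √(R ^ 2 - x ^ 2) with hF
  have hder : ∀ x ∈ Set.Ioo (-R) R, HasDerivAt F (√(R ^ 2 - x ^ 2) / (R - x)) x := by
    intro x hx
    have hyx : 0 < R - x := by linarith [hx.2]
    have hpos : 0 < R ^ 2 - x ^ 2 := by nlinarith [hx.1, hx.2]
    have hs : 0 < √(R ^ 2 - x ^ 2) := Real.sqrt_pos.2 hpos
    refine (hasDerivAt_semicircle_aux (y := R) hR hx).congr_deriv ?_
    have e1 : √(R ^ 2 - x ^ 2) ^ 2 = R ^ 2 - x ^ 2 := Real.sq_sqrt hpos.le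
    field_simp
    rw [e1]
    ring
  have hcont : ContinuousOn F (Set.Icc (-R) R) := by
    have := Real.continuous_arcsin
    exact Continuous.continuousOn (by fun_prop)
  have hintg : IntervalIntegrable (fun x => √(R ^ 2 - x ^ 2) / (R - x)) volume (-R) R := by
    rw [intervalIntegrable_iff_integrableOn_Ioc_of_le hRR]
    refine intervalIntegral.integrableOn_deriv_of_nonneg hcont hder fun x hx => ?_
    exact div_nonneg (Real.sqrt_nonneg _) (by linarith [hx.2])
  refine ⟨hintg, ?_⟩
  rw [intervalIntegral.integral_eq_sub_of_hasDerivAt_of_le hRR hcont hder hintg, hF]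
  simp only [neg_div, div_self hR.ne', Real.arcsin_one, Real.arcsin_neg, neg_sq, sub_self,
    Real.sqrt_zero]
  ring

lemma semicircle_integral {R y : ℝ} (hR : 0 < R) (hy : R ≤ y) :
    IntervalIntegrable (fun x => √(R ^ 2 - x ^ 2) / (y - x)) volume (-R) R ∧
    ∫ x in (-R)..R, √(R ^ 2 - x ^ 2) / (y - x) = Real.pi * (y - √(y ^ 2 - R ^ 2)) := by
  rcases hy.eq_or_lt with h | h
  · subst h
    simpa using semicircle_integral_eq hR
  · refine ⟨?_, semicircle_integral_gt hR h⟩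
    refine ContinuousOn.intervalIntegrable ?_
    rw [Set.uIcc_of_le (by linarith)]
    refine ContinuousOn.div (by fun_prop) (by fun_prop) fun x hx => ?_
    have : 0 < y - x := by linarith [hx.2]
    exact this.ne'

lemma mp_integral_eq {r z : ℝ} (hr0 : 0 < r) (hr1 : r ≤ 1) (hz : (1 + r) ^ 2 < z) :
    ∫ t in ((1 - r) ^ 2)..((1 + r) ^ 2),
      √(((1 + r) ^ 2 - t) * (t - (1 - r) ^ 2)) / t * (t - z)⁻¹
      = -(2 * Real.pi) * mpRoot (r ^ 2) z := by
  have hz0 : 0 < z := lt_of_le_of_lt (by positivity) hz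
  have hR : 0 < 2 * r := by linarith
  obtain ⟨i1, I1⟩ := semicircle_integral (y := z - (1 + r ^ 2)) hR (by nlinarith)
  obtain ⟨i2, I2⟩ := semicircle_integral (y := 1 + r ^ 2) hR (by nlinarith [sq_nonneg (1 - r)])
  have i2' : IntervalIntegrable (fun x => √((2 * r) ^ 2 - x ^ 2) / (1 + r ^ 2 + x)) volume
      (-(2 * r)) (2 * r) := by
    have := i2.comp_sub_left 0
    simp only [zero_sub, sub_neg_eq_add, neg_sq, neg_neg] at this
    have h3 := this.symm
    simpa using h3
  have I2' : ∫ x in (-(2 * r))..(2 * r), √((2 * r) ^ 2 - x ^ 2) / (1 + r ^ 2 + x)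
      = Real.pi * (1 + r ^ 2 - √((1 + r ^ 2) ^ 2 - (2 * r) ^ 2)) := by
    rw [← I2]
    have := intervalIntegral.integral_comp_neg (a := -(2 * r)) (b := 2 * r)
      (fun x => √((2 * r) ^ 2 - x ^ 2) / (1 + r ^ 2 - x))
    simpa using this
  have hshift := intervalIntegral.integral_comp_add_right (a := -(2 * r)) (b := 2 * r)
    (fun t => √(((1 + r) ^ 2 - t) * (t - (1 - r) ^ 2)) / t * (t - z)⁻¹) (1 + r ^ 2)
  rw [show -(2 * r) + (1 + r ^ 2) = (1 - r) ^ 2 by ring,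
    show 2 * r + (1 + r ^ 2) = (1 + r) ^ 2 by ring] at hshift
  rw [← hshift]
  have hcongr : ∫ x in (-(2 * r))..(2 * r),
      √(((1 + r) ^ 2 - (x + (1 + r ^ 2))) * (x + (1 + r ^ 2) - (1 - r) ^ 2)) / (x + (1 + r ^ 2))
        * (x + (1 + r ^ 2) - z)⁻¹
      = ∫ x in (-(2 * r))..(2 * r), (-z⁻¹) *
        (√((2 * r) ^ 2 - x ^ 2) / (z - (1 + r ^ 2) - x) +
          √((2 * r) ^ 2 - x ^ 2) / (1 + r ^ 2 + x)) := by
    refine intervalIntegral.integral_congr_ae ?_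
    refine Eventually.of_forall fun x hx => ?_
    rw [Set.uIoc_of_le (by linarith)] at hx
    have e : ((1 + r) ^ 2 - (x + (1 + r ^ 2))) * (x + (1 + r ^ 2) - (1 - r) ^ 2)
        = (2 * r) ^ 2 - x ^ 2 := by ring
    rw [e]
    have h1 : 0 < 1 + r ^ 2 + x := by nlinarith [hx.1, sq_nonneg (1 - r)]
    have h2 : 0 < z - (1 + r ^ 2) - x := by nlinarith [hx.2]
    have h3 : x + (1 + r ^ 2) - z ≠ 0 := by intro h; linarith
    have h4 : x + (1 + r ^ 2) ≠ 0 := by intro h; linarith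
    field_simp
    ring
  rw [hcongr, intervalIntegral.integral_const_mul, intervalIntegral.integral_add i1 i2', I1, I2']
  have e3 : √((1 + r ^ 2) ^ 2 - (2 * r) ^ 2) = 1 - r ^ 2 := by
    rw [show (1 + r ^ 2) ^ 2 - (2 * r) ^ 2 = (1 - r ^ 2) ^ 2 by ring]
    exact Real.sqrt_sq (by nlinarith)
  rw [e3, mpRoot, show (z - (1 + r ^ 2)) ^ 2 - (2 * r) ^ 2 = (z + r ^ 2 - 1) ^ 2 - 4 * r ^ 2 * z by ring]
  field_simp
  ring

lemma mpDensity_nonneg {γ : ℝ} (hγ : 1 ≤ γ) (t : ℝ) : 0 ≤ mpDensity γ t := by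
  unfold mpDensity
  split_ifs with h
  · have h0 : 0 ≤ t := le_trans (by unfold aGamma; positivity) h.1
    have := Real.pi_pos
    positivity
  · exact le_rfl

lemma measurable_mpDensity (γ : ℝ) : Measurable (mpDensity γ) := by
  unfold mpDensity
  refine Measurable.ite (measurableSet_Icc) ?_ measurable_const
  fun_prop

/-- Closed form of the Stieltjes transform right of the support. -/
lemma mpStieltjes_eq {γ z : ℝ} (hγ : 1 ≤ γ) (hz : bGamma γ < z) :
    γ⁻¹ * mpStieltjes γ z = -mpRoot γ⁻¹ z := by
  have hγ0 : 0 < γ := by linarith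
  set r := 1 / √γ with hr
  have hs : 1 ≤ √γ := Real.one_le_sqrt.2 hγ
  have hr0 : 0 < r := by positivity
  have hr1 : r ≤ 1 := by rw [hr, div_le_one (by linarith)]; exact hs
  have hrc : r ^ 2 = γ⁻¹ := by rw [hr, div_pow, Real.sq_sqrt hγ0.le]; ring
  have key := mp_integral_eq hr0 hr1 hz
  unfold mpStieltjes mpMeasure
  rw [integral_withDensity_eq_integral_toReal_smul (measurable_mpDensity γ).ennreal_ofReal
    (by simp)]
  have e : (fun t => (ENNReal.ofReal (mpDensity γ t)).toReal • (t - z)⁻¹)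
      = Set.indicator (Set.Icc (aGamma γ) (bGamma γ)) (fun t => γ / (2 * Real.pi) *
        (√((bGamma γ - t) * (t - aGamma γ)) / t * (t - z)⁻¹)) := by
    ext t
    rw [ENNReal.toReal_ofReal (mpDensity_nonneg hγ t), smul_eq_mul]
    unfold mpDensity Set.indicator
    split_ifs with h
    · field_simp
    · simp
  have hab : aGamma γ ≤ bGamma γ := by
    unfold aGamma bGamma; rw [← hr]; nlinarith
  rw [e, integral_indicator measurableSet_Icc, integral_Icc_eq_integral_Ioc,
    ← intervalIntegral.integral_of_le hab, intervalIntegral.integral_const_mul]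
  have ea : aGamma γ = (1 - r) ^ 2 := rfl
  have eb : bGamma γ = (1 + r) ^ 2 := rfl
  rw [ea, eb, key, hrc]
  have := Real.pi_pos
  field_simp

/-! ### From pointwise to uniform convergence, with derivatives -/

/-- Pointwise convergence on a dense set of eventually equi-Lipschitz functions to a continuous
limit is uniform on compact intervals. -/
lemma tendstoUniformlyOn_of_lipschitz {f : ℕ → ℝ → ℝ} {L : ℝ → ℝ} {s t K : ℝ}
    (hK : ∀ᶠ n in atTop, ∀ x ∈ Set.Icc s t, ∀ y ∈ Set.Icc s t, |f n x - f n y| ≤ K * |x - y|)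
    (hL : ContinuousOn L (Set.Icc s t))
    (hD : ∀ x ∈ Set.Icc s t, ∀ δ > 0, ∃ d ∈ Set.Icc s t, |d - x| < δ ∧
      Tendsto (fun n => f n d) atTop (𝓝 (L d))) :
    TendstoUniformlyOn f L atTop (Set.Icc s t) := by
  rw [← tendstoLocallyUniformlyOn_iff_tendstoUniformlyOn_of_compact isCompact_Icc,
    Metric.tendstoLocallyUniformlyOn_iff]
  intro ε hε x hx
  obtain ⟨δ₁, hδ₁, h1⟩ := Metric.continuousOn_iff.1 hL x hx (ε / 4) (by linarith)
  set δ := min δ₁ (ε / (8 * (|K| + 1))) with hδ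
  have hδ0 : 0 < δ := lt_min hδ₁ (by positivity)
  obtain ⟨d, hd, hdx, hdt⟩ := hD x hx δ hδ0
  refine ⟨Set.Icc s t ∩ Metric.ball x δ, inter_mem self_mem_nhdsWithin
    (mem_nhdsWithin_of_mem_nhds (Metric.ball_mem_nhds x hδ0)), ?_⟩
  filter_upwards [hK, Metric.tendsto_nhds.1 hdt (ε / 4) (by linarith)] with n hn hn2 y hy
  have hyx : |y - x| < δ := by simpa [Real.dist_eq] using hy.2
  have a1 := hn y hy.1 d hd
  have a2 : |L d - L x| < ε / 4 := h1 d hd (lt_of_lt_of_le hdx (min_le_left _ _))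
  have a3 : |L y - L x| < ε / 4 := h1 y hy.1 (lt_of_lt_of_le hyx (min_le_left _ _))
  rw [Real.dist_eq] at hn2 ⊢
  have a4 : |y - d| ≤ 2 * δ := by
    calc |y - d| = |(y - x) - (d - x)| := by ring_nf
      _ ≤ |y - x| + |d - x| := abs_sub _ _
      _ ≤ 2 * δ := by linarith
  have a5 : K * |y - d| ≤ ε / 4 := by
    calc K * |y - d| ≤ (|K| + 1) * (2 * (ε / (8 * (|K| + 1)))) :=
          mul_le_mul (by linarith [le_abs_self K]) (a4.trans (by linarith [min_le_right δ₁ (ε / (8 * (|K| + 1)))]))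
            (abs_nonneg _) (by positivity)
      _ = ε / 4 := by field_simp; norm_num
  rw [abs_lt] at *
  rw [abs_le] at a1
  constructor <;> linarith [a1.1, a1.2, a2.1, a2.2, a3.1, a3.2, hn2.1, hn2.2]

lemma inv_sub_bounds {l z d : ℝ} (hd : 0 < d) (h : d ≤ z - l) : |(l - z)⁻¹| ≤ d⁻¹ ∧ l - z ≠ 0 := by
  have h0 : l - z < 0 := by linarith
  refine ⟨?_, h0.ne⟩
  rw [abs_inv, abs_of_neg h0]
  exact inv_anti₀ hd (by linarith)

lemma weighted_sum_le {q : ℕ} {w g : Fin q → ℝ} {n : ℕ} {K M : ℝ} (hw : (∑ α, |w α|) / n ≤ K)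
    (hg : ∀ α, |g α| ≤ M) (hM : 0 ≤ M) : |(∑ α, w α * g α) / n| ≤ K * M := by
  rw [abs_div, Nat.abs_cast]
  calc |∑ α, w α * g α| / n ≤ (∑ α, |w α| * M) / n := by
        refine div_le_div_of_nonneg_right ?_ (Nat.cast_nonneg _)
        refine (Finset.abs_sum_le_sum_abs _ _).trans (Finset.sum_le_sum fun α _ => ?_)
        rw [abs_mul]
        exact mul_le_mul_of_nonneg_left (hg α) (abs_nonneg _)
    _ = (∑ α, |w α|) / n * M := by rw [← Finset.sum_mul]; ring
    _ ≤ K * M := mul_le_mul_of_nonneg_right hw hM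

/-- The empirical transform `z ↦ (1/n) ∑ w_α / (λ_α - z)`. -/
def empTransform {q : ℕ} (n : ℕ) (lam w : Fin q → ℝ) (z : ℝ) : ℝ :=
  (∑ α, w α * (lam α - z)⁻¹) / n

lemma hasDerivAt_empTransform {q : ℕ} (n : ℕ) (lam w : Fin q → ℝ) {z : ℝ}
    (h : ∀ α, lam α - z ≠ 0) :
    HasDerivAt (empTransform n lam w) ((∑ α, w α * ((lam α - z)⁻¹) ^ 2) / n) z := by
  refine HasDerivAt.div_const (HasDerivAt.fun_sum fun α _ => HasDerivAt.const_mul _ ?_) _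
  have h1 : HasDerivAt (fun z => lam α - z) (-1) z := by
    simpa using (hasDerivAt_id z).const_sub (lam α)
  refine (h1.inv (h α)).congr_deriv ?_
  have := h α
  field_simp

/-- Pointwise convergence of empirical transforms at the rationals right of all poles, with bounded
total weight, implies uniform convergence of the transforms and of their derivatives. -/
lemma empTransform_uniform {q : ℕ → ℕ} {lam w : ∀ n, Fin (q n) → ℝ} {u₀ s t K : ℝ} (hs : u₀ < s)
    (hst : s < t) (hlam : ∀ᶠ n in atTop, ∀ α, lam n α ≤ u₀)
    (hw : ∀ᶠ n : ℕ in atTop, (∑ α, |w n α|) / n ≤ K) {L : ℝ → ℝ}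
    (hL : ∀ z, u₀ < z → DifferentiableAt ℝ L z)
    (hconv : ∀ d : ℚ, u₀ < d → Tendsto (fun n => empTransform n (lam n) (w n) d) atTop (𝓝 (L d))) :
    TendstoUniformlyOn (fun n => empTransform n (lam n) (w n)) L atTop (Set.Icc s t) ∧
    TendstoUniformlyOn (fun n => deriv (empTransform n (lam n) (w n))) (deriv L) atTop
      (Set.Icc s t) := by
  set D := s - u₀ with hD
  have hD0 : 0 < D := sub_pos.2 hs
  have hi : 0 < D⁻¹ := inv_pos.2 hD0
  have hlip : ∀ᶠ n in atTop, ∀ x, s ≤ x → ∀ y, s ≤ y →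
      |empTransform n (lam n) (w n) x - empTransform n (lam n) (w n) y| ≤ K * (D⁻¹) ^ 2 * |x - y| := by
    filter_upwards [hlam, hw] with n h1 h2 x hx y hy
    have e : empTransform n (lam n) (w n) x - empTransform n (lam n) (w n) y
        = (∑ α, w n α * ((lam n α - x)⁻¹ - (lam n α - y)⁻¹)) / n := by
      simp only [empTransform, mul_sub, Finset.sum_sub_distrib, sub_div]
    rw [e, mul_assoc]
    refine weighted_sum_le h2 (fun α => ?_) (by positivity)
    obtain ⟨bx, nx⟩ := inv_sub_bounds hD0 (show D ≤ x - lam n α by linarith [h1 α])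
    obtain ⟨bz, nz⟩ := inv_sub_bounds hD0 (show D ≤ y - lam n α by linarith [h1 α])
    have e2 : (lam n α - x)⁻¹ - (lam n α - y)⁻¹
        = (lam n α - x)⁻¹ * (lam n α - y)⁻¹ * (x - y) := by field_simp; ring
    rw [e2, abs_mul, abs_mul, sq]
    exact mul_le_mul_of_nonneg_right (mul_le_mul bx bz (abs_nonneg _) hi.le) (abs_nonneg _)
  have hunif : ∀ t', s < t' →
      TendstoUniformlyOn (fun n => empTransform n (lam n) (w n)) L atTop (Set.Icc s t') := by
    intro t' ht'
    refine tendstoUniformlyOn_of_lipschitz (K := K * (D⁻¹) ^ 2) ?_ ?_ ?_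
    · filter_upwards [hlip] with n hn x hx y hy using hn x hx.1 y hy.1
    · exact fun z hz => (hL z (hs.trans_le hz.1)).continuousAt.continuousWithinAt
    · intro x hx δ hδ
      obtain ⟨d, h1, h2⟩ := exists_rat_btwn (show max s (x - δ) < min t' (x + δ) from
        max_lt (lt_min ht' (by linarith [hx.1])) (lt_min (by linarith [hx.2]) (by linarith)))
      rw [max_lt_iff] at h1
      rw [lt_min_iff] at h2
      exact ⟨d, ⟨h1.1.le, h2.1.le⟩, abs_lt.2 ⟨by linarith [h1.2], by linarith [h2.2]⟩,
        hconv d (hs.trans h1.1)⟩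
  have hpt : ∀ z, s ≤ z → Tendsto (fun n => empTransform n (lam n) (w n) z) atTop (𝓝 (L z)) :=
    fun z hz => (hunif (z + 1) (by linarith)).tendsto_at ⟨hz, by linarith⟩
  refine ⟨hunif t hst, ?_⟩
  have hder : ∀ᶠ n in atTop, ∀ z, s ≤ z → deriv (empTransform n (lam n) (w n)) z
      = (∑ α, w n α * ((lam n α - z)⁻¹) ^ 2) / n := by
    filter_upwards [hlam] with n h1 z hz
    exact (hasDerivAt_empTransform n _ _ fun α =>
      (inv_sub_bounds hD0 (show D ≤ z - lam n α by linarith [h1 α])).2).deriv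
  have hlip' : ∀ᶠ n in atTop, ∀ x ∈ Set.Icc s t, ∀ y ∈ Set.Icc s t,
      |deriv (empTransform n (lam n) (w n)) x - deriv (empTransform n (lam n) (w n)) y|
        ≤ K * (2 * (D⁻¹) ^ 3) * |x - y| := by
    filter_upwards [hlam, hw, hder] with n h1 h2 h3 x hx y hy
    rw [h3 x hx.1, h3 y hy.1]
    have e : (∑ α, w n α * ((lam n α - x)⁻¹) ^ 2) / n - (∑ α, w n α * ((lam n α - y)⁻¹) ^ 2) / n
        = (∑ α, w n α * (((lam n α - x)⁻¹) ^ 2 - ((lam n α - y)⁻¹) ^ 2)) / n := by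
      simp only [mul_sub, Finset.sum_sub_distrib, sub_div]
    rw [e, mul_assoc]
    refine weighted_sum_le h2 (fun α => ?_) (by positivity)
    obtain ⟨bx, nx⟩ := inv_sub_bounds hD0 (show D ≤ x - lam n α by linarith [h1 α, hx.1])
    obtain ⟨bz, nz⟩ := inv_sub_bounds hD0 (show D ≤ y - lam n α by linarith [h1 α, hy.1])
    have e2 : ((lam n α - x)⁻¹) ^ 2 - ((lam n α - y)⁻¹) ^ 2
        = ((lam n α - x)⁻¹ * (lam n α - y)⁻¹) * ((lam n α - x)⁻¹ + (lam n α - y)⁻¹) * (x - y) := by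
      field_simp; ring
    rw [e2, abs_mul, abs_mul, abs_mul]
    refine mul_le_mul_of_nonneg_right ?_ (abs_nonneg _)
    calc |(lam n α - x)⁻¹| * |(lam n α - y)⁻¹| * |(lam n α - x)⁻¹ + (lam n α - y)⁻¹|
        ≤ D⁻¹ * D⁻¹ * (D⁻¹ + D⁻¹) :=
          mul_le_mul (mul_le_mul bx bz (abs_nonneg _) hi.le)
            ((abs_add_le _ _).trans (add_le_add bx bz)) (abs_nonneg _) (by positivity)
      _ = 2 * (D⁻¹) ^ 3 := by ring
  have hderpt : ∀ z, s ≤ z →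
      Tendsto (fun n => deriv (empTransform n (lam n) (w n)) z) atTop (𝓝 (deriv L z)) := by
    intro z hz
    rw [Metric.tendsto_nhds]
    intro ε hε
    have hslope := (hL z (hs.trans_le hz)).hasDerivAt.tendsto_slope_zero_right
    have hη : ∀ᶠ η in 𝓝[>] (0 : ℝ), |K| * (D⁻¹) ^ 3 * η < ε / 3 := by
      have : Tendsto (fun η : ℝ => |K| * (D⁻¹) ^ 3 * η) (𝓝[>] 0) (𝓝 (|K| * (D⁻¹) ^ 3 * 0)) :=
        ((continuous_const.mul continuous_id).tendsto 0).mono_left nhdsWithin_le_nhds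
      rw [mul_zero] at this
      exact this.eventually_lt_const (by linarith)
    obtain ⟨η, ⟨h1, h2⟩, h3⟩ := (((Metric.tendsto_nhds.1 hslope (ε / 3) (by linarith)).and hη).and
      self_mem_nhdsWithin).exists
    have h3 : 0 < η := h3
    have hq : Tendsto (fun n => η⁻¹ • (empTransform n (lam n) (w n) (z + η)
        - empTransform n (lam n) (w n) z)) atTop (𝓝 (η⁻¹ • (L (z + η) - L z))) :=
      ((hpt _ (by linarith)).sub (hpt z hz)).const_smul η⁻¹
    filter_upwards [hlam, hw, hder, Metric.tendsto_nhds.1 hq (ε / 3) (by linarith)] with n k1 k2 k3 k4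
    have key : |deriv (empTransform n (lam n) (w n)) z - η⁻¹ • (empTransform n (lam n) (w n) (z + η)
        - empTransform n (lam n) (w n) z)| ≤ |K| * (D⁻¹) ^ 3 * η := by
      rw [k3 z hz]
      have e : (∑ α, w n α * ((lam n α - z)⁻¹) ^ 2) / n - η⁻¹ • (empTransform n (lam n) (w n) (z + η)
          - empTransform n (lam n) (w n) z)
          = (∑ α, w n α * (((lam n α - z)⁻¹) ^ 2
            - η⁻¹ * ((lam n α - (z + η))⁻¹ - (lam n α - z)⁻¹))) / n := by
        simp only [empTransform, smul_eq_mul, mul_sub, Finset.sum_sub_distrib, sub_div,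
          ← mul_assoc, mul_comm _ η⁻¹, mul_div_assoc, Finset.mul_sum]
        simp only [mul_assoc, ← Finset.mul_sum]
        ring
      rw [e]
      refine (weighted_sum_le k2 (M := (D⁻¹) ^ 3 * η) (fun α => ?_) (by positivity)).trans ?_
      · obtain ⟨bx, nx⟩ := inv_sub_bounds hD0 (show D ≤ z - lam n α by linarith [k1 α])
        obtain ⟨bz, nz⟩ := inv_sub_bounds hD0 (show D ≤ (z + η) - lam n α by linarith [k1 α])
        have e2 : ((lam n α - z)⁻¹) ^ 2 - η⁻¹ * ((lam n α - (z + η))⁻¹ - (lam n α - z)⁻¹)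
            = -((lam n α - z)⁻¹ * (lam n α - z)⁻¹ * (lam n α - (z + η))⁻¹ * η) := by
          field_simp; ring
        rw [e2, abs_neg, abs_mul, abs_mul, abs_mul, abs_of_pos h3]
        refine mul_le_mul_of_nonneg_right ?_ h3.le
        calc _ ≤ D⁻¹ * D⁻¹ * D⁻¹ := mul_le_mul (mul_le_mul bx bx (abs_nonneg _) hi.le) bz
              (abs_nonneg _) (by positivity)
          _ = (D⁻¹) ^ 3 := by ring
      · rw [← mul_assoc]
        exact mul_le_mul_of_nonneg_right (mul_le_mul_of_nonneg_right (le_abs_self K) (by positivity))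
          h3.le
    rw [Real.dist_eq] at h1 k4 ⊢
    have := key.trans_lt h2
    rw [abs_lt] at *
    constructor <;> linarith [this.1, this.2, h1.1, h1.2, k4.1, k4.2]
  have hcont : ContinuousOn (deriv L) (Set.Icc s t) := by
    -- the limit inherits the Lipschitz bound
    have hLL : ∀ x ∈ Set.Icc s t, ∀ y ∈ Set.Icc s t,
        |deriv L x - deriv L y| ≤ K * (2 * (D⁻¹) ^ 3) * |x - y| := fun x hx y hy =>
      le_of_tendsto ((hderpt x hx.1).sub (hderpt y hy.1)).abs (hlip'.mono fun n hn => hn x hx y hy)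
    refine (LipschitzOnWith.of_dist_le_mul (K := Real.toNNReal (K * (2 * (D⁻¹) ^ 3)))
      fun x hx y hy => ?_).continuousOn
    rw [Real.dist_eq, Real.dist_eq]
    exact (hLL x hx y hy).trans (mul_le_mul_of_nonneg_right (Real.le_coe_toNNReal _) (abs_nonneg _))
  refine tendstoUniformlyOn_of_lipschitz hlip' hcont fun x hx δ hδ => ⟨x, hx, by simpa using hδ, hderpt x hx.1⟩

/-! ### Concentration of weighted sums of Gaussian products -/

/-- The `α`-th largest eigenvalue of `WᵀW / n`. -/
def gramEig {m q : ℕ} (n : ℕ) (W : Matrix (Fin m) (Fin q) ℝ) (α : Fin q) : ℝ :=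
  ithEigDesc (Wᵀ * W) α / n

section Weighted

variable {Ω : Type*} [MeasurableSpace Ω] {P : Measure Ω} [IsProbabilityMeasure P]
  {m q : ℕ → ℕ} {W : ∀ n, Ω → Matrix (Fin (m n)) (Fin (q n)) ℝ}

lemma ae_weighted_sq (hWm : ∀ n, AEMeasurable (fun ω => matEntries (W n ω)) P)
    {X : ∀ n, Ω → Fin (q n) → ℝ} (hX : ∀ n, P.map (X n) = stdG (Fin (q n)))
    (hXW : ∀ n, IndepFun (X n) (fun ω => matEntries (W n ω)) P)
    (hq : ∀ᶠ n in atTop, q n ≤ 2 * n) {g : ℝ → ℝ} (hg : Measurable g) {M : ℝ} (hM0 : 0 < M)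
    (hgM : ∀ x, |g x| ≤ M) :
    ∀ᵐ ω ∂P, Tendsto (fun n : ℕ =>
      (∑ α, g (gramEig n (W n ω) α) * (X n ω α ^ 2 - 1)) / (n : ℝ)) atTop (𝓝 0) := by
  obtain ⟨N, hN⟩ := eventually_atTop.1 hq
  have main : ∀ j : ℕ, ∀ᵐ ω ∂P, ∀ᶠ n : ℕ in atTop,
      ω ∉ {ω | (1 / ((j : ℝ) + 1)) * n ≤ |∑ α, g (gramEig n (W n ω) α) * (X n ω α ^ 2 - 1)|} := by
    intro j
    have hε : (0 : ℝ) < 1 / ((j : ℝ) + 1) := by positivity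
    refine ae_eventually_of_exp_bound (C := 2) (c := rateQ (1 / ((j : ℝ) + 1)) M)
      (rateQ_pos hε hM0) N fun n hn => ?_
    have := quad_tail (hX n) (hWm n) (hXW n)
      (fun x => diagonal fun α => g (gramEig n (toMat x) α)) ?_ ?_ hε hM0 ?_ (hN n hn)
    · have e : ∀ ω, X n ω ⬝ᵥ (diagonal (fun α => g (gramEig n (toMat (matEntries (W n ω))) α)) *ᵥ X n ω)
          - (diagonal fun α => g (gramEig n (toMat (matEntries (W n ω))) α)).trace
          = ∑ α, g (gramEig n (W n ω) α) * (X n ω α ^ 2 - 1) := by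
        intro ω
        rw [toMat_matEntries, Matrix.trace_diagonal, dotProduct, ← Finset.sum_sub_distrib]
        refine Finset.sum_congr rfl fun α _ => ?_
        rw [Matrix.mulVec_diagonal]; ring
      simp only [e] at this
      exact this
    · intro i i'
      simp only [Matrix.diagonal_apply]
      split_ifs
      · exact hg.comp ((measurable_ithEig i).div_const _)
      · exact measurable_const
    · intro x
      rw [Matrix.IsHermitian, conjTranspose_eq_transpose_of_trivial, Matrix.diagonal_transpose]
    · intro x y
      rw [dotProduct, dotProduct, Finset.mul_sum]
      refine (Finset.abs_sum_le_sum_abs _ _).trans (Finset.sum_le_sum fun α _ => ?_)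
      rw [Matrix.mulVec_diagonal,
        show y α * (g (gramEig n (toMat x) α) * y α) = g (gramEig n (toMat x) α) * (y α * y α) by ring,
        abs_mul, abs_of_nonneg (mul_self_nonneg (y α))]
      exact mul_le_mul_of_nonneg_right (hgM _) (mul_self_nonneg _)
  rw [← ae_all_iff] at main
  filter_upwards [main] with ω hω
  rw [Metric.tendsto_nhds]
  intro ε hε
  obtain ⟨j, hj⟩ := exists_nat_one_div_lt hε
  filter_upwards [hω j, eventually_gt_atTop 0] with n h1 h2
  have h2' : (0 : ℝ) < n := by exact_mod_cast h2
  have h3 : |∑ α, g (gramEig n (W n ω) α) * (X n ω α ^ 2 - 1)| < (1 / ((j : ℝ) + 1)) * n :=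
    not_le.1 h1
  rw [dist_zero_right, Real.norm_eq_abs, abs_div, abs_of_pos h2', div_lt_iff₀ h2']
  exact h3.trans (mul_lt_mul_of_pos_right hj h2')

/-- The normalized sum of two disjoint blocks of a standard Gaussian vector is standard Gaussian. -/
lemma stdG_map_half_sum {ι ι' : Type*} [Fintype ι] [Fintype ι']
    {e₁ e₂ : ι' → ι} (h₁ : Function.Injective e₁) (h₂ : Function.Injective e₂)
    (h₁₂ : ∀ α β, e₁ α ≠ e₂ β) :
    (stdG ι).map (fun x α => (x (e₁ α) + x (e₂ α)) / √2) = stdG ι' := by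
  classical
  set A : Matrix ι' ι ℝ :=
    Matrix.of fun α i => ((if e₁ α = i then 1 else 0) + (if e₂ α = i then 1 else 0)) / √2
    with hA
  have hs : √(2 : ℝ) * √2 = 2 := Real.mul_self_sqrt (by norm_num)
  have := stdG_map_mulVec A ?_
  · rw [← this]
    congr 1
    ext x α
    simp only [hA, Matrix.of_apply, mulVec, dotProduct, div_mul_eq_mul_div, ← Finset.sum_div, add_mul,
      Finset.sum_add_distrib, ite_mul, one_mul, zero_mul, Finset.sum_ite_eq, Finset.mem_univ,
      if_true]
  · ext α β
    rw [Matrix.mul_apply]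
    simp only [hA, Matrix.of_apply, Matrix.transpose_apply, div_mul_eq_mul_div, ← Finset.sum_div, add_mul,
      Finset.sum_add_distrib, ite_mul, one_mul, zero_mul, Finset.sum_ite_eq, Finset.mem_univ,
      if_true, h₁.eq_iff, h₂.eq_iff, h₁₂, (h₁₂ _ _).symm, Matrix.one_apply]
    by_cases h : α = β
    · subst h
      simp only [if_true, if_false]
      field_simp
      rw [sq, hs]; norm_num
    · simp [h, Ne.symm h]

variable {ι : ℕ → Type} [∀ n, Fintype (ι n)] {V : ∀ n, Ω → ι n → ℝ}

lemma ae_weighted_block (hWm : ∀ n, AEMeasurable (fun ω => matEntries (W n ω)) P)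
    (hV : ∀ n, P.map (V n) = stdG (ι n))
    (hVW : ∀ n, IndepFun (V n) (fun ω => matEntries (W n ω)) P)
    (hq : ∀ᶠ n in atTop, q n ≤ 2 * n) {g : ℝ → ℝ} (hg : Measurable g) {M : ℝ} (hM0 : 0 < M)
    (hgM : ∀ x, |g x| ≤ M) {e : ∀ n, Fin (q n) → ι n} (he : ∀ n, Function.Injective (e n)) :
    ∀ᵐ ω ∂P, Tendsto (fun n : ℕ =>
      (∑ α, g (gramEig n (W n ω) α) * (V n ω (e n α) ^ 2 - 1)) / (n : ℝ)) atTop (𝓝 0) := by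
  have hVm : ∀ n, AEMeasurable (V n) P := fun n =>
    AEMeasurable.of_map_ne_zero (by rw [hV n]; exact NeZero.ne _)
  have hm : ∀ n, Measurable (fun (x : ι n → ℝ) α => x (e n α)) := fun n => by fun_prop
  refine ae_weighted_sq (X := fun n ω α => V n ω (e n α)) hWm (fun n => ?_) (fun n => ?_) hq hg hM0 hgM
  · have := AEMeasurable.map_map_of_aemeasurable (hm n).aemeasurable (hVm n)
    rw [hV n, stdG_map_comp _ (he n)] at this
    exact this.symm
  · exact (hVW n).comp (hm n) measurable_id

lemma ae_weighted_pair (hWm : ∀ n, AEMeasurable (fun ω => matEntries (W n ω)) P)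
    (hV : ∀ n, P.map (V n) = stdG (ι n))
    (hVW : ∀ n, IndepFun (V n) (fun ω => matEntries (W n ω)) P)
    (hq : ∀ᶠ n in atTop, q n ≤ 2 * n) {g : ℝ → ℝ} (hg : Measurable g) {M : ℝ} (hM0 : 0 < M)
    (hgM : ∀ x, |g x| ≤ M) {e₁ e₂ : ∀ n, Fin (q n) → ι n} (h₁ : ∀ n, Function.Injective (e₁ n))
    (h₂ : ∀ n, Function.Injective (e₂ n)) (h₁₂ : ∀ n α β, e₁ n α ≠ e₂ n β) :
    ∀ᵐ ω ∂P, Tendsto (fun n : ℕ =>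
      (∑ α, g (gramEig n (W n ω) α) * (V n ω (e₁ n α) * V n ω (e₂ n α))) / (n : ℝ)) atTop (𝓝 0) := by
  have hVm : ∀ n, AEMeasurable (V n) P := fun n =>
    AEMeasurable.of_map_ne_zero (by rw [hV n]; exact NeZero.ne _)
  have hm : ∀ n, Measurable (fun (x : ι n → ℝ) α => (x (e₁ n α) + x (e₂ n α)) / √2) := fun n => by
    fun_prop
  have key := ae_weighted_sq (X := fun n ω α => (V n ω (e₁ n α) + V n ω (e₂ n α)) / √2) hWm
    (fun n => by
      have := AEMeasurable.map_map_of_aemeasurable (hm n).aemeasurable (hVm n)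
      rw [hV n, stdG_map_half_sum (h₁ n) (h₂ n) (h₁₂ n)] at this
      exact this.symm) (fun n => (hVW n).comp (hm n) measurable_id) hq hg hM0 hgM
  filter_upwards [key, ae_weighted_block hWm hV hVW hq hg hM0 hgM h₁,
    ae_weighted_block hWm hV hVW hq hg hM0 hgM h₂] with ω k0 k1 k2
  have := k0.sub ((k1.add k2).div_const 2)
  rw [add_zero, zero_div, sub_zero] at this
  refine this.congr fun n => ?_
  have e : ∑ α, g (gramEig n (W n ω) α) * (V n ω (e₁ n α) * V n ω (e₂ n α))
      = ∑ α, g (gramEig n (W n ω) α) * (((V n ω (e₁ n α) + V n ω (e₂ n α)) / √2) ^ 2 - 1)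
        - (∑ α, g (gramEig n (W n ω) α) * (V n ω (e₁ n α) ^ 2 - 1)
          + ∑ α, g (gramEig n (W n ω) α) * (V n ω (e₂ n α) ^ 2 - 1)) / 2 := by
    rw [← Finset.sum_add_distrib, Finset.sum_div, ← Finset.sum_sub_distrib]
    refine Finset.sum_congr rfl fun α _ => ?_
    rw [div_pow, Real.sq_sqrt (by norm_num)]
    ring
  rw [e]
  ring

end Weighted

/-! ### Uniform limits of the weighted transforms -/

section Assembly

variable {Ω : Type*} [MeasurableSpace Ω] {P : Measure Ω} [IsProbabilityMeasure P]

/-- `A ⊥ (B, C)` and `B ⊥ C` imply `(A, B) ⊥ C`. -/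
lemma indepFun_assoc {α β δ : Type*} [MeasurableSpace α] [MeasurableSpace β] [MeasurableSpace δ]
    {A : Ω → α} {B : Ω → β} {C : Ω → δ} (hA : AEMeasurable A P) (hB : AEMeasurable B P)
    (hC : AEMeasurable C P) (h1 : IndepFun A (fun ω => (B ω, C ω)) P) (h2 : IndepFun B C P) :
    IndepFun (fun ω => (A ω, B ω)) C P := by
  have hAB : IndepFun A B P := h1.comp measurable_id measurable_fst
  have : IsProbabilityMeasure (P.map A) := Measure.isProbabilityMeasure_map hA
  have : IsProbabilityMeasure (P.map B) := Measure.isProbabilityMeasure_map hB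
  have : IsProbabilityMeasure (P.map C) := Measure.isProbabilityMeasure_map hC
  rw [indepFun_iff_map_prod_eq_prod_map_map (hA.prodMk hB) hC,
    (indepFun_iff_map_prod_eq_prod_map_map hA hB).1 hAB]
  have e1 := (indepFun_iff_map_prod_eq_prod_map_map hA (hB.prodMk hC)).1 h1
  rw [(indepFun_iff_map_prod_eq_prod_map_map hB hC).1 h2, ← Measure.prodAssoc_prod] at e1
  have e2 := congrArg (Measure.map (MeasurableEquiv.prodAssoc (α := α) (β := β) (γ := δ)).symm) e1
  rw [MeasurableEquiv.map_symm_map, AEMeasurable.map_map_of_aemeasurable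
    (MeasurableEquiv.measurable _).aemeasurable (hA.prodMk (hB.prodMk hC))] at e2
  exact e2

/-- Two independent standard Gaussian vectors concatenate to a standard Gaussian vector. -/
lemma map_sumElim_stdG {ι ι' : Type*} [Fintype ι] [Fintype ι'] {X : Ω → ι → ℝ} {Y : Ω → ι' → ℝ}
    (hX : P.map X = stdG ι) (hY : P.map Y = stdG ι') (h : IndepFun X Y P) :
    P.map (fun ω => Sum.elim (X ω) (Y ω)) = stdG (ι ⊕ ι') := by
  have hXm : AEMeasurable X P := AEMeasurable.of_map_ne_zero (by rw [hX]; exact NeZero.ne _)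
  have hYm : AEMeasurable Y P := AEMeasurable.of_map_ne_zero (by rw [hY]; exact NeZero.ne _)
  have e := (indepFun_iff_map_prod_eq_prod_map_map hXm hYm).1 h
  have mp := measurePreserving_sumPiEquivProdPi_symm (ι := ι) (ι' := ι') (X := fun _ => ℝ)
    (fun _ => gaussianReal 0 1)
  have e2 := AEMeasurable.map_map_of_aemeasurable mp.measurable.aemeasurable (hXm.prodMk hYm)
  rw [e, hX, hY] at e2
  have e3 := mp.map_eq
  refine Eq.trans ?_ (e2.symm.trans e3)
  congr 1

lemma measurable_sumElim {ι ι' : Type*} :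
    Measurable fun x : (ι → ℝ) × (ι' → ℝ) => (Sum.elim x.1 x.2 : ι ⊕ ι' → ℝ) := by
  refine measurable_pi_lambda _ fun i => ?_
  cases i <;> simp <;> fun_prop

lemma measurable_matEntries {m n : Type*} : Measurable (matEntries : Matrix m n ℝ → m × n → ℝ) :=
  measurable_pi_lambda _ fun i => (measurable_pi_apply i.2).comp (measurable_pi_apply i.1)

lemma mpRoot_differentiableAt {r z : ℝ} (hr0 : 0 ≤ r) (hz : (1 + r) ^ 2 < z) :
    DifferentiableAt ℝ (mpRoot (r ^ 2)) z := by
  have hz0 : 0 < z := lt_of_le_of_lt (sq_nonneg _) hz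
  have hd : 0 < (z + r ^ 2 - 1) ^ 2 - 4 * r ^ 2 * z := by
    have : (z + r ^ 2 - 1) ^ 2 - 4 * r ^ 2 * z = (z - (1 + r) ^ 2) * (z - (1 - r) ^ 2) := by ring
    rw [this]
    exact mul_pos (by linarith) (by nlinarith)
  unfold mpRoot
  refine DifferentiableAt.div ?_ (by fun_prop) (by positivity)
  exact DifferentiableAt.sub (by fun_prop) (DifferentiableAt.sqrt (by fun_prop) hd.ne')

variable {m q : ℕ → ℕ} {W : ∀ n, Ω → Matrix (Fin (m n)) (Fin (q n)) ℝ}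
  {ι : ℕ → Type} [∀ n, Fintype (ι n)] {V : ∀ n, Ω → ι n → ℝ}

lemma gramEig_nonneg {m q : ℕ} (n : ℕ) (W : Matrix (Fin m) (Fin q) ℝ) (α : Fin q) :
    0 ≤ gramEig n W α :=
  div_nonneg (gram_ithEig_nonneg W α) (Nat.cast_nonneg n)

lemma gramEig_le {m q n : ℕ} {u : ℝ} {W : Matrix (Fin m) (Fin q) ℝ} (hn : 0 < n)
    (h : GramLe n u W) (α : Fin q) : gramEig n W α ≤ u := by
  have hn' : (0 : ℝ) < n := by exact_mod_cast hn
  rw [gramEig, div_le_iff₀ hn', mul_comm]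
  exact gram_ithEig_le h α

lemma ae_sq_bounded (hWm : ∀ n, AEMeasurable (fun ω => matEntries (W n ω)) P)
    (hV : ∀ n, P.map (V n) = stdG (ι n))
    (hVW : ∀ n, IndepFun (V n) (fun ω => matEntries (W n ω)) P)
    (hq : ∀ᶠ n in atTop, q n ≤ 2 * n)
    {e : ∀ n, Fin (q n) → ι n} (he : ∀ n, Function.Injective (e n)) :
    ∀ᵐ ω ∂P, ∀ᶠ n : ℕ in atTop, (∑ α, V n ω (e n α) ^ 2) / (n : ℝ) ≤ 3 := by
  have := ae_weighted_block hWm hV hVW hq (g := fun _ => 1) measurable_const one_pos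
    (fun _ => by simp) he
  filter_upwards [this] with ω hω
  filter_upwards [hω.eventually (gt_mem_nhds one_pos), hq, eventually_gt_atTop 0] with n h1 h2 h3
  have hn' : (0 : ℝ) < n := by exact_mod_cast h3
  have h2' : (q n : ℝ) ≤ 2 * n := by exact_mod_cast h2
  simp only [one_mul, Finset.sum_sub_distrib, Finset.sum_const, Finset.card_univ, Fintype.card_fin,
    nsmul_eq_mul, mul_one] at h1
  rw [div_lt_iff₀ hn'] at h1
  rw [div_le_iff₀ hn']
  linarith

/-- Truncation of `x ↦ h x / (x - d)` to `[0, u₀]`, which makes it bounded when `u₀ < d`. -/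
def truncKernel (h : ℝ → ℝ) (u₀ d x : ℝ) : ℝ :=
  if 0 ≤ x ∧ x ≤ u₀ then h x * (x - d)⁻¹ else 0

lemma truncKernel_measurable {h : ℝ → ℝ} (hh : Measurable h) (u₀ d : ℝ) :
    Measurable (truncKernel h u₀ d) :=
  Measurable.ite (measurableSet_Icc (a := 0) (b := u₀))
    (hh.mul (measurable_id.sub_const d).inv) measurable_const

lemma truncKernel_abs_le {h : ℝ → ℝ} {u₀ d H : ℝ} (hH0 : 0 ≤ H)
    (hH : ∀ x, 0 ≤ x → x ≤ u₀ → |h x| ≤ H) (hd : u₀ < d) (x : ℝ) :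
    |truncKernel h u₀ d x| ≤ H * (d - u₀)⁻¹ := by
  have hd' : 0 < d - u₀ := sub_pos.2 hd
  unfold truncKernel
  split_ifs with hx
  · rw [abs_mul, abs_inv, abs_of_neg (by linarith : x - d < 0)]
    refine mul_le_mul (hH x hx.1 hx.2) ?_ (by rw [inv_nonneg]; linarith) hH0
    exact inv_anti₀ hd' (by linarith)
  · rw [abs_zero]; positivity

/-- Products of two disjoint blocks, weighted by `h(Λ)(Λ - z)⁻¹`, tend to zero. -/
lemma ae_pair_uniform (hWm : ∀ n, AEMeasurable (fun ω => matEntries (W n ω)) P)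
    (hV : ∀ n, P.map (V n) = stdG (ι n))
    (hVW : ∀ n, IndepFun (V n) (fun ω => matEntries (W n ω)) P)
    (hq : ∀ᶠ n in atTop, q n ≤ 2 * n) {u₀ s t : ℝ} (hs : u₀ < s) (hst : s < t)
    (hop : ∀ᵐ ω ∂P, ∀ᶠ n in atTop, GramLe n u₀ (W n ω))
    {h : ℝ → ℝ} (hh : Measurable h) {H : ℝ} (hH0 : 0 < H)
    (hH : ∀ x, 0 ≤ x → x ≤ u₀ → |h x| ≤ H)
    {e₁ e₂ : ∀ n, Fin (q n) → ι n} (h₁ : ∀ n, Function.Injective (e₁ n))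
    (h₂ : ∀ n, Function.Injective (e₂ n)) (h₁₂ : ∀ n α β, e₁ n α ≠ e₂ n β) :
    ∀ᵐ ω ∂P,
      TendstoUniformlyOn (fun n => empTransform n (gramEig n (W n ω))
        (fun α => h (gramEig n (W n ω) α) * (V n ω (e₁ n α) * V n ω (e₂ n α))))
        (fun _ => 0) atTop (Set.Icc s t) ∧
      TendstoUniformlyOn (fun n => deriv (empTransform n (gramEig n (W n ω))
        (fun α => h (gramEig n (W n ω) α) * (V n ω (e₁ n α) * V n ω (e₂ n α)))))
        (deriv fun _ => 0) atTop (Set.Icc s t) := by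
  have key : ∀ᵐ ω ∂P, ∀ d : ℚ, u₀ < d → Tendsto (fun n : ℕ =>
      (∑ α, truncKernel h u₀ d (gramEig n (W n ω) α) * (V n ω (e₁ n α) * V n ω (e₂ n α))) / (n : ℝ))
      atTop (𝓝 0) := by
    refine ae_all_iff.2 fun d => ae_all_iff.2 fun hd => ?_
    exact ae_weighted_pair hWm hV hVW hq (truncKernel_measurable hh u₀ d)
      (mul_pos hH0 (inv_pos.2 (sub_pos.2 hd))) (truncKernel_abs_le hH0.le hH hd) h₁ h₂ h₁₂
  filter_upwards [key, hop, ae_sq_bounded hWm hV hVW hq h₁, ae_sq_bounded hWm hV hVW hq h₂]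
    with ω k0 hop k1 k2
  have hle : ∀ᶠ n in atTop, ∀ α, gramEig n (W n ω) α ≤ u₀ := by
    filter_upwards [hop, eventually_gt_atTop 0] with n h1 h2 using gramEig_le h2 h1
  refine empTransform_uniform (K := H * 3) hs hst hle ?_ (fun z _ => differentiableAt_const 0) ?_
  · filter_upwards [hle, k1, k2, eventually_gt_atTop 0] with n h0 h1 h2 h3
    have hn' : (0 : ℝ) < n := by exact_mod_cast h3
    rw [div_le_iff₀ hn'] at h1 h2 ⊢
    calc ∑ α, |h (gramEig n (W n ω) α) * (V n ω (e₁ n α) * V n ω (e₂ n α))|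
        ≤ ∑ α, H * ((V n ω (e₁ n α) ^ 2 + V n ω (e₂ n α) ^ 2) / 2) := by
          refine Finset.sum_le_sum fun α _ => ?_
          rw [abs_mul]
          refine mul_le_mul (hH _ (gramEig_nonneg n _ α) (h0 α)) ?_ (abs_nonneg _) hH0.le
          rw [abs_le]
          constructor <;> nlinarith [sq_nonneg (V n ω (e₁ n α) + V n ω (e₂ n α)),
            sq_nonneg (V n ω (e₁ n α) - V n ω (e₂ n α))]
      _ = H * ((∑ α, V n ω (e₁ n α) ^ 2 + ∑ α, V n ω (e₂ n α) ^ 2) / 2) := by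
          rw [← Finset.mul_sum, ← Finset.sum_div, Finset.sum_add_distrib]
      _ ≤ H * ((3 * n + 3 * n) / 2) := by gcongr
      _ = H * 3 * n := by ring
  · intro d hd
    refine (k0 d hd).congr' ?_
    filter_upwards [hle] with n h0
    unfold empTransform
    congr 1
    refine Finset.sum_congr rfl fun α _ => ?_
    rw [truncKernel, if_pos ⟨gramEig_nonneg n _ α, h0 α⟩]
    ring

/-- Squares of a block, weighted by `(Λ - z)⁻¹`, follow the normalized trace of the resolvent. -/
lemma ae_single_uniform {r : ℝ} (hr0 : 0 ≤ r) (hr1 : r ≤ 1)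
    (hW : ∀ n, P.map (fun ω => matEntries (W n ω)) = stdG (Fin (m n) × Fin (q n)))
    (hV : ∀ n, P.map (V n) = stdG (ι n))
    (hVW : ∀ n, IndepFun (V n) (fun ω => matEntries (W n ω)) P)
    (hm : ∀ n, m n ≤ n) (hq : ∀ᶠ n in atTop, q n ≤ 2 * n)
    (hm1 : Tendsto (fun n => (m n : ℝ) / n) atTop (𝓝 1))
    (hqc : Tendsto (fun n => (q n : ℝ) / n) atTop (𝓝 (r ^ 2)))
    {u₀ s t : ℝ} (hu0 : (1 + r) ^ 2 < u₀) (hs : u₀ < s) (hst : s < t)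
    (hop : ∀ᵐ ω ∂P, ∀ᶠ n in atTop, GramLe n u₀ (W n ω))
    {e : ∀ n, Fin (q n) → ι n} (he : ∀ n, Function.Injective (e n)) :
    ∀ᵐ ω ∂P,
      TendstoUniformlyOn (fun n => empTransform n (gramEig n (W n ω))
        (fun α => V n ω (e n α) * V n ω (e n α)))
        (fun z => -mpRoot (r ^ 2) z) atTop (Set.Icc s t) ∧
      TendstoUniformlyOn (fun n => deriv (empTransform n (gramEig n (W n ω))
        (fun α => V n ω (e n α) * V n ω (e n α))))
        (deriv fun z => -mpRoot (r ^ 2) z) atTop (Set.Icc s t) := by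
  have hWm : ∀ n, AEMeasurable (fun ω => matEntries (W n ω)) P := fun n =>
    AEMeasurable.of_map_ne_zero (by rw [hW n]; exact NeZero.ne _)
  have key : ∀ᵐ ω ∂P, ∀ d : ℚ, u₀ < d → Tendsto (fun n : ℕ =>
      (∑ α, truncKernel (fun _ => 1) u₀ d (gramEig n (W n ω) α) * (V n ω (e n α) ^ 2 - 1)) / (n : ℝ))
      atTop (𝓝 0) := by
    refine ae_all_iff.2 fun d => ae_all_iff.2 fun hd => ?_
    exact ae_weighted_block hWm hV hVW hq (truncKernel_measurable measurable_const u₀ d)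
      (mul_pos one_pos (inv_pos.2 (sub_pos.2 hd)))
      (truncKernel_abs_le zero_le_one (fun _ _ _ => by simp) hd) he
  have key2 : ∀ᵐ ω ∂P, ∀ d : ℚ, u₀ < d → Tendsto (fun n : ℕ =>
      (∑ α : Fin (q n), ((d : ℝ) - gramEig n (W n ω) α)⁻¹) / (n : ℝ))
      atTop (𝓝 (mpRoot (r ^ 2) d)) :=
    ae_all_iff.2 fun d => ae_all_iff.2 fun hd =>
      ae_trace_tendsto hr0 hr1 hu0 hd hW hm hq hm1 hqc hop
  filter_upwards [key, key2, hop, ae_sq_bounded hWm hV hVW hq he] with ω k0 k1 hop k2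
  have hle : ∀ᶠ n in atTop, ∀ α, gramEig n (W n ω) α ≤ u₀ := by
    filter_upwards [hop, eventually_gt_atTop 0] with n h1 h2 using gramEig_le h2 h1
  refine empTransform_uniform (K := 3) hs hst hle ?_
    (fun z hz => (mpRoot_differentiableAt hr0 (hu0.trans hz)).neg) ?_
  · filter_upwards [k2] with n h1
    refine le_trans (le_of_eq ?_) h1
    congr 1
    refine Finset.sum_congr rfl fun α _ => ?_
    rw [abs_mul_self, sq]
  · intro d hd
    have := (k0 d hd).sub (k1 d hd)
    rw [zero_sub] at this
    refine this.congr' ?_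
    filter_upwards [hle] with n h0
    unfold empTransform
    rw [← sub_div, ← Finset.sum_sub_distrib]
    congr 1
    refine Finset.sum_congr rfl fun α _ => ?_
    rw [truncKernel, if_pos ⟨gramEig_nonneg n _ α, h0 α⟩, ← neg_sub (gramEig n (W n ω) α) (d : ℝ), inv_neg]
    ring

end Assembly

/-! ### Translation to the noise products -/

lemma resolvent_diagonal {q : ℕ} {lam : Fin q → ℝ} {z : ℝ} (h : ∀ α, lam α - z ≠ 0) :
    (diagonal lam - z • (1 : Matrix (Fin q) (Fin q) ℝ))⁻¹ = diagonal fun α => (lam α - z)⁻¹ := by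
  refine Matrix.inv_eq_right_inv ?_
  rw [Matrix.smul_one_eq_diagonal, Matrix.diagonal_sub, Matrix.diagonal_mul_diagonal]
  rw [← Matrix.diagonal_one]
  congr 1
  ext α
  exact mul_inv_cancel₀ (h α)

/-- Uniform convergence of functions and of their derivatives only depends on the functions on an
open half-line containing the interval. -/
lemma uniform_translate {Q F : ℕ → ℝ → ℝ} {L L' : ℝ → ℝ} {u₀ s t u v : ℝ} (hs : u₀ < u)
    (hsub : Set.Icc u v ⊆ Set.Icc s t) (heq : ∀ᶠ n in atTop, ∀ z, u₀ < z → F n z = Q n z)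
    (hL : ∀ z, u₀ < z → L z = L' z)
    (h : TendstoUniformlyOn F L atTop (Set.Icc s t) ∧
      TendstoUniformlyOn (fun n => deriv (F n)) (deriv L) atTop (Set.Icc s t)) :
    TendstoUniformlyOn Q L' atTop (Set.Icc u v) ∧
      TendstoUniformlyOn (fun n z => deriv (Q n) z) (fun z => deriv L' z) atTop (Set.Icc u v) := by
  have dq : ∀ f g : ℝ → ℝ, (∀ z, u₀ < z → f z = g z) → ∀ z, u₀ < z → deriv f z = deriv g z := by
    intro f g hfg z hz
    refine EventuallyEq.deriv_eq ?_
    filter_upwards [Ioi_mem_nhds hz] with y hy using hfg y hy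
  constructor
  · refine ((h.1.mono hsub).congr ?_).congr_right ?_
    · filter_upwards [heq] with n hn z hz using hn z (hs.trans_le hz.1)
    · intro z hz
      exact hL z (hs.trans_le hz.1)
  · refine ((h.2.mono hsub).congr ?_).congr_right ?_
    · filter_upwards [heq] with n hn z hz using dq _ _ hn z (hs.trans_le hz.1)
    · intro z hz
      exact dq _ _ hL z (hs.trans_le hz.1)

/-- The index set of the entries of `E₁₂` and `E₂₁` together. -/
abbrev NoiseIdx (k : ℕ) (p : ℕ → ℕ) (n : ℕ) : Type :=
  (Fin k × Fin (p n - k)) ⊕ (Fin (p n - k) × Fin k)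

namespace NoiseBlocks

variable {k : ℕ} {γ : ℝ} {p : ℕ → ℕ} {Ω : Type*} [MeasurableSpace Ω] {P : Measure Ω}
  [IsProbabilityMeasure P]

/-- All entries of `E₁₂` and `E₂₁` as one vector. -/
def noise (B : NoiseBlocks k γ p Ω P) (n : ℕ) (ω : Ω) : NoiseIdx k p n → ℝ :=
  Sum.elim (matEntries (B.E12 n ω)) (matEntries (B.E21 n ω))

lemma noise_law (B : NoiseBlocks k γ p Ω P) (n : ℕ) :
    P.map (B.noise n) = stdG (NoiseIdx k p n) :=
  map_sumElim_stdG (B.E12gauss n) (B.E21gauss n)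
    ((B.indep1 n).comp measurable_matEntries (measurable_matEntries.comp measurable_fst))

lemma noise_indep (B : NoiseBlocks k γ p Ω P) (n : ℕ) :
    IndepFun (B.noise n) (fun ω => matEntries (B.W n ω)) P := by
  have h12 : P.map (fun ω => matEntries (B.E12 n ω)) = stdG _ := B.E12gauss n
  have h21 : P.map (fun ω => matEntries (B.E21 n ω)) = stdG _ := B.E21gauss n
  have hW : P.map (fun ω => matEntries (B.W n ω)) = stdG _ := B.Wgauss n
  have := indepFun_assoc (P := P) (A := fun ω => matEntries (B.E12 n ω))
    (B := fun ω => matEntries (B.E21 n ω)) (C := fun ω => matEntries (B.W n ω))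
    (AEMeasurable.of_map_ne_zero (by rw [h12]; exact NeZero.ne _))
    (AEMeasurable.of_map_ne_zero (by rw [h21]; exact NeZero.ne _))
    (AEMeasurable.of_map_ne_zero (by rw [hW]; exact NeZero.ne _))
    ((B.indep1 n).comp measurable_matEntries
      ((measurable_matEntries.comp measurable_fst).prodMk
        (measurable_matEntries.comp measurable_snd)))
    ((B.indep2 n).comp measurable_matEntries measurable_matEntries)
  exact this.comp measurable_sumElim measurable_id

lemma lam_eq (B : NoiseBlocks k γ p Ω P) {n : ℕ} (hn : 0 < n) (ω : Ω) :
    B.lam n ω = gramEig n (B.W n ω) := by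
  ext α
  have hn' : (n : ℝ) ≠ 0 := by exact_mod_cast hn.ne'
  rw [gramEig, ← B.lamEig n ω α, mul_div_cancel_left₀ _ hn']

lemma tendsto_dof (k : ℕ) : Tendsto (fun n : ℕ => ((n - k : ℕ) : ℝ) / n) atTop (𝓝 1) := by
  have h : Tendsto (fun n : ℕ => 1 - (k : ℝ) / n) atTop (𝓝 (1 - 0)) :=
    tendsto_const_nhds.sub (tendsto_const_div_atTop_nhds_zero_nat _)
  rw [sub_zero] at h
  refine h.congr' ?_
  filter_upwards [eventually_ge_atTop k, eventually_gt_atTop 0] with n h1 h2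
  have hn' : (n : ℝ) ≠ 0 := by exact_mod_cast h2.ne'
  rw [Nat.cast_sub h1, sub_div, div_self hn']

lemma tendsto_dim (B : NoiseBlocks k γ p Ω P) (hγ : 1 ≤ γ) :
    Tendsto (fun n : ℕ => ((p n - k : ℕ) : ℝ) / n) atTop (𝓝 γ⁻¹) := by
  have h0 : Tendsto (fun n : ℕ => (p n : ℝ) / n) atTop (𝓝 γ⁻¹) := by
    refine (B.aspect.inv₀ (by positivity)).congr fun n => ?_
    rw [inv_div]
  have h : Tendsto (fun n : ℕ => (p n : ℝ) / n - (k : ℝ) / n) atTop (𝓝 (γ⁻¹ - 0)) :=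
    h0.sub (tendsto_const_div_atTop_nhds_zero_nat _)
  rw [sub_zero] at h
  refine h.congr' ?_
  filter_upwards [B.pTop.eventually (eventually_ge_atTop k)] with n h1
  rw [Nat.cast_sub h1, sub_div]

lemma q1_eq (B : NoiseBlocks k γ p Ω P) {n : ℕ} (hn : 0 < n) (ω : Ω) {z : ℝ}
    (hz : ∀ α, gramEig n (B.W n ω) α < z) (i j : Fin k) :
    empTransform n (gramEig n (B.W n ω))
      (fun α => B.noise n ω (Sum.inl (i, α)) * B.noise n ω (Sum.inl (j, α))) z
      = B.q1 n ω z i j := by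
  rw [q1, B.lam_eq hn, resolvent_diagonal fun α => (sub_neg.2 (hz α)).ne, Matrix.smul_apply,
    Matrix.mul_apply, empTransform, smul_eq_mul, one_div_mul_eq_div]
  congr 1
  refine Finset.sum_congr rfl fun α _ => ?_
  rw [Matrix.mul_diagonal, Matrix.transpose_apply]
  simp only [noise, Sum.elim_inl, matEntries]
  ring

lemma q2_eq (B : NoiseBlocks k γ p Ω P) {n : ℕ} (hn : 0 < n) (ω : Ω) {z : ℝ}
    (hz : ∀ α, gramEig n (B.W n ω) α < z) (i j : Fin k) :
    empTransform n (gramEig n (B.W n ω))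
      (fun α => B.noise n ω (Sum.inr (α, i)) * B.noise n ω (Sum.inr (α, j))) z
      = B.q2 n ω z i j := by
  rw [q2, B.lam_eq hn, resolvent_diagonal fun α => (sub_neg.2 (hz α)).ne, Matrix.smul_apply,
    Matrix.mul_apply, empTransform, smul_eq_mul, one_div_mul_eq_div]
  congr 1
  refine Finset.sum_congr rfl fun α _ => ?_
  rw [Matrix.mul_diagonal, Matrix.transpose_apply]
  simp only [noise, Sum.elim_inr, matEntries]
  ring

lemma q3_eq (B : NoiseBlocks k γ p Ω P) {n : ℕ} (hn : 0 < n) (ω : Ω) {z : ℝ}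
    (hz : ∀ α, gramEig n (B.W n ω) α < z) (i j : Fin k) :
    empTransform n (gramEig n (B.W n ω))
      (fun α => √(gramEig n (B.W n ω) α) *
        (B.noise n ω (Sum.inl (i, α)) * B.noise n ω (Sum.inr (α, j)))) z
      = B.q3 n ω z i j := by
  rw [q3, B.lam_eq hn, resolvent_diagonal fun α => (sub_neg.2 (hz α)).ne, Matrix.smul_apply,
    Matrix.mul_apply, empTransform, smul_eq_mul, one_div_mul_eq_div]
  congr 1
  refine Finset.sum_congr rfl fun α _ => ?_
  rw [Matrix.mul_diagonal, Matrix.mul_diagonal]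
  simp only [noise, Sum.elim_inr, Sum.elim_inl, matEntries]
  ring

end NoiseBlocks

/-- For any closed interval `[u, v] ⊂ (b_γ, ∞)`, the convergences of
Statement 5 hold almost surely uniformly in `z ∈ [u, v]`, and the same is true for the
`z`-derivatives of these matrix-valued functions, which converge uniformly to the
derivatives of their respective limits. -/
theorem weighted_noise_products_uniform_limits
    {k : ℕ} (hk : 1 ≤ k) {γ : ℝ} (hγ : 1 ≤ γ)
    {p : ℕ → ℕ} {Ω : Type*} [MeasurableSpace Ω] {P : Measure Ω} [IsProbabilityMeasure P]
    (B : NoiseBlocks k γ p Ω P) (u v : ℝ) (hu : bGamma γ < u) (huv : u ≤ v) :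
    ∀ᵐ ω ∂P, ∀ i j : Fin k,
      TendstoUniformlyOn (fun n z => B.q1 n ω z i j)
        (fun z => ((γ⁻¹ * mpStieltjes γ z) • (1 : Matrix (Fin k) (Fin k) ℝ)) i j)
        atTop (Set.Icc u v)
      ∧ TendstoUniformlyOn (fun n z => deriv (fun w => B.q1 n ω w i j) z)
        (fun z => deriv
          (fun w => ((γ⁻¹ * mpStieltjes γ w) • (1 : Matrix (Fin k) (Fin k) ℝ)) i j) z)
        atTop (Set.Icc u v)
      ∧ TendstoUniformlyOn (fun n z => B.q2 n ω z i j)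
        (fun z => ((γ⁻¹ * mpStieltjes γ z) • (1 : Matrix (Fin k) (Fin k) ℝ)) i j)
        atTop (Set.Icc u v)
      ∧ TendstoUniformlyOn (fun n z => deriv (fun w => B.q2 n ω w i j) z)
        (fun z => deriv
          (fun w => ((γ⁻¹ * mpStieltjes γ w) • (1 : Matrix (Fin k) (Fin k) ℝ)) i j) z)
        atTop (Set.Icc u v)
      ∧ TendstoUniformlyOn (fun n z => B.q3 n ω z i j)
        (fun _ => (0 : ℝ)) atTop (Set.Icc u v)
      ∧ TendstoUniformlyOn (fun n z => deriv (fun w => B.q3 n ω w i j) z)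
        (fun z => deriv (fun _ => (0 : ℝ)) z) atTop (Set.Icc u v) := by
  set r : ℝ := 1 / √γ with hr
  have hγ0 : 0 < γ := by linarith
  have hr0 : 0 ≤ r := by positivity
  have hr2 : r ^ 2 = γ⁻¹ := by rw [hr, div_pow, Real.sq_sqrt hγ0.le, one_pow, one_div]
  have hr1 : r ≤ 1 := by
    rw [hr, div_le_one (by positivity)]
    exact Real.one_le_sqrt.2 hγ
  have hb : bGamma γ = (1 + r) ^ 2 := rfl
  -- `u₀` separates the limiting upper edge from the interval
  set u₀ := (bGamma γ + u) / 2 with hu₀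
  have hbu : bGamma γ < u₀ := by rw [hu₀]; linarith
  have huu : u₀ < u := by rw [hu₀]; linarith
  have hu₀0 : 0 ≤ u₀ := le_trans (by rw [hb]; positivity) hbu.le
  have hqc := B.tendsto_dim hγ
  have hm1 := NoiseBlocks.tendsto_dof k
  have hm : ∀ n : ℕ, n - k ≤ n := fun n => Nat.sub_le _ _
  have hγ1 : γ⁻¹ ≤ 1 := inv_le_one_of_one_le₀ hγ
  have hq : ∀ᶠ n in atTop, p n - k ≤ 2 * n := by
    filter_upwards [hqc.eventually (gt_mem_nhds (lt_of_le_of_lt hγ1 one_lt_two)),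
      eventually_gt_atTop 0] with n h1 h2
    have hn' : (0 : ℝ) < n := by exact_mod_cast h2
    rw [div_lt_iff₀ hn'] at h1
    exact_mod_cast h1.le
  have hW : ∀ n, P.map (fun ω => matEntries (B.W n ω)) = stdG (Fin (n - k) × Fin (p n - k)) :=
    B.Wgauss
  have hWm : ∀ n, AEMeasurable (fun ω => matEntries (B.W n ω)) P := fun n =>
    AEMeasurable.of_map_ne_zero (by rw [hW n]; exact NeZero.ne _)
  have hop : ∀ᵐ ω ∂P, ∀ᶠ n in atTop, GramLe n u₀ (B.W n ω) :=
    ae_opnorm_le (c := γ⁻¹) (by positivity) hγ1 hW hm hqc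
      (by rw [← hr2, Real.sqrt_sq hr0, ← hb]; exact hbu)
  rw [← hr2] at hqc
  have hsub : Set.Icc u v ⊆ Set.Icc u (v + 1) := Set.Icc_subset_Icc le_rfl (by linarith)
  have huv1 : u < v + 1 := by linarith
  have hlim : ∀ z, u₀ < z → -mpRoot (r ^ 2) z = γ⁻¹ * mpStieltjes γ z := fun z hz => by
    rw [mpStieltjes_eq hγ (hbu.trans hz), hr2]
  rw [ae_all_iff]; intro i
  rw [ae_all_iff]; intro j
  have i1 : ∀ (i : Fin k) n, Function.Injective
      (fun α => Sum.inl (i, α) : Fin (p n - k) → NoiseIdx k p n) := fun i n α β h => by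
    simpa using h
  have i2 : ∀ (i : Fin k) n, Function.Injective
      (fun α => Sum.inr (α, i) : Fin (p n - k) → NoiseIdx k p n) := fun i n α β h => by
    simpa using h
  have hgood : ∀ᵐ ω ∂P, ∀ᶠ n in atTop, 0 < n ∧ ∀ z, u₀ < z → ∀ α, gramEig n (B.W n ω) α < z := by
    filter_upwards [hop] with ω hω
    filter_upwards [hω, eventually_gt_atTop 0] with n h1 h2
    exact ⟨h2, fun z hz α => (gramEig_le h2 h1 α).trans_lt hz⟩
  have c3 := ae_pair_uniform hWm B.noise_law B.noise_indep hq huu huv1 hop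
    (h := Real.sqrt) Real.continuous_sqrt.measurable (H := √u₀ + 1) (by positivity)
    (fun x _ hx => by
      rw [abs_of_nonneg (Real.sqrt_nonneg x)]
      linarith [Real.sqrt_le_sqrt hx]) (i1 i) (i2 j) (fun n α β => by simp)
  by_cases hij : i = j
  · subst hij
    have c1 := ae_single_uniform hr0 hr1 hW B.noise_law B.noise_indep hm hq hm1 hqc
      (hb ▸ hbu) huu huv1 hop (i1 i)
    have c2 := ae_single_uniform hr0 hr1 hW B.noise_law B.noise_indep hm hq hm1 hqc
      (hb ▸ hbu) huu huv1 hop (i2 i)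
    filter_upwards [hgood, c1, c2, c3] with ω hg c1 c2 c3
    have r1 := uniform_translate (Q := fun n z => B.q1 n ω z i i)
      (L' := fun z => ((γ⁻¹ * mpStieltjes γ z) • (1 : Matrix (Fin k) (Fin k) ℝ)) i i) huu hsub
      (by filter_upwards [hg] with n hn z hz using B.q1_eq hn.1 ω (hn.2 z hz) i i)
      (fun z hz => by simpa using hlim z hz) c1
    have r2 := uniform_translate (Q := fun n z => B.q2 n ω z i i)
      (L' := fun z => ((γ⁻¹ * mpStieltjes γ z) • (1 : Matrix (Fin k) (Fin k) ℝ)) i i) huu hsub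
      (by filter_upwards [hg] with n hn z hz using B.q2_eq hn.1 ω (hn.2 z hz) i i)
      (fun z hz => by simpa using hlim z hz) c2
    have r3 := uniform_translate (Q := fun n z => B.q3 n ω z i i)
      (L' := fun _ => 0) huu hsub
      (by filter_upwards [hg] with n hn z hz using B.q3_eq hn.1 ω (hn.2 z hz) i i)
      (fun z hz => rfl) c3
    exact ⟨r1.1, r1.2, r2.1, r2.2, r3.1, r3.2⟩
  · have c1 := ae_pair_uniform hWm B.noise_law B.noise_indep hq huu huv1 hop
      (h := fun _ => 1) measurable_const one_pos (fun x _ _ => by simp) (i1 i) (i1 j)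
      (fun n α β => by simp [hij])
    have c2 := ae_pair_uniform hWm B.noise_law B.noise_indep hq huu huv1 hop
      (h := fun _ => 1) measurable_const one_pos (fun x _ _ => by simp) (i2 i) (i2 j)
      (fun n α β => by simp [hij])
    filter_upwards [hgood, c1, c2, c3] with ω hg c1 c2 c3
    simp only [one_mul] at c1 c2
    have r1 := uniform_translate (Q := fun n z => B.q1 n ω z i j)
      (L' := fun z => ((γ⁻¹ * mpStieltjes γ z) • (1 : Matrix (Fin k) (Fin k) ℝ)) i j) huu hsub
      (by filter_upwards [hg] with n hn z hz using B.q1_eq hn.1 ω (hn.2 z hz) i j)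
      (fun z hz => by simp [hij]) c1
    have r2 := uniform_translate (Q := fun n z => B.q2 n ω z i j)
      (L' := fun z => ((γ⁻¹ * mpStieltjes γ z) • (1 : Matrix (Fin k) (Fin k) ℝ)) i j) huu hsub
      (by filter_upwards [hg] with n hn z hz using B.q2_eq hn.1 ω (hn.2 z hz) i j)
      (fun z hz => by simp [hij]) c2
    have r3 := uniform_translate (Q := fun n z => B.q3 n ω z i j)
      (L' := fun _ => 0) huu hsub
      (by filter_upwards [hg] with n hn z hz using B.q3_eq hn.1 ω (hn.2 z hz) i j)
      (fun z hz => rfl) c3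
    exact ⟨r1.1, r1.2, r2.1, r2.2, r3.1, r3.2⟩
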